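/- arXiv:1504.02583 — 4 statements merged into one kernel-verified Lean document; each statement's English description precedes it below -/
import Mathlib

section
/- If G is a simple graph of sufficiently large maximum degree Δ (i.e., there exists Δ₀ such that for all graphs G with Δ(G) = Δ ≥ Δ₀), then the strong chromatic index of G satisfies χ'ₛ(G) ≤ 1.93·Δ². -/
/-- Two unordered pairs of vertices share a vertex. -/
def sharesVertex {V : Type*} (e f : Sym2 V) : Prop := ∃ v, v ∈ e ∧ v ∈ f

/-- The square of the line graph of `G`: vertices are the edges of `G`, and two distinct
edges are adjacent if they are at distance at most 1 in `G`, i.e. they share a vertex or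
some edge of `G` shares a vertex with both. -/
def lineGraphSq {V : Type*} (G : SimpleGraph V) : SimpleGraph G.edgeSet where
  Adj e f := e ≠ f ∧ (sharesVertex e.1 f.1 ∨
    ∃ g : G.edgeSet, sharesVertex e.1 g.1 ∧ sharesVertex g.1 f.1)
  symm := by
    constructor
    rintro e f ⟨hne, h⟩
    refine ⟨hne.symm, ?_⟩
    rcases h with ⟨v, hv1, hv2⟩ | ⟨g, ⟨v, hv1, hv2⟩, ⟨w, hw1, hw2⟩⟩
    · exact Or.inl ⟨v, hv2, hv1⟩
    · exact Or.inr ⟨g, ⟨w, hw2, hw1⟩, ⟨v, hv2, hv1⟩⟩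
  loopless := ⟨fun e h => h.1 rfl⟩

/-!
In `H = lineGraphSq G`, a graph of maximum degree at most `r = 2 * Δ ^ 2`, every neighbourhood is
far from complete. The edges of `G` near a given edge all meet a set `A` of at most `2 * Δ`
vertices, and `A` can only have many incident edges leading out of it if these edges close many
4-cycles. Two opposite sides of a 4-cycle are joined by two edges but form only one adjacent pair
in `H`, so discounting the 4-cycles, which convexity of codegrees makes numerous, leaves about
`3 * Δ ^ 4 = (3 / 4) * r ^ 2` ordered pairs of adjacent neighbours.

A graph of maximum degree `r` with such sparse neighbourhoods is coloured in one random step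
followed by a greedy one. After making `H` regular, give every vertex a random colour and one of
20 random priorities, and let it retain its colour if each neighbour with the same colour has
strictly larger priority. Every repetition of a retained colour among the neighbours of `v` saves a
colour at `v`. Counting pairs minus triples of equally coloured neighbours, the expected saving
exceeds the `0.035 * r` colours needed; it is concentrated by a bounded-difference
inequality in which a vertex at distance two from `v` counts only if its colour interferes with
a common neighbour, and the Lovász local lemma makes all vertices save simultaneously.
-/

open Finset Function
open scoped BigOperators

universe u

section ProductSpace

variable {ι α : Type*} [Fintype ι] [DecidableEq ι] [Fintype α]

lemma expect_expect_piecewise {M : Type*} [AddCommMonoid M] [Module ℚ≥0 M] (T : Finset ι)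
    (F : (ι → α) → (ι → α) → M) :
    𝔼 x, 𝔼 y, F (T.piecewise x y) (T.piecewise y x) = 𝔼 x, 𝔼 y, F x y := by
  rw [← expect_product' univ univ, ← expect_product' univ univ]
  refine expect_nbij' (fun z => (T.piecewise z.1 z.2, T.piecewise z.2 z.1))
    (fun z => (T.piecewise z.1 z.2, T.piecewise z.2 z.1)) ?_ ?_ ?_ ?_ ?_ <;> simp [piecewise_same]

lemma expect_expect_update {M : Type*} [AddCommMonoid M] [Module ℚ≥0 M] (i : ι)
    (f : (ι → α) → M) : 𝔼 x, 𝔼 a, f (update x i a) = 𝔼 x, f x := by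
  rcases isEmpty_or_nonempty α with hα | hα
  · have : IsEmpty (ι → α) := ⟨fun x => hα.elim (x i)⟩
    simp
  calc 𝔼 x, 𝔼 a, f (update x i a)
      = 𝔼 z ∈ (univ : Finset (ι → α)) ×ˢ (univ : Finset α), f (update z.1 i z.2) :=
        (expect_product' univ univ fun x a => f (update x i a)).symm
    _ = 𝔼 z ∈ (univ : Finset (ι → α)) ×ˢ (univ : Finset α), f z.1 := by
        refine expect_nbij' (fun z => (update z.1 i z.2, z.1 i))
          (fun z => (update z.1 i z.2, z.1 i)) ?_ ?_ ?_ ?_ ?_ <;> simp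
    _ = 𝔼 x, f x := by
        rw [expect_product]
        simp only [expect_const univ_nonempty]

lemma expect_mul_of_dependsOn {R : Type*} [Semifield R] [CharZero R] {T : Finset ι}
    {f g : (ι → α) → R} (hf : DependsOn f T) (hg : DependsOn g (T : Set ι)ᶜ) :
    𝔼 x, f x * g x = (𝔼 x, f x) * 𝔼 x, g x := by
  rcases isEmpty_or_nonempty (ι → α) with _ | _
  · simp
  calc 𝔼 x, f x * g x = 𝔼 x, 𝔼 _y : ι → α, f x * g x := by simp only [Fintype.expect_const]
    _ = 𝔼 x, 𝔼 y, f (T.piecewise x y) * g (T.piecewise y x) := by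
      refine expect_congr rfl fun x _ => expect_congr rfl fun y _ => ?_
      rw [hf (x := T.piecewise x y) fun i hi => piecewise_eq_of_mem _ _ _ hi,
        hg (x := T.piecewise y x) fun i hi => piecewise_eq_of_notMem _ _ _ hi]
    _ = (𝔼 x, f x) * 𝔼 x, g x := by
      rw [expect_expect_piecewise T fun x y => f x * g y, expect_mul_expect]

lemma dens_filter_eq_expect {β K : Type*} [Fintype β] [Semifield K] [CharZero K]
    (P : β → Prop) [DecidablePred P] :
    (dens {x | P x} : K) = 𝔼 x, if P x then (1 : K) else 0 := by
  rw [Fintype.expect_eq_sum_div_card, sum_boole, nnratCast_dens]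

lemma dens_filter_and_of_dependsOn {T : Finset ι} {P Q : (ι → α) → Prop} [DecidablePred P]
    [DecidablePred Q] (hP : DependsOn P T) (hQ : DependsOn Q (T : Set ι)ᶜ) :
    dens {x | P x ∧ Q x} = dens {x | P x} * dens {x | Q x} := by
  rw [← NNRat.cast_inj (α := ℝ), NNRat.cast_mul]
  simp only [dens_filter_eq_expect]
  rw [← expect_mul_of_dependsOn (T := T)]
  · simp only [ite_zero_mul_ite_zero, mul_one]
  · intro x y h; simp only [hP h]
  · intro x y h; simp only [hQ h]

lemma dens_filter_forall (φ : ι → α → Prop) [∀ i, DecidablePred (φ i)] :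
    dens {x : ι → α | ∀ i, φ i (x i)} = ∏ i, dens {a | φ i a} := by
  have : ({x : ι → α | ∀ i, φ i (x i)} : Finset (ι → α)) =
      Fintype.piFinset fun i => {a | φ i a} := by
    ext; simp
  simp_rw [this, dens, Fintype.card_piFinset, prod_div_distrib, Fintype.card_pi, Nat.cast_prod]

end ProductSpace

section LocalLemma

open MeasureTheory

variable {Ω κ : Type*}

/-- The event that none of the events `B w` with `w ∈ S` occurs. -/
def avoiding (B : κ → Set Ω) (S : Finset κ) : Set Ω := {x | ∀ w ∈ S, x ∉ B w}

variable [MeasurableSpace Ω] {μ : Measure Ω} [IsFiniteMeasure μ] {B : κ → Set Ω}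
  {Γ : κ → Finset κ} {p : ℝ} {D : ℕ}

lemma measureReal_avoiding_le_two_mul [DecidableEq κ] {S S' : Finset κ}
    (hS : #(S \ S') ≤ D) (hp : 0 ≤ p) (hpD : 4 * p * D ≤ 1)
    (h : ∀ u ∈ S \ S', μ.real (B u ∩ avoiding B S') ≤ 2 * p * μ.real (avoiding B S')) :
    μ.real (avoiding B S') ≤ 2 * μ.real (avoiding B S) := by
  have hcover : avoiding B S' ⊆ avoiding B S ∪ ⋃ u ∈ S \ S', B u ∩ avoiding B S' := by
    intro x hx
    by_cases hxS : x ∈ avoiding B S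
    · exact .inl hxS
    · obtain ⟨w, hw, hxw⟩ : ∃ w ∈ S, x ∈ B w := by simpa [avoiding] using hxS
      exact .inr <| Set.mem_biUnion (mem_sdiff.2 ⟨hw, fun hw' => hx w hw' hxw⟩) ⟨hxw, hx⟩
  have hle : μ.real (avoiding B S') ≤
      μ.real (avoiding B S) + #(S \ S') • (2 * p * μ.real (avoiding B S')) := calc
    _ ≤ _ := (measureReal_mono hcover).trans (measureReal_union_le _ _)
    _ ≤ _ := add_le_add_right ((measureReal_biUnion_finset_le _ _).trans
      (sum_le_card_nsmul _ _ _ h)) _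
  have hcard : (#(S \ S') : ℝ) * p * μ.real (avoiding B S') ≤ D * p * μ.real (avoiding B S') := by
    gcongr
  rw [nsmul_eq_mul] at hle
  nlinarith [measureReal_nonneg (μ := μ) (s := avoiding B S')]

lemma measureReal_inter_avoiding_le (hp : 0 ≤ p) (hpD : 4 * p * D ≤ 1)
    (hΓ : ∀ v, #(Γ v) ≤ D) (hB : ∀ v S, Disjoint S (Γ v) →
      μ.real (B v ∩ avoiding B S) ≤ p * μ.real (avoiding B S)) (v : κ) (S : Finset κ) :
    μ.real (B v ∩ avoiding B S) ≤ 2 * p * μ.real (avoiding B S) := by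
  classical
  induction S using Finset.strongInduction generalizing v with
  | H S ih =>
    have hfar : μ.real (avoiding B (S \ Γ v)) ≤ 2 * μ.real (avoiding B S) := by
      rcases (sdiff_subset (s := S) (t := Γ v)).eq_or_ssubset with heq | hss
      · rw [heq]
        linarith [measureReal_nonneg (μ := μ) (s := avoiding B S)]
      · refine measureReal_avoiding_le_two_mul ?_ hp hpD fun u _ => ih _ hss u
        rw [sdiff_sdiff_right_self]
        exact (card_le_card inter_subset_right).trans (hΓ v)
    calc μ.real (B v ∩ avoiding B S) ≤ μ.real (B v ∩ avoiding B (S \ Γ v)) :=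
          measureReal_mono <| Set.inter_subset_inter_right _ fun x hx w hw =>
            hx w (sdiff_subset hw)
      _ ≤ p * μ.real (avoiding B (S \ Γ v)) := hB _ _ sdiff_disjoint
      _ ≤ p * (2 * μ.real (avoiding B S)) := by gcongr
      _ = 2 * p * μ.real (avoiding B S) := by ring

/-- The lopsided form of the symmetric Lovász local lemma. -/
theorem measureReal_avoiding_pos [NeZero μ] (hp : 0 ≤ p) (hp' : 2 * p < 1) (hpD : 4 * p * D ≤ 1)
    (hΓ : ∀ v, #(Γ v) ≤ D) (hB : ∀ v S, Disjoint S (Γ v) →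
      μ.real (B v ∩ avoiding B S) ≤ p * μ.real (avoiding B S)) (S : Finset κ) :
    0 < μ.real (avoiding B S) := by
  classical
  induction S using Finset.induction_on with
  | empty => simp [avoiding, measureReal_def, ENNReal.toReal_pos_iff, NeZero.ne]
  | insert v S _ ih =>
    have hcover : avoiding B S ⊆ avoiding B (insert v S) ∪ (B v ∩ avoiding B S) := by
      intro x hx
      by_cases hxv : x ∈ B v
      · exact .inr ⟨hxv, hx⟩
      · exact .inl <| (forall_mem_insert _ _ _).2 ⟨hxv, hx⟩
    have hsplit := (measureReal_mono hcover (μ := μ)).trans (measureReal_union_le _ _)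
    have hv := measureReal_inter_avoiding_le hp hpD hΓ hB v S
    nlinarith

lemma exists_forall_not_of_dependsOn {ι α : Type*} [Fintype ι] [DecidableEq ι] [Fintype α]
    [Nonempty α] [Fintype κ] {B : κ → (ι → α) → Prop} [∀ v, DecidablePred (B v)]
    {T : κ → Finset ι} (hBT : ∀ v, DependsOn (B v) (T v)) (hp : 0 ≤ p) (hp' : 2 * p < 1)
    (hB : ∀ v, (dens {x | B v x} : ℝ) ≤ p) (hT : ∀ v, #{w | ¬ Disjoint (T v) (T w)} ≤ D)
    (hpD : 4 * p * D ≤ 1) : ∃ x, ∀ v, ¬ B v x := by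
  classical
  let _ : MeasurableSpace (ι → α) := ⊤
  have hcount (s : Set (ι → α)) : Measure.count.real s = #{x | x ∈ s} := by
    rw [measureReal_def, Measure.count_apply (MeasurableSpace.measurableSet_top),
      Set.encard_eq_coe_toFinset_card]
    simp [Set.toFinset]
  have hpos := measureReal_avoiding_pos (μ := Measure.count) (B := fun v => {x | B v x}) (D := D)
    (Γ := fun v => {w | ¬ Disjoint (T v) (T w)}) hp hp' hpD hT (fun v S hS => ?_) univ
  · have hne : (avoiding (fun v => {x | B v x}) univ).Nonempty := by
      by_contra h
      simp [Set.not_nonempty_iff_eq_empty.1 h] at hpos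
    obtain ⟨x, hx⟩ := hne
    exact ⟨x, fun v => hx v (mem_univ v)⟩
  have havoid : DependsOn (fun x => ∀ w ∈ S, ¬ B w x) (T v : Set ι)ᶜ := by
    refine fun x y hxy => propext <| forall₂_congr fun w hw => not_congr <| iff_of_eq <|
      hBT w fun i hiw => hxy i fun hiv => ?_
    have hvw : Disjoint (T v) (T w) := by simpa using disjoint_left.1 hS hw
    exact disjoint_left.1 hvw hiv hiw
  have hind : (#{x | B v x ∧ ∀ w ∈ S, ¬ B w x} : ℝ) =
      dens {x | B v x} * #{x | ∀ w ∈ S, ¬ B w x} := by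
    rw [← natCast_card_mul_nnratCast_dens (𝕜 := ℝ), dens_filter_and_of_dependsOn (hBT v) havoid,
      ← natCast_card_mul_nnratCast_dens (𝕜 := ℝ)]
    push_cast
    ring
  simp only [hcount, avoiding, Set.mem_inter_iff, Set.mem_ofPred_eq]
  rw [hind]
  exact mul_le_mul_of_nonneg_right (hB v) (Nat.cast_nonneg _)

end LocalLemma

section ExponentialMoments

lemma expect_exp_le_exp_expect {α : Type*} [Fintype α] [Nonempty α] {g : α → ℝ} {S : Finset α}
    {L p : ℝ} (hL : L ≤ 1) (hg : ∀ a b, |g a - g b| ≤ L)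
    (hgS : ∀ a ∉ S, ∀ b ∉ S, g a = g b) (hp : (dens S : ℝ) ≤ p) :
    𝔼 a, Real.exp (g a) ≤ Real.exp (L ^ 2 * p) * Real.exp (𝔼 a, g a) := by
  obtain ⟨c, hc, hcS⟩ : ∃ c, (∀ a, |g a - c| ≤ L) ∧ ∀ a ∉ S, g a = c := by
    by_cases h : ∃ b, b ∉ S
    · obtain ⟨b, hb⟩ := h
      exact ⟨g b, fun a => hg a b, fun a ha => hgS a ha b hb⟩
    · push Not at h
      exact ⟨g (Classical.arbitrary α), fun a => hg a _, fun a ha => (ha (h a)).elim⟩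
  have hvar : 𝔼 a, (g a - c) ^ 2 ≤ L ^ 2 * p := calc
    𝔼 a, (g a - c) ^ 2 = (∑ a ∈ S, (g a - c) ^ 2) / Fintype.card α := by
      rw [Fintype.expect_eq_sum_div_card]
      congr 1
      exact (sum_subset (subset_univ S) fun a _ ha => by simp [hcS a ha]).symm
    _ ≤ #S • L ^ 2 / Fintype.card α := by
      gcongr
      exact sum_le_card_nsmul _ _ _ fun a _ => sq_le_sq' (abs_le.1 (hc a)).1 (abs_le.1 (hc a)).2
    _ = L ^ 2 * dens S := by rw [nnratCast_dens, nsmul_eq_mul]; ring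
    _ ≤ L ^ 2 * p := by gcongr
  have hpt (a : α) : Real.exp (g a) ≤ Real.exp c * (1 + (g a - c) + (g a - c) ^ 2) := by
    have h := (abs_le.1 (Real.abs_exp_sub_one_sub_id_le ((hc a).trans hL))).2
    calc Real.exp (g a) = Real.exp c * Real.exp (g a - c) := by rw [← Real.exp_add]; ring_nf
      _ ≤ Real.exp c * (1 + (g a - c) + (g a - c) ^ 2) := by gcongr; linarith
  calc 𝔼 a, Real.exp (g a) ≤ 𝔼 a, Real.exp c * (1 + (g a - c) + (g a - c) ^ 2) :=
        expect_le_expect fun a _ => hpt a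
    _ = Real.exp c * (1 + (𝔼 a, g a - c) + 𝔼 a, (g a - c) ^ 2) := by
        rw [← mul_expect, expect_add_distrib, expect_add_distrib, expect_sub_distrib,
          Fintype.expect_const, Fintype.expect_const]
    _ ≤ Real.exp c * Real.exp ((𝔼 a, g a - c) + L ^ 2 * p) := by
        gcongr
        linarith [Real.add_one_le_exp ((𝔼 a, g a - c) + L ^ 2 * p)]
    _ = _ := by rw [← Real.exp_add, ← Real.exp_add]; ring_nf

lemma dens_filter_le_exp_mul_expect {β : Type*} [Fintype β] (f : β → ℝ) (a : ℝ) :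
    (dens {x | a ≤ f x} : ℝ) ≤ Real.exp (-a) * 𝔼 x, Real.exp (f x) := by
  rw [dens_filter_eq_expect, mul_expect]
  refine expect_le_expect fun x _ => ?_
  rw [← Real.exp_add]
  split_ifs with h
  · exact Real.one_le_exp (by linarith)
  · exact (Real.exp_pos _).le

variable {ι α : Type*} [Fintype ι] [DecidableEq ι] [Fintype α]

/-- The function `f` on a product space with the coordinates in `s` averaged out: its conditional
expectation given the coordinates outside `s`. -/
noncomputable def averageOn (s : Finset ι) (f : (ι → α) → ℝ) (x : ι → α) : ℝ :=
  𝔼 y, f (s.piecewise y x)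

variable {s : Finset ι} {f : (ι → α) → ℝ} {i : ι} {L : ℝ} {p : ι → ℝ}
  {S : ι → (ι → α) → Finset α}

lemma averageOn_empty [Nonempty α] : averageOn ∅ f = f := by
  ext x
  simp [averageOn]

lemma averageOn_insert (hi : i ∉ s) (x : ι → α) :
    averageOn (insert i s) f x = 𝔼 a, averageOn s f (update x i a) := by
  calc 𝔼 y, f ((insert i s).piecewise y x)
      = 𝔼 y, f (update (s.piecewise y x) i (y i)) := by simp only [piecewise_insert]
    _ = 𝔼 y, 𝔼 a, f (update (s.piecewise (update y i a) x) i a) := by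
        rw [← expect_expect_update i fun y => f (update (s.piecewise y x) i (y i))]
        simp only [update_self]
    _ = 𝔼 y, 𝔼 a, f (s.piecewise y (update x i a)) := by
        refine expect_congr rfl fun y _ => expect_congr rfl fun a _ => congrArg f ?_
        ext j
        by_cases hj : j = i
        · subst hj; simp [hi]
        · by_cases hjs : j ∈ s <;> simp [hj, hjs]
    _ = 𝔼 a, averageOn s f (update x i a) := expect_comm _ _ _

lemma averageOn_averageOn_compl (s : Finset ι) (f : (ι → α) → ℝ) (x : ι → α) :
    averageOn s (averageOn sᶜ f) x = 𝔼 y, f y := by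
  rcases isEmpty_or_nonempty (ι → α) with _ | _
  · exact isEmptyElim x
  calc averageOn s (averageOn sᶜ f) x = 𝔼 y, 𝔼 z, f (s.piecewise y z) := by
        refine expect_congr rfl fun y _ => expect_congr rfl fun z _ => congrArg f ?_
        ext j
        by_cases hj : j ∈ s <;> simp [hj]
    _ = 𝔼 y, f y := by
        rw [expect_expect_piecewise s fun y _ => f y]
        simp only [Fintype.expect_const]

lemma abs_averageOn_update_sub_le [Nonempty α]
    (hf : ∀ x a b, |f (update x i a) - f (update x i b)| ≤ L) (hi : i ∉ s) (x : ι → α) (a b : α) :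
    |averageOn s f (update x i a) - averageOn s f (update x i b)| ≤ L := by
  simp only [averageOn, ← update_piecewise_of_notMem _ _ _ hi, ← expect_sub_distrib]
  refine (abs_expect_le _ _).trans ?_
  calc _ ≤ 𝔼 _y : ι → α, L := expect_le_expect fun y _ => hf _ a b
    _ = L := Fintype.expect_const _

lemma expect_exp_le_expect_exp_averageOn [Nonempty α] (hL : L ≤ 1)
    (hf : ∀ i ∈ s, ∀ x a b, |f (update x i a) - f (update x i b)| ≤ L)
    (hSs : ∀ i ∈ s, DependsOn (S i) (s : Set ι)ᶜ)
    (hp : ∀ i ∈ s, ∀ x, (dens (S i x) : ℝ) ≤ p i)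
    (hfS : ∀ i ∈ s, ∀ x, ∀ a ∉ S i x, ∀ b ∉ S i x, f (update x i a) = f (update x i b)) :
    𝔼 x, Real.exp (f x) ≤
      Real.exp (L ^ 2 * ∑ i ∈ s, p i) * 𝔼 x, Real.exp (averageOn s f x) := by
  induction s using Finset.induction_on with
  | empty => simp [averageOn_empty]
  | insert j s hj ih =>
    have hone (x : ι → α) : 𝔼 a, Real.exp (averageOn s f (update x j a)) ≤
        Real.exp (L ^ 2 * p j) * Real.exp (averageOn (insert j s) f x) := by
      rw [averageOn_insert hj]
      refine expect_exp_le_exp_expect hL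
        (abs_averageOn_update_sub_le (hf j (mem_insert_self j s)) hj x)
        (fun a ha b hb => ?_) (hp j (mem_insert_self j s) x)
      simp only [averageOn, ← update_piecewise_of_notMem _ _ _ hj]
      refine expect_congr rfl fun y _ => ?_
      have hS : S j (s.piecewise y x) = S j x := hSs j (mem_insert_self j s) fun i hi =>
        piecewise_eq_of_notMem _ _ _ fun his => hi (mem_coe.2 (mem_insert_of_mem his))
      exact hfS j (mem_insert_self j s) _ a (hS ▸ ha) b (hS ▸ hb)
    calc 𝔼 x, Real.exp (f x)
        ≤ Real.exp (L ^ 2 * ∑ i ∈ s, p i) * 𝔼 x, Real.exp (averageOn s f x) :=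
          ih (fun i hi => hf i (mem_insert_of_mem hi))
            (fun i hi => (hSs i (mem_insert_of_mem hi)).mono
              (Set.compl_subset_compl.2 (coe_subset.2 (subset_insert j s))))
            (fun i hi => hp i (mem_insert_of_mem hi)) fun i hi => hfS i (mem_insert_of_mem hi)
      _ = Real.exp (L ^ 2 * ∑ i ∈ s, p i) *
            𝔼 x, 𝔼 a, Real.exp (averageOn s f (update x j a)) := by
          rw [expect_expect_update j fun x => Real.exp (averageOn s f x)]
      _ ≤ Real.exp (L ^ 2 * ∑ i ∈ s, p i) *
            𝔼 x, Real.exp (L ^ 2 * p j) * Real.exp (averageOn (insert j s) f x) := by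
          gcongr with x
          exact hone x
      _ = _ := by
          rw [← mul_expect, ← mul_assoc, ← Real.exp_add, sum_insert hj]
          ring_nf

/-- A coordinate outside `R` enters the bound only through the probability that it matters, given
the coordinates in `R`. -/
theorem expect_exp_le_of_bounded_differences [Nonempty α] {R : Finset ι} (hL : L ≤ 1)
    (hf : ∀ i x a b, |f (update x i a) - f (update x i b)| ≤ L)
    (hSR : ∀ i ∉ R, DependsOn (S i) R) (hp : ∀ i ∉ R, ∀ x, (dens (S i x) : ℝ) ≤ p i)
    (hfS : ∀ i ∉ R, ∀ x, ∀ a ∉ S i x, ∀ b ∉ S i x, f (update x i a) = f (update x i b)) :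
    𝔼 x, Real.exp (f x) ≤ Real.exp (𝔼 x, f x + L ^ 2 * (∑ i ∈ Rᶜ, p i + #R)) := by
  have hcompl : 𝔼 x, Real.exp (f x) ≤
      Real.exp (L ^ 2 * ∑ i ∈ Rᶜ, p i) * 𝔼 x, Real.exp (averageOn Rᶜ f x) :=
    expect_exp_le_expect_exp_averageOn hL (fun i _ => hf i) (by simpa using hSR) (by simpa using hp)
      (by simpa using hfS)
  have hR : 𝔼 x, Real.exp (averageOn Rᶜ f x) ≤
      Real.exp (L ^ 2 * ∑ _i ∈ R, 1) * 𝔼 x, Real.exp (averageOn R (averageOn Rᶜ f) x) := by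
    refine expect_exp_le_expect_exp_averageOn (S := fun _ _ => univ) hL
      (fun i hi => abs_averageOn_update_sub_le (hf i) (by simpa using hi)) ?_ ?_ ?_
    · exact fun _ _ => (dependsOn_const _).mono (Set.empty_subset _)
    · simp
    · simp
  simp only [averageOn_averageOn_compl, Fintype.expect_const] at hR
  calc 𝔼 x, Real.exp (f x) ≤ _ := hcompl
    _ ≤ Real.exp (L ^ 2 * ∑ i ∈ Rᶜ, p i) * (Real.exp (L ^ 2 * ∑ _i ∈ R, 1) *
          Real.exp (𝔼 x, f x)) := by gcongr
    _ = _ := by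
      rw [← Real.exp_add, ← Real.exp_add, sum_const, nsmul_one]
      ring_nf

end ExponentialMoments

section GreedyColoring

variable {V κ : Type*} [Fintype V] [DecidableEq V] [Fintype κ] [DecidableEq κ]
  {H : SimpleGraph V} [DecidableRel H.Adj]

lemma exists_update_isProper_insert {S : Finset V} {g : V → κ} {v : V}
    (hg : ∀ u ∈ S, ∀ w ∈ S, H.Adj u w → g u ≠ g w)
    (hv : #((H.neighborFinset v ∩ S).image g) < Fintype.card κ) :
    ∃ c, ∀ u ∈ insert v S, ∀ w ∈ insert v S, H.Adj u w → update g v c u ≠ update g v c w := by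
  obtain ⟨c, -, hc⟩ := exists_mem_notMem_of_card_lt_card (t := univ) hv
  have hcw {w : V} (hw : w ∈ insert v S) (hvw : H.Adj v w) : g w ≠ c := fun h =>
    hc (mem_image.2 ⟨w, by simpa [hvw] using (mem_insert.1 hw).resolve_left hvw.ne', h⟩)
  refine ⟨c, fun u hu w hw huw => ?_⟩
  rcases eq_or_ne u v with rfl | huv
  · rw [update_self, update_of_ne huw.ne']
    exact (hcw hw huw).symm
  rcases eq_or_ne w v with rfl | hwv
  · rw [update_self, update_of_ne huw.ne]
    exact hcw hu huw.symm
  rw [update_of_ne huv, update_of_ne hwv]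
  exact hg u ((mem_insert.1 hu).resolve_left huv) w ((mem_insert.1 hw).resolve_left hwv) huw

lemma colorable_of_partial_coloring {R : Finset V} {f : V → κ}
    (hf : ∀ u ∈ R, ∀ w ∈ R, H.Adj u w → f u ≠ f w)
    (hv : ∀ v, #((H.neighborFinset v ∩ R).image f) + #(H.neighborFinset v \ R) <
      Fintype.card κ) : H.Colorable (Fintype.card κ) := by
  have hextend (T : Finset V) : ∃ g : V → κ, (∀ u ∈ R, g u = f u) ∧
      ∀ u ∈ R ∪ T, ∀ w ∈ R ∪ T, H.Adj u w → g u ≠ g w := by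
    induction T using Finset.induction_on with
    | empty => exact ⟨f, fun _ _ => rfl, by simpa using hf⟩
    | insert v T _ ih =>
      obtain ⟨g, hgf, hg⟩ := ih
      rw [union_insert]
      by_cases hvR : v ∈ R
      · exact ⟨g, hgf, by rwa [insert_eq_of_mem (mem_union_left _ hvR)]⟩
      have hsub : (H.neighborFinset v ∩ (R ∪ T)).image g ⊆
          (H.neighborFinset v ∩ R).image f ∪ (H.neighborFinset v \ R).image g := by
        rw [← image_congr fun u hu => hgf u (mem_inter.1 hu).2, ← image_union, union_comm _ (_ \ _),
          sdiff_union_inter]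
        exact image_subset_image inter_subset_left
      obtain ⟨c, hc⟩ := exists_update_isProper_insert hg <| calc
        _ ≤ _ := (card_le_card hsub).trans (card_union_le _ _)
        _ ≤ _ := Nat.add_le_add_left card_image_le _
        _ < Fintype.card κ := hv v
      exact ⟨update g v c, fun u hu => by rw [update_of_ne (ne_of_mem_of_not_mem hu hvR), hgf u hu],
        hc⟩
  obtain ⟨g, -, hg⟩ := hextend univ
  exact (SimpleGraph.Coloring.mk g fun huw => hg _ (by simp) _ (by simp) huw).colorable

end GreedyColoring

section RandomColoring

variable {V κ ρ : Type*} [LinearOrder ρ]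

/-- A vertex retains its colour under an assignment `x` of colours and priorities if every
neighbour of the same colour has a strictly larger priority. Ties are lost by both sides, which
makes the retained colours a proper partial colouring. -/
def Retains (H : SimpleGraph V) (x : V → κ × ρ) (u : V) : Prop :=
  ∀ w, H.Adj u w → ¬ ((x w).1 = (x u).1 ∧ (x w).2 ≤ (x u).2)

lemma Retains.not_adj {H : SimpleGraph V} {x : V → κ × ρ} {u w : V} (hu : Retains H x u)
    (hw : Retains H x w) (huw : (x u).1 = (x w).1) : ¬ H.Adj u w := by
  intro h
  rcases le_total (x w).2 (x u).2 with hle | hle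
  · exact hu w h ⟨huw.symm, hle⟩
  · exact hw u h.symm ⟨huw, hle⟩

variable [Fintype V] [DecidableEq κ] (H : SimpleGraph V) [DecidableRel H.Adj]

instance Retains.decidablePred (x : V → κ × ρ) : DecidablePred (Retains H x) :=
  fun _ => inferInstanceAs (Decidable (∀ _, _ → _))

/-- The neighbours of `v` that retain the colour `c`. -/
def retainedClass (x : V → κ × ρ) (v : V) (c : κ) : Finset V :=
  {u ∈ H.neighborFinset v | Retains H x u ∧ (x u).1 = c}

/-- The number of colours saved at `v` by repetitions among the retained colours of its
neighbours, where a colour counts for at most two repetitions. -/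
def savings [Fintype κ] (v : V) (x : V → κ × ρ) : ℕ :=
  ∑ c, min (#(retainedClass H x v c) - 1) 2

variable {H} {x y : V → κ × ρ} {u v w i : V} {c : κ}

lemma mem_retainedClass : u ∈ retainedClass H x v c ↔ H.Adj v u ∧ Retains H x u ∧ (x u).1 = c := by
  simp [retainedClass]

lemma retainedClass_subset_of_eq (h : ∀ u, H.Adj v u → (x u).1 = c →
      x u = y u ∧ ∀ w, H.Adj u w → (y w).1 = c → x w = y w) :
    retainedClass H x v c ⊆ retainedClass H y v c := by
  intro u hu
  obtain ⟨hvu, hret, rfl⟩ := mem_retainedClass.1 hu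
  obtain ⟨hxy, hnbr⟩ := h u hvu rfl
  refine mem_retainedClass.2 ⟨hvu, fun w huw hw => hret w huw ?_, by rw [hxy]⟩
  rwa [hnbr w huw (by rw [hw.1, hxy]), hxy]

lemma retainedClass_congr (h : ∀ u, H.Adj v u → (x u).1 = c ∨ (y u).1 = c →
      x u = y u ∧ ∀ w, H.Adj u w → (x w).1 = c ∨ (y w).1 = c → x w = y w) :
    retainedClass H x v c = retainedClass H y v c := by
  refine subset_antisymm (retainedClass_subset_of_eq fun u hu hc => ?_)
    (retainedClass_subset_of_eq fun u hu hc => ?_)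
  · exact (h u hu (.inl hc)).imp_right fun hw w huw hwc => hw w huw (.inr hwc)
  · exact ⟨(h u hu (.inr hc)).1.symm,
      fun w huw hwc => ((h u hu (.inr hc)).2 w huw (.inl hwc)).symm⟩

variable [DecidableEq V]

lemma retainedClass_update_of_ne {a b : κ × ρ} (ha : a.1 ≠ c) (hb : b.1 ≠ c) :
    retainedClass H (update x i a) v c = retainedClass H (update x i b) v c := by
  have hupdate (u : V) (hu : (update x i a u).1 = c ∨ (update x i b u).1 = c) :
      update x i a u = update x i b u := by
    rcases eq_or_ne u i with rfl | hui
    · simp_all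
    · simp [hui]
  exact retainedClass_congr fun u _ hu => ⟨hupdate u hu, fun w _ hw => hupdate w hw⟩

variable (H) in
/-- The vertices whose values determine `savings H v`. -/
def savingsSupport (v : V) : Finset V :=
  H.neighborFinset v ∪ (H.neighborFinset v).biUnion fun u => H.neighborFinset u

variable (H) in
/-- The values of the coordinate `i` that may influence the savings at a vertex `v` not adjacent
to `i`: those whose colour appears on a common neighbour of `v` and `i`. -/
def influential [Fintype ρ] (v i : V) (x : V → κ × ρ) : Finset (κ × ρ) :=
  ((H.neighborFinset v ∩ H.neighborFinset i).image fun u => (x u).1) ×ˢ univ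

lemma mem_savingsSupport : w ∈ savingsSupport H v ↔ H.Adj v w ∨ ∃ u, H.Adj v u ∧ H.Adj u w := by
  simp [savingsSupport]

lemma mem_savingsSupport_comm : v ∈ savingsSupport H w ↔ w ∈ savingsSupport H v := by
  simp only [mem_savingsSupport, H.adj_comm, and_comm]

variable [Fintype κ]

variable (H v) in
lemma dependsOn_savings : DependsOn (savings H v : (V → κ × ρ) → ℕ) (savingsSupport H v) := by
  refine fun x y h => sum_congr rfl fun c _ => ?_
  rw [retainedClass_congr fun u hu _ => ⟨h u ?_, fun w hw _ => h w ?_⟩]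
  · exact mem_savingsSupport.2 (.inl hu)
  · exact mem_savingsSupport.2 (.inr ⟨u, hu, hw⟩)

variable (H v x i) in
lemma abs_savings_update_sub_le (a b : κ × ρ) :
    |(savings H v (update x i a) : ℝ) - savings H v (update x i b)| ≤ 4 := by
  let k (z : V → κ × ρ) (c : κ) : ℝ := (min (#(retainedClass H z v c) - 1) 2 : ℕ)
  have hk (z : V → κ × ρ) (c : κ) : 0 ≤ k z c ∧ k z c ≤ 2 :=
    ⟨Nat.cast_nonneg _, Nat.cast_le_ofNat.2 (min_le_right _ _)⟩
  have hsub : ∑ c, (k (update x i a) c - k (update x i b) c) =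
      ∑ c ∈ {a.1, b.1}, (k (update x i a) c - k (update x i b) c) := by
    refine (sum_subset (subset_univ _) fun c _ hc => ?_).symm
    simp only [mem_insert, mem_singleton, not_or] at hc
    simp only [k, retainedClass_update_of_ne (Ne.symm hc.1) (Ne.symm hc.2), sub_self]
  calc |(savings H v (update x i a) : ℝ) - savings H v (update x i b)|
      = |∑ c ∈ {a.1, b.1}, (k (update x i a) c - k (update x i b) c)| := by
        rw [← hsub, sum_sub_distrib, savings, savings, Nat.cast_sum, Nat.cast_sum]
    _ ≤ ∑ c ∈ {a.1, b.1}, |k (update x i a) c - k (update x i b) c| := abs_sum_le_sum_abs _ _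
    _ ≤ #{a.1, b.1} • (2 : ℝ) := sum_le_card_nsmul _ _ _ fun c _ => abs_sub_le_of_nonneg_of_le
        (hk _ c).1 (hk _ c).2 (hk _ c).1 (hk _ c).2
    _ ≤ 2 • 2 := nsmul_le_nsmul_left zero_le_two card_le_two
    _ = 4 := by norm_num

lemma savings_update_eq [Fintype ρ] {a b : κ × ρ} (hi : ¬ H.Adj v i)
    (ha : a ∉ influential H v i x) (hb : b ∉ influential H v i x) :
    savings H v (update x i a) = savings H v (update x i b) := by
  simp only [influential, mem_product, mem_image, mem_inter, SimpleGraph.mem_neighborFinset,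
    mem_univ, and_true, not_exists, not_and, and_imp] at ha hb
  refine sum_congr rfl fun c _ => ?_
  rw [retainedClass_congr fun u hu hc => ?_]
  have hui : u ≠ i := fun h => hi (h ▸ hu)
  simp only [update_of_ne hui, or_self] at hc
  refine ⟨by simp [hui], fun w hw hwc => ?_⟩
  rcases eq_or_ne w i with rfl | hwi
  · simp only [update_self] at hwc
    rcases hwc with h | h
    · exact (ha u hu hw.symm (hc.trans h.symm)).elim
    · exact (hb u hu hw.symm (hc.trans h.symm)).elim
  · simp [hwi]

lemma card_image_add_savings_le (v : V) (x : V → κ × ρ) :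
    #((H.neighborFinset v ∩ ({u | Retains H x u} : Finset V)).image fun u => (x u).1) +
      savings H v x ≤ #(H.neighborFinset v ∩ ({u | Retains H x u} : Finset V)) := by
  set R : Finset V := {u | Retains H x u} with hR
  have hclass (c : κ) : {u ∈ H.neighborFinset v ∩ R | (x u).1 = c} = retainedClass H x v c := by
    ext u
    simp [retainedClass, hR, and_assoc]
  rw [card_eq_sum_card_fiberwise (s := H.neighborFinset v ∩ R) (f := fun u => (x u).1)
    (t := univ) (by simp), ← filter_univ_mem (image _ _), card_filter, savings,
    ← sum_add_distrib]
  refine sum_le_sum fun c _ => ?_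
  rw [hclass]
  split_ifs with h
  · obtain ⟨u, hu, hc⟩ := mem_image.1 h
    have : 0 < #(retainedClass H x v c) :=
      card_pos.2 ⟨u, hclass c ▸ mem_filter.2 ⟨hu, hc⟩⟩
    omega
  · omega

end RandomColoring

lemma colorable_of_degree_lt_savings {V κ ρ : Type*} [Fintype V] [DecidableEq κ]
    [Fintype κ] [LinearOrder ρ] {H : SimpleGraph V} [DecidableRel H.Adj] {x : V → κ × ρ}
    (hx : ∀ v, H.degree v < Fintype.card κ + savings H v x) : H.Colorable (Fintype.card κ) := by
  classical
  refine colorable_of_partial_coloring (R := {u | Retains H x u}) (f := fun u => (x u).1)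
    (fun u hu w hw huw h => ?_) fun v => ?_
  · exact (mem_filter.1 hu).2.not_adj (mem_filter.1 hw).2 h huw
  · have hsavings := card_image_add_savings_le (H := H) v x
    have hsplit := card_inter_add_card_sdiff (H.neighborFinset v) {u | Retains H x u}
    have hlt := hx v
    rw [SimpleGraph.card_neighborFinset_eq_degree] at hsplit
    omega

section RegularGraph

variable {V : Type*} [Fintype V] [DecidableEq V] {H : SimpleGraph V} [DecidableRel H.Adj] {r : ℕ}

lemma card_savingsSupport_le (hr : ∀ v, H.degree v ≤ r) (v : V) :
    #(savingsSupport H v) ≤ r + r * r := by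
  refine (card_union_le _ _).trans (add_le_add (hr v) ?_)
  exact (card_biUnion_le_card_mul _ _ r fun u _ => hr u).trans (Nat.mul_le_mul_right r (hr v))

lemma card_not_disjoint_savingsSupport_le (hr : ∀ v, H.degree v ≤ r) (v : V) :
    #{w | ¬ Disjoint (savingsSupport H v) (savingsSupport H w)} ≤ (r + r * r) ^ 2 := calc
  _ ≤ #((savingsSupport H v).biUnion (savingsSupport H)) := card_le_card fun w hw => by
    obtain ⟨z, hzv, hzw⟩ := not_disjoint_iff.1 (mem_filter.1 hw).2
    exact mem_biUnion.2 ⟨z, hzv, mem_savingsSupport_comm.1 hzw⟩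
  _ ≤ #(savingsSupport H v) * (r + r * r) :=
    card_biUnion_le_card_mul _ _ _ fun u _ => card_savingsSupport_le hr u
  _ ≤ (r + r * r) ^ 2 := by
    rw [sq]
    exact Nat.mul_le_mul_right _ (card_savingsSupport_le hr v)

end RegularGraph

section Concentration

variable {V κ ρ : Type*} [Fintype V] [DecidableEq V] {H : SimpleGraph V} [DecidableRel H.Adj]

lemma sum_card_inter_neighborFinset (v : V) :
    ∑ i, #(H.neighborFinset v ∩ H.neighborFinset i) = ∑ u ∈ H.neighborFinset v, H.degree u := calc
  _ = ∑ i, ∑ u ∈ H.neighborFinset v, if H.Adj u i then 1 else 0 := by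
    refine sum_congr rfl fun i _ => ?_
    rw [← card_filter]
    congr 1
    ext u
    simp [H.adj_comm]
  _ = ∑ u ∈ H.neighborFinset v, H.degree u := by
    rw [sum_comm]
    refine sum_congr rfl fun u _ => ?_
    rw [← card_filter, ← SimpleGraph.neighborFinset_eq_filter,
      SimpleGraph.card_neighborFinset_eq_degree]

variable [DecidableEq κ] [Fintype ρ] {r : ℕ}

lemma dependsOn_influential (v i : V) :
    DependsOn (influential H v i : (V → κ × ρ) → _) (H.neighborFinset v) := by
  intro x y h
  rw [influential, influential]
  congr 1
  exact image_congr fun u hu => by rw [h u (mem_inter.1 hu).1]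

variable [Fintype κ]

lemma dens_influential_le [Nonempty ρ] (v i : V) (x : V → κ × ρ) :
    (dens (influential H v i x) : ℝ) ≤
      #(H.neighborFinset v ∩ H.neighborFinset i) / Fintype.card κ := by
  rw [nnratCast_dens, influential, card_product, card_univ, Fintype.card_prod, Nat.cast_mul,
    Nat.cast_mul, mul_div_mul_right _ _ (Nat.cast_ne_zero.2 Fintype.card_ne_zero)]
  gcongr
  exact card_image_le

lemma sum_card_inter_neighborFinset_le (hr : ∀ v, H.degree v ≤ r) (v : V) (s : Finset V) :
    ∑ i ∈ s, (#(H.neighborFinset v ∩ H.neighborFinset i) : ℝ) ≤ r * r := by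
  have h : ∑ u ∈ H.neighborFinset v, H.degree u ≤ r * r := calc
    _ ≤ H.degree v • r := sum_le_card_nsmul _ _ _ fun u _ => hr u
    _ ≤ r * r := Nat.mul_le_mul_right r (hr v)
  rw [← sum_card_inter_neighborFinset] at h
  exact_mod_cast (sum_le_sum_of_subset (subset_univ s)).trans h

variable [LinearOrder ρ] [Nonempty κ] [Nonempty ρ]

lemma expect_exp_neg_mul_savings_le (hr : ∀ v, H.degree v ≤ r) (hκ : r ≤ 2 * Fintype.card κ)
    (v : V) {t : ℝ} (ht : 0 ≤ t) (ht' : 4 * t ≤ 1) :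
    𝔼 x : V → κ × ρ, Real.exp (-t * savings H v x) ≤
      Real.exp (-t * 𝔼 x : V → κ × ρ, (savings H v x : ℝ) + (4 * t) ^ 2 * (3 * r)) := by
  have hκ0 : (0 : ℝ) < Fintype.card κ := Nat.cast_pos.2 Fintype.card_pos
  have hinfl : ∑ i ∈ (H.neighborFinset v)ᶜ,
      (#(H.neighborFinset v ∩ H.neighborFinset i) : ℝ) / Fintype.card κ ≤ 2 * r := by
    rw [← sum_div, div_le_iff₀ hκ0]
    have hκ' : (r : ℝ) ≤ 2 * Fintype.card κ := mod_cast hκ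
    nlinarith [sum_card_inter_neighborFinset_le hr v (H.neighborFinset v)ᶜ,
      Nat.cast_nonneg (α := ℝ) r]
  have hdeg : (#(H.neighborFinset v) : ℝ) ≤ r := Nat.cast_le.2 (hr v)
  have hmoment := expect_exp_le_of_bounded_differences
    (f := fun x : V → κ × ρ => -t * (savings H v x : ℝ)) (S := influential H v)
    (R := H.neighborFinset v) ht' (fun i x a b => ?_) (fun i _ => dependsOn_influential v i)
    (fun i _ => dens_influential_le v i)
    (fun i hi x a ha b hb => by
      rw [savings_update_eq (by simpa using hi) ha hb])
  · refine hmoment.trans (Real.exp_le_exp.2 ?_)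
    rw [← mul_expect]
    gcongr
    linarith
  · rw [← mul_sub, abs_mul, abs_neg, abs_of_nonneg ht, mul_comm 4]
    exact mul_le_mul_of_nonneg_left (abs_savings_update_sub_le H x v i a b) ht

lemma dens_savings_le_expect_sub_le (hr : ∀ v, H.degree v ≤ r) (hκ : r ≤ 2 * Fintype.card κ)
    (v : V) {η : ℝ} (hη : 0 ≤ η) (hη' : η ≤ 24) :
    (dens {x : V → κ × ρ | (savings H v x : ℝ) ≤
        (𝔼 y : V → κ × ρ, (savings H v y : ℝ)) - η * r} : ℝ) ≤
      Real.exp (-(η ^ 2 / 192 * r)) := by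
  rcases hη.eq_or_lt with rfl | hη0
  · simp [dens_le_one]
  -- `t = η / 96` minimises the exponent `(4 * t) ^ 2 * (3 * r) - t * (η * r)`.
  set t : ℝ := η / 96 with ht
  set E : ℝ := 𝔼 y : V → κ × ρ, (savings H v y : ℝ)
  have ht0 : 0 < t := by positivity
  have hiff (x : V → κ × ρ) : (savings H v x : ℝ) ≤ E - η * r ↔
      -t * (E - η * r) ≤ -t * savings H v x := by
    rw [neg_mul, neg_mul, neg_le_neg_iff, mul_le_mul_iff_right₀ ht0]
  simp only [hiff]
  calc _ ≤ Real.exp (-(-t * (E - η * r))) * 𝔼 x : V → κ × ρ, Real.exp (-t * savings H v x) :=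
        dens_filter_le_exp_mul_expect _ _
    _ ≤ Real.exp (-(-t * (E - η * r))) * Real.exp (-t * E + (4 * t) ^ 2 * (3 * r)) := by
        gcongr
        exact expect_exp_neg_mul_savings_le hr hκ v ht0.le (by linarith)
    _ = Real.exp (-(η ^ 2 / 192 * r)) := by
        rw [← Real.exp_add, ht]
        ring_nf

end Concentration

section Counting

variable {V : Type*}

lemma card_triangles_le (s : Finset V) (R : V → V → Prop) [DecidableRel R] :
    (#{p ∈ (s ×ˢ s) ×ˢ s | R p.1.1 p.1.2 ∧ R p.1.1 p.2 ∧ R p.1.2 p.2} : ℝ) ≤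
      #{p ∈ s ×ˢ s | R p.1 p.2} * √(#{p ∈ s ×ˢ s | R p.1 p.2} : ℝ) := by
  set P := #{p ∈ s ×ˢ s | R p.1 p.2} with hP
  let d (u : V) : ℕ := #{w ∈ s | R u w}
  let t (u : V) : ℕ := #{p ∈ s ×ˢ s | R u p.1 ∧ R u p.2 ∧ R p.1 p.2}
  have hPd : P = ∑ u ∈ s, d u := by
    simp only [hP, d, card_filter, sum_product]
  have hTt : #{p ∈ (s ×ˢ s) ×ˢ s | R p.1.1 p.1.2 ∧ R p.1.1 p.2 ∧ R p.1.2 p.2} = ∑ u ∈ s, t u := by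
    simp only [t, card_filter, sum_product]
  have htP (u : V) : t u ≤ P := card_le_card fun p hp => by
    rw [mem_filter] at hp ⊢
    exact ⟨hp.1, hp.2.2.2⟩
  have htd (u : V) : t u ≤ d u * d u := by
    rw [← card_product]
    refine card_le_card fun p hp => ?_
    simp only [mem_filter, mem_product] at hp ⊢
    exact ⟨⟨hp.1.1, hp.2.1⟩, hp.1.2, hp.2.2.1⟩
  have ht (u : V) : (t u : ℝ) ≤ d u * √(P : ℝ) := by
    refine (Real.le_sqrt_of_sq_le ?_).trans_eq (?_ : √((d u : ℝ) ^ 2 * P) = d u * √(P : ℝ))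
    · rw [sq, sq]
      exact_mod_cast Nat.mul_le_mul (htd u) (htP u)
    · rw [Real.sqrt_mul (by positivity), Real.sqrt_sq (by positivity)]
  calc _ ≤ ∑ u ∈ s, (d u : ℝ) * √(P : ℝ) := by
        rw [hTt, Nat.cast_sum]
        exact sum_le_sum fun u _ => ht u
    _ = P * √(P : ℝ) := by rw [← sum_mul, ← Nat.cast_sum, ← hPd]

variable [DecidableEq V]

lemma card_distinct_triples (s : Finset V) :
    (#{p ∈ s.offDiag ×ˢ s | p.2 ≠ p.1.1 ∧ p.2 ≠ p.1.2} : ℝ) = #s * (#s - 1) * (#s - 2) := by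
  have hthird (p : V × V) (hp : p ∈ s.offDiag) : (#{y ∈ s | y ≠ p.1 ∧ y ≠ p.2} : ℝ) = #s - 2 := by
    obtain ⟨h₁, h₂, hne⟩ := mem_offDiag.1 hp
    have hsdiff : ({y ∈ s | y ≠ p.1 ∧ y ≠ p.2} : Finset V) = s \ {p.1, p.2} := by
      ext
      simp
    rw [hsdiff, cast_card_sdiff (by simp [insert_subset_iff, h₁, h₂]), card_pair hne,
      Nat.cast_ofNat]
  rw [card_filter, sum_product]
  simp only [← card_filter]
  rw [Nat.cast_sum, sum_congr rfl hthird, sum_const, nsmul_eq_mul, offDiag_card,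
    Nat.cast_sub (Nat.le_mul_self _), Nat.cast_mul]
  ring

-- For `k = 2, 3` this is an equality; beyond, the truncation at `2` only helps.
lemma pairs_sub_triples_le_min (k : ℕ) :
    3 * ((k : ℝ) * (k - 1)) - k * (k - 1) * (k - 2) ≤ 6 * ((min (k - 1) 2 : ℕ) : ℝ) := by
  match k with
  | 0 | 1 | 2 | 3 => norm_num
  | k + 4 =>
    rw [min_eq_right (by omega)]
    push_cast
    have hk : (0 : ℝ) ≤ k := Nat.cast_nonneg k
    nlinarith [mul_nonneg hk (sq_nonneg (k : ℝ)), mul_nonneg hk hk]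

end Counting

section NonadjacentNeighbors

variable {V : Type*} [Fintype V] [DecidableEq V] (H : SimpleGraph V) [DecidableRel H.Adj]

/-- The ordered pairs of distinct non-adjacent neighbours of `v`. -/
def nonadjPairs (v : V) : Finset (V × V) :=
  {p ∈ H.neighborFinset v ×ˢ H.neighborFinset v | p.1 ≠ p.2 ∧ ¬ H.Adj p.1 p.2}

/-- The ordered triples of distinct pairwise non-adjacent neighbours of `v`. -/
def nonadjTriples (v : V) : Finset ((V × V) × V) :=
  {p ∈ (H.neighborFinset v ×ˢ H.neighborFinset v) ×ˢ H.neighborFinset v |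
    (p.1.1 ≠ p.1.2 ∧ ¬ H.Adj p.1.1 p.1.2) ∧ (p.1.1 ≠ p.2 ∧ ¬ H.Adj p.1.1 p.2) ∧
      (p.1.2 ≠ p.2 ∧ ¬ H.Adj p.1.2 p.2)}

variable {H}

lemma card_nonadjTriples_le (v : V) :
    (#(nonadjTriples H v) : ℝ) ≤ #(nonadjPairs H v) * √(#(nonadjPairs H v) : ℝ) :=
  card_triangles_le (H.neighborFinset v) fun a b => a ≠ b ∧ ¬ H.Adj a b

variable {κ ρ : Type*} [Fintype κ] [DecidableEq κ] [LinearOrder ρ]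

lemma pairs_sub_triples_le_savings (v : V) (x : V → κ × ρ) :
    3 * (#{p ∈ nonadjPairs H v |
        (x p.2).1 = (x p.1).1 ∧ Retains H x p.1 ∧ Retains H x p.2} : ℝ) -
      #{p ∈ nonadjTriples H v | (x p.1.2).1 = (x p.1.1).1 ∧ (x p.2).1 = (x p.1.1).1 ∧
        Retains H x p.1.1 ∧ Retains H x p.1.2 ∧ Retains H x p.2} ≤ 6 * savings H v x := by
  rw [card_eq_sum_card_fiberwise (f := fun p => (x p.1).1) (t := univ) (by simp),
    card_eq_sum_card_fiberwise (s := filter _ (nonadjTriples H v))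
      (f := fun p => (x p.1.1).1) (t := univ) (by simp), savings, Nat.cast_sum, Nat.cast_sum,
    Nat.cast_sum, mul_sum, mul_sum, ← sum_sub_distrib]
  refine sum_le_sum fun c _ => (sub_le_sub (mul_le_mul_of_nonneg_left ?_ zero_le_three) ?_).trans
    (pairs_sub_triples_le_min #(retainedClass H x v c))
  · calc (_ : ℝ) ≤ #(retainedClass H x v c).offDiag := by
          refine Nat.cast_le.2 (card_le_card fun p hp => ?_)
          simp only [nonadjPairs, mem_filter, mem_product, SimpleGraph.mem_neighborFinset,
            mem_offDiag, mem_retainedClass] at hp ⊢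
          obtain ⟨⟨⟨⟨hu, hw⟩, hne, -⟩, hcol, hretu, hretw⟩, hc⟩ := hp
          exact ⟨⟨hu, hretu, hc⟩, ⟨hw, hretw, hcol.trans hc⟩, hne⟩
      _ = _ := by
          rw [offDiag_card, Nat.cast_sub (Nat.le_mul_self _), Nat.cast_mul]
          ring
  · rw [← card_distinct_triples]
    refine Nat.cast_le.2 (card_le_card fun p hp => ?_)
    simp only [nonadjTriples, mem_filter, mem_product, SimpleGraph.mem_neighborFinset,
      mem_offDiag, mem_retainedClass] at hp ⊢
    obtain ⟨⟨⟨⟨u₁, u₂, u₃⟩, ⟨w₁, w₂, w₃⟩, huw⟩, y₁, y₂, y₃⟩, hyu, hyw⟩ := hp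
    exact ⟨⟨⟨⟨⟨u₁, w₁⟩, y₁⟩, ⟨huw, u₂.not_adj w₂ (u₃.trans w₃.symm)⟩,
      ⟨hyu.symm, u₂.not_adj y₂ (u₃.trans y₃.symm)⟩, ⟨hyw.symm, w₂.not_adj y₂ (w₃.trans y₃.symm)⟩⟩,
      ⟨w₃.trans u₃.symm, y₃.trans u₃.symm, u₂, w₂, y₂⟩⟩, u₃⟩

end NonadjacentNeighbors

section RetentionProbabilities

lemma prod_ite_adj {V : Type*} [Fintype V] {H : SimpleGraph V} [DecidableRel H.Adj] (u : V)
    (k : ℝ) : ∏ z, (if H.Adj u z then k else 1) = k ^ H.degree u := by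
  rw [prod_ite, prod_const, prod_const_one, mul_one, ← SimpleGraph.neighborFinset_eq_filter,
    SimpleGraph.card_neighborFinset_eq_degree]

lemma sum_dens_filter_and_eq {α β : Type*} [Fintype α] [Fintype β] [DecidableEq β] (f : α → β)
    (P : α → Prop) [DecidablePred P] :
    ∑ b, (dens {x | P x ∧ f x = b} : ℝ) = dens {x | P x} := by
  simp only [nnratCast_dens, ← sum_div, ← filter_filter]
  rw [card_eq_sum_card_fiberwise (f := f) (t := univ) (by simp), Nat.cast_sum]

lemma dens_mul_dens_le_dens_inter {α : Type*} [Fintype α] [DecidableEq α] {s t : Finset α}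
    (h : s ⊆ t ∨ t ⊆ s) : (dens s : ℝ) * dens t ≤ dens (s ∩ t) := by
  have hs : (dens s : ℝ) ≤ 1 := mod_cast dens_le_one
  have ht : (dens t : ℝ) ≤ 1 := mod_cast dens_le_one
  rcases h with h | h
  · rw [inter_eq_left.2 h]
    exact mul_le_of_le_one_right (by positivity) ht
  · rw [inter_eq_right.2 h]
    exact mul_le_of_le_one_left (by positivity) hs

variable {V κ ρ : Type*} [Fintype κ] [Fintype ρ] [LinearOrder ρ]

variable (κ) in
/-- The probability that a random colour and priority at a neighbour does not make a vertex of
priority `s` lose its colour. -/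
noncomputable def keepProb (s : ρ) : ℝ := 1 - #{t | t ≤ s} / Fintype.card (κ × ρ)

lemma dens_imp_not_conflict [DecidableEq κ] (A : Prop) [Decidable A] (c : κ) (s : ρ) :
    (dens {a : κ × ρ | A → ¬ (a.1 = c ∧ a.2 ≤ s)} : ℝ) = if A then keepProb κ s else 1 := by
  have : Nonempty (κ × ρ) := ⟨(c, s)⟩
  split_ifs with hA
  · have hconflict : ({a : κ × ρ | A → ¬ (a.1 = c ∧ a.2 ≤ s)} : Finset _) =
        univ \ {c} ×ˢ ({t | t ≤ s} : Finset ρ) := by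
      ext
      simp only [mem_filter_univ, hA, true_imp_iff, mem_sdiff, mem_univ, true_and, mem_product,
        mem_singleton]
    rw [hconflict, nnratCast_dens, cast_card_sdiff (subset_univ _), card_univ, card_product,
      card_singleton, one_mul, sub_div, div_self (Nat.cast_ne_zero.2 Fintype.card_ne_zero),
      keepProb]
  · simp [hA]

lemma keepProb_nonneg (s : ρ) : 0 ≤ keepProb κ s := by
  classical
  rcases isEmpty_or_nonempty κ with _ | ⟨⟨c⟩⟩
  · simp [keepProb]
  · have h := dens_imp_not_conflict True c s
    rw [if_pos trivial] at h
    rw [← h]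
    positivity

variable [DecidableEq κ] [Fintype V] [DecidableEq V] {H : SimpleGraph V} [DecidableRel H.Adj]
  {u w y : V}

lemma le_dens_retains_pair (huw : u ≠ w) (hadj : ¬ H.Adj u w) (c : κ) (s t : ρ) :
    (Fintype.card (κ × ρ) : ℝ)⁻¹ ^ 2 * (keepProb κ s ^ H.degree u * keepProb κ t ^ H.degree w) ≤
      dens {x : V → κ × ρ | x u = (c, s) ∧ x w = (c, t) ∧ Retains H x u ∧ Retains H x w} := by
  let φ (z : V) (a : κ × ρ) : Prop := (z = u → a = (c, s)) ∧ (z = w → a = (c, t)) ∧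
    (H.Adj u z → ¬ (a.1 = c ∧ a.2 ≤ s)) ∧ (H.Adj w z → ¬ (a.1 = c ∧ a.2 ≤ t))
  have hevent (x : V → κ × ρ) : (x u = (c, s) ∧ x w = (c, t) ∧ Retains H x u ∧ Retains H x w) ↔
      ∀ z, φ z (x z) := by
    simp +contextual only [φ, forall_and, forall_eq, Retains, and_congr_right_iff, implies_true]
  simp only [hevent]
  rw [dens_filter_forall φ, NNRat.cast_prod]
  set N : ℝ := ↑(Fintype.card (κ × ρ))
  calc _ = ∏ z, ((if z = u then N⁻¹ else 1) * (if z = w then N⁻¹ else 1) *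
        ((if H.Adj u z then keepProb κ s else 1) * if H.Adj w z then keepProb κ t else 1)) := by
        simp only [prod_mul_distrib, prod_ite_adj, prod_ite_eq', mem_univ, if_true, sq]
    _ ≤ ∏ z, (dens {a | φ z a} : ℝ) := by
        have hs := keepProb_nonneg (κ := κ) s
        have ht := keepProb_nonneg (κ := κ) t
        refine prod_le_prod (fun z _ => by positivity) fun z _ => ?_
        rcases eq_or_ne z u with rfl | hzu
        · simp [φ, huw, H.adj_comm w, hadj, filter_eq', N]
        rcases eq_or_ne z w with rfl | hzw
        · simp [φ, hzu, hadj, filter_eq', N]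
        simp only [φ, hzu, hzw, false_imp_iff, true_and, if_false, one_mul, filter_and,
          ← dens_imp_not_conflict _ c]
        refine dens_mul_dens_le_dens_inter ?_
        by_cases hu : H.Adj u z
        · by_cases hw : H.Adj w z
          · simp only [hu, hw, true_imp_iff]
            exact (le_total t s).imp
              (fun h => monotone_filter_right _ fun a _ ha hat => ha ⟨hat.1, hat.2.trans h⟩)
              (fun h => monotone_filter_right _ fun a _ ha has => ha ⟨has.1, has.2.trans h⟩)
          · exact .inl fun a _ => by simp [hw]
        · exact .inr fun a _ => by simp [hu]

lemma dens_retains_triple (huw : u ≠ w) (huy : u ≠ y) (hwy : w ≠ y) (hadjw : ¬ H.Adj u w)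
    (hadjy : ¬ H.Adj u y) (c : κ) (s : ρ) (a b : κ × ρ) :
    (dens {x : V → κ × ρ | x u = (c, s) ∧ x w = a ∧ x y = b ∧ Retains H x u} : ℝ) =
      (Fintype.card (κ × ρ) : ℝ)⁻¹ ^ 3 * keepProb κ s ^ H.degree u := by
  let φ (z : V) (a' : κ × ρ) : Prop := (z = u → a' = (c, s)) ∧ (z = w → a' = a) ∧
    (z = y → a' = b) ∧ (H.Adj u z → ¬ (a'.1 = c ∧ a'.2 ≤ s))
  have hevent (x : V → κ × ρ) : (x u = (c, s) ∧ x w = a ∧ x y = b ∧ Retains H x u) ↔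
      ∀ z, φ z (x z) := by
    simp +contextual only [φ, forall_and, forall_eq, Retains, and_congr_right_iff, implies_true]
  simp only [hevent]
  rw [dens_filter_forall φ, NNRat.cast_prod]
  set N : ℝ := ↑(Fintype.card (κ × ρ))
  calc ∏ z, (dens {a | φ z a} : ℝ)
      = ∏ z, ((if z = u then N⁻¹ else 1) * (if z = w then N⁻¹ else 1) *
        (if z = y then N⁻¹ else 1) * if H.Adj u z then keepProb κ s else 1) := by
        refine prod_congr rfl fun z _ => ?_
        rcases eq_or_ne z u with rfl | hzu
        · simp [φ, huw, huy, filter_eq', N]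
        rcases eq_or_ne z w with rfl | hzw
        · simp [φ, hzu, hadjw, hwy, filter_eq', N]
        rcases eq_or_ne z y with rfl | hzy
        · simp [φ, hzu, hzw, hadjy, filter_eq', N]
        simp only [φ, hzu, hzw, hzy, false_imp_iff, true_and, if_false, one_mul,
          dens_imp_not_conflict _ c]
    _ = N⁻¹ ^ 3 * keepProb κ s ^ H.degree u := by
        simp only [prod_mul_distrib, prod_ite_adj, prod_ite_eq', mem_univ, if_true, pow_succ,
          pow_zero, one_mul]

end RetentionProbabilities

section ExpectedSavings

variable {V κ ρ : Type*} [Fintype V] [DecidableEq V] [Fintype κ] [DecidableEq κ] [Fintype ρ]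
  [LinearOrder ρ] {H : SimpleGraph V} [DecidableRel H.Adj] {u w y : V} {r : ℕ}

lemma le_dens_retains_same_color (hr : H.IsRegularOfDegree r) (huw : u ≠ w)
    (hadj : ¬ H.Adj u w) :
    (𝔼 s : ρ, keepProb κ s ^ r) ^ 2 / Fintype.card κ ≤
      dens {x : V → κ × ρ | (x w).1 = (x u).1 ∧ Retains H x u ∧ Retains H x w} := calc
  _ = ∑ b : κ × ρ × ρ, (Fintype.card (κ × ρ) : ℝ)⁻¹ ^ 2 *
      (keepProb κ b.2.1 ^ r * keepProb κ b.2.2 ^ r) := by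
    rw [← mul_sum, Fintype.sum_prod_type]
    simp only [sum_const, Fintype.sum_prod_type]
    rw [← sum_mul_sum, nsmul_eq_mul, Fintype.expect_eq_sum_div_card, Fintype.card_prod,
      Nat.cast_mul, card_univ]
    rcases eq_or_ne (Fintype.card κ : ℝ) 0 with h | h
    · simp [h]
    · field_simp
  _ ≤ ∑ b : κ × ρ × ρ, (dens {x : V → κ × ρ | ((x w).1 = (x u).1 ∧ Retains H x u ∧
      Retains H x w) ∧ ((x u).1, (x u).2, (x w).2) = b} : ℝ) := by
    refine sum_le_sum fun ⟨c, s, t⟩ _ => ?_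
    have hpair := le_dens_retains_pair huw hadj c s t
    rw [hr.degree_eq, hr.degree_eq] at hpair
    refine hpair.trans (NNRat.cast_le.2 (dens_le_dens (monotone_filter_right _ ?_)))
    rintro x - ⟨hu, hw, hretu, hretw⟩
    exact ⟨⟨by rw [hu, hw], hretu, hretw⟩, by rw [hu, hw]⟩
  _ = _ := sum_dens_filter_and_eq _ _

-- All three vertices retain their colour only if the one with the highest priority does.
lemma dens_retains_triple_le (hr : H.IsRegularOfDegree r) (huw : u ≠ w ∧ ¬ H.Adj u w)
    (huy : u ≠ y ∧ ¬ H.Adj u y) (hwy : w ≠ y ∧ ¬ H.Adj w y) (c : κ) (s t q : ρ) :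
    (dens {x : V → κ × ρ | x u = (c, s) ∧ x w = (c, t) ∧ x y = (c, q) ∧
        Retains H x u ∧ Retains H x w ∧ Retains H x y} : ℝ) ≤
      (Fintype.card (κ × ρ) : ℝ)⁻¹ ^ 3 * keepProb κ (max s (max t q)) ^ r := by
  have hmax : max s (max t q) = s ∨ max s (max t q) = t ∨ max s (max t q) = q := by
    rcases max_choice s (max t q) with h | h
    · exact .inl h
    · rw [h]
      exact .inr (max_choice t q)
  rcases hmax with h | h | h <;> rw [h]
  · rw [← hr.degree_eq u, ← dens_retains_triple huw.1 huy.1 hwy.1 huw.2 huy.2 c s (c, t) (c, q)]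
    refine NNRat.cast_le.2 (dens_le_dens (monotone_filter_right _ fun x _ hx => ?_))
    exact ⟨hx.1, hx.2.1, hx.2.2.1, hx.2.2.2.1⟩
  · rw [← hr.degree_eq w, ← dens_retains_triple huw.1.symm hwy.1 huy.1
      (fun h => huw.2 h.symm) hwy.2 c t (c, s) (c, q)]
    refine NNRat.cast_le.2 (dens_le_dens (monotone_filter_right _ fun x _ hx => ?_))
    exact ⟨hx.2.1, hx.1, hx.2.2.1, hx.2.2.2.2.1⟩
  · rw [← hr.degree_eq y, ← dens_retains_triple huy.1.symm hwy.1.symm huw.1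
      (fun h => huy.2 h.symm) (fun h => hwy.2 h.symm) c q (c, s) (c, t)]
    refine NNRat.cast_le.2 (dens_le_dens (monotone_filter_right _ fun x _ hx => ?_))
    exact ⟨hx.2.2.1, hx.1, hx.2.1, hx.2.2.2.2.2⟩

lemma dens_retains_same_color_triple_le (hr : H.IsRegularOfDegree r)
    (huw : u ≠ w ∧ ¬ H.Adj u w) (huy : u ≠ y ∧ ¬ H.Adj u y) (hwy : w ≠ y ∧ ¬ H.Adj w y) :
    (dens {x : V → κ × ρ | (x w).1 = (x u).1 ∧ (x y).1 = (x u).1 ∧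
        Retains H x u ∧ Retains H x w ∧ Retains H x y} : ℝ) ≤
      (𝔼 p : ρ × ρ × ρ, keepProb κ (max p.1 (max p.2.1 p.2.2)) ^ r) / Fintype.card κ ^ 2 := calc
  _ = ∑ b : κ × ρ × ρ × ρ, (dens {x : V → κ × ρ | ((x w).1 = (x u).1 ∧ (x y).1 = (x u).1 ∧
      Retains H x u ∧ Retains H x w ∧ Retains H x y) ∧
        ((x u).1, (x u).2, (x w).2, (x y).2) = b} : ℝ) := (sum_dens_filter_and_eq _ _).symm
  _ ≤ ∑ b : κ × ρ × ρ × ρ, (Fintype.card (κ × ρ) : ℝ)⁻¹ ^ 3 *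
      keepProb κ (max b.2.1 (max b.2.2.1 b.2.2.2)) ^ r := by
    refine sum_le_sum fun ⟨c, s, t, q⟩ _ =>
      le_trans (NNRat.cast_le.2 (dens_le_dens (monotone_filter_right _ ?_)))
        (dens_retains_triple_le hr huw huy hwy c s t q)
    rintro x - ⟨⟨hw, hy, hret⟩, hx⟩
    obtain ⟨rfl, rfl, rfl, rfl⟩ : (x u).1 = c ∧ (x u).2 = s ∧ (x w).2 = t ∧ (x y).2 = q := by
      simpa only [Prod.mk.injEq] using hx
    exact ⟨rfl, Prod.ext hw rfl, Prod.ext hy rfl, hret⟩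
  _ = _ := by
    rw [← mul_sum, Fintype.sum_prod_type, Fintype.expect_eq_sum_div_card]
    simp only [sum_const, nsmul_eq_mul, card_univ, Fintype.card_prod, Nat.cast_mul]
    rcases eq_or_ne (Fintype.card κ : ℝ) 0 with h | h
    · simp [h]
    · field_simp

lemma expect_card_filter {α β : Type*} [Fintype α] (S : Finset β) (P : β → α → Prop)
    [∀ b, DecidablePred (P b)] :
    𝔼 x, (#{b ∈ S | P b x} : ℝ) = ∑ b ∈ S, (dens {x | P b x} : ℝ) := by
  simp only [dens_filter_eq_expect, ← expect_sum_comm, sum_boole]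

lemma le_expect_savings (hr : H.IsRegularOfDegree r) (v : V) :
    3 * (#(nonadjPairs H v) * ((𝔼 s : ρ, keepProb κ s ^ r) ^ 2 / Fintype.card κ)) -
      #(nonadjTriples H v) * ((𝔼 p : ρ × ρ × ρ, keepProb κ (max p.1 (max p.2.1 p.2.2)) ^ r) /
        Fintype.card κ ^ 2) ≤
    6 * 𝔼 x : V → κ × ρ, (savings H v x : ℝ) := by
  refine le_trans (sub_le_sub (mul_le_mul_of_nonneg_left ?_ zero_le_three) ?_) <| calc
    3 * 𝔼 x : V → κ × ρ, (#{p ∈ nonadjPairs H v |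
        (x p.2).1 = (x p.1).1 ∧ Retains H x p.1 ∧ Retains H x p.2} : ℝ) -
      𝔼 x : V → κ × ρ, (#{p ∈ nonadjTriples H v | (x p.1.2).1 = (x p.1.1).1 ∧
        (x p.2).1 = (x p.1.1).1 ∧ Retains H x p.1.1 ∧ Retains H x p.1.2 ∧ Retains H x p.2} : ℝ)
    _ ≤ _ := by
      rw [mul_expect, mul_expect, ← expect_sub_distrib]
      exact expect_le_expect fun x _ => pairs_sub_triples_le_savings v x
  · rw [expect_card_filter, ← nsmul_eq_mul]
    refine card_nsmul_le_sum _ _ _ fun p hp => ?_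
    obtain ⟨-, hne, hadj⟩ := mem_filter.1 hp
    exact le_dens_retains_same_color hr hne hadj
  · rw [expect_card_filter, ← nsmul_eq_mul]
    refine sum_le_card_nsmul _ _ _ fun p hp => ?_
    obtain ⟨-, huw, huy, hwy⟩ := mem_filter.1 hp
    exact dens_retains_same_color_triple_le hr huw huy hwy

end ExpectedSavings

section Numerics

lemma card_filter_max_eq {n : ℕ} (k : Fin n) :
    (#{p : Fin n × Fin n × Fin n | max p.1 (max p.2.1 p.2.2) = k} : ℝ) =
      ((k : ℝ) + 1) ^ 3 - (k : ℝ) ^ 3 := by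
  have hsdiff : ({p | max p.1 (max p.2.1 p.2.2) = k} : Finset (Fin n × Fin n × Fin n)) =
      (Iic k ×ˢ Iic k ×ˢ Iic k) \ (Iio k ×ˢ Iio k ×ˢ Iio k) := by
    ext p
    simp only [mem_filter, mem_univ, true_and, mem_sdiff, mem_product, mem_Iic, mem_Iio,
      ← max_lt_iff, ← max_le_iff, not_lt]
    exact le_antisymm_iff
  have hsub : Iio k ×ˢ Iio k ×ˢ Iio k ⊆ Iic k ×ˢ Iic k ×ˢ Iic k :=
    product_subset_product Iio_subset_Iic_self
      (product_subset_product Iio_subset_Iic_self Iio_subset_Iic_self)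
  rw [hsdiff, cast_card_sdiff hsub]
  simp only [card_product, Fin.card_Iic, Fin.card_Iio]
  push_cast
  ring

lemma expect_max {n : ℕ} (g : Fin n → ℝ) :
    𝔼 p : Fin n × Fin n × Fin n, g (max p.1 (max p.2.1 p.2.2)) =
      (∑ k : Fin n, (((k : ℝ) + 1) ^ 3 - (k : ℝ) ^ 3) * g k) / n ^ 3 := by
  have hcard : (Fintype.card (Fin n × Fin n × Fin n) : ℝ) = n ^ 3 := by
    simp only [Fintype.card_prod, Fintype.card_fin]
    push_cast
    ring
  rw [Fintype.expect_eq_sum_div_card, hcard,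
    ← sum_fiberwise univ fun p : Fin n × Fin n × Fin n => max p.1 (max p.2.1 p.2.2)]
  congr 1
  refine sum_congr rfl fun k _ => ?_
  rw [sum_congr rfl fun p hp => by rw [(mem_filter.1 hp).2], sum_const, nsmul_eq_mul,
    card_filter_max_eq]

lemma keepProb_fin (C m : ℕ) (k : Fin m) :
    keepProb (Fin C) k = 1 - ((k : ℝ) + 1) / (C * m) := by
  have hcard : #{t | t ≤ k} = (k : ℕ) + 1 := by
    rw [← Fin.card_Iic]
    congr 1
    ext
    simp
  rw [keepProb, hcard]
  simp

lemma keepProb_pow_le {C r : ℕ} (hC : 0 < C) (hCr : (C : ℝ) ≤ 0.965 * r) (k : Fin 20) :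
    keepProb (Fin C) k ^ r ≤ 0.94951 ^ ((k : ℕ) + 1) := by
  have : NeZero C := ⟨hC.ne'⟩
  have hexp : Real.exp (-(1 / 19.3)) ≤ 0.94951 := by
    rw [Real.exp_neg, inv_le_comm₀ (Real.exp_pos _) (by norm_num)]
    refine le_trans ?_ (Real.sum_le_exp_of_nonneg (by norm_num) 4)
    norm_num [sum_range_succ, Nat.factorial]
  calc keepProb (Fin C) k ^ r ≤ Real.exp (-(((k : ℝ) + 1) / (C * 20))) ^ r := by
        refine pow_le_pow_left₀ (keepProb_nonneg k) ?_ r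
        rw [keepProb_fin]
        exact_mod_cast Real.one_sub_le_exp_neg _
    _ = Real.exp (-(r / (C * 20))) ^ ((k : ℕ) + 1) := by
        rw [← Real.exp_nat_mul, ← Real.exp_nat_mul]
        congr 1
        push_cast
        ring
    _ ≤ Real.exp (-(1 / 19.3)) ^ ((k : ℕ) + 1) := by
        refine pow_le_pow_left₀ (Real.exp_pos _).le (Real.exp_le_exp.2 (neg_le_neg ?_)) _
        rw [div_le_div_iff₀ (by norm_num) (by positivity)]
        linarith
    _ ≤ _ := by gcongr

lemma le_keepProb_pow {C r : ℕ} (hC : 1 < C) (hCr : (r : ℝ) ≤ 1.04 * (C - 1)) (k : Fin 20) :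
    0.94932 ^ ((k : ℕ) + 1) ≤ keepProb (Fin C) k ^ r := by
  have hC' : (1 : ℝ) < C := by exact_mod_cast hC
  have hk : (k : ℝ) + 1 ≤ 20 := by exact_mod_cast k.isLt
  have hpos : 0 < (C : ℝ) * 20 - (k + 1) := by linarith
  have hkeep : 0 < 1 - ((k : ℝ) + 1) / (C * 20) := by
    rw [sub_pos, div_lt_one (by linarith)]
    linarith
  have hexp : 0.94932 ≤ Real.exp (-0.052) := by
    rw [Real.exp_neg, le_inv_comm₀ (by norm_num) (Real.exp_pos _)]
    refine (Real.exp_bound' (x := 0.052) (by norm_num) (by norm_num) (n := 4)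
      (by norm_num)).trans ?_
    norm_num [sum_range_succ, Nat.factorial]
  calc (0.94932 : ℝ) ^ ((k : ℕ) + 1) ≤ Real.exp (-0.052) ^ ((k : ℕ) + 1) := by gcongr
    _ = Real.exp (-(0.052 * (k + 1))) := by
        rw [← Real.exp_nat_mul]
        congr 1
        push_cast
        ring
    _ ≤ Real.exp (-(r * ((k + 1) / (C * 20 - (k + 1))))) := by
        rw [Real.exp_le_exp, neg_le_neg_iff, ← mul_div_assoc, div_le_iff₀ hpos]
        have := mul_le_mul_of_nonneg_right hCr (by positivity : (0 : ℝ) ≤ k + 1)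
        nlinarith
    _ = Real.exp (-((k + 1) / (C * 20 - (k + 1)))) ^ r := by
        rw [← Real.exp_nat_mul]
        congr 1
        ring
    _ ≤ keepProb (Fin C) k ^ r := by
        rw [keepProb_fin]
        push_cast
        gcongr
        rw [← Real.le_log_iff_exp_le hkeep]
        refine le_trans (le_of_eq ?_) (Real.one_sub_inv_le_log_of_pos hkeep)
        field_simp
        ring

lemma le_expect_keepProb_pow {C r : ℕ} (hC : 1 < C) (hCr : (r : ℝ) ≤ 1.04 * (C - 1)) :
    0.6054 ≤ 𝔼 s : Fin 20, keepProb (Fin C) s ^ r := by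
  refine le_trans ?_ (expect_le_expect fun s _ => le_keepProb_pow hC hCr s)
  rw [Fintype.expect_eq_sum_div_card,
    Fin.sum_univ_eq_sum_range (fun k => (0.94932 : ℝ) ^ (k + 1))]
  norm_num [sum_range_succ]

lemma expect_keepProb_max_pow_le {C r : ℕ} (hC : 0 < C) (hCr : (C : ℝ) ≤ 0.965 * r) :
    𝔼 p : Fin 20 × Fin 20 × Fin 20, keepProb (Fin C) (max p.1 (max p.2.1 p.2.2)) ^ r ≤ 0.4582 := by
  refine (expect_le_expect fun p _ => keepProb_pow_le hC hCr _).trans ?_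
  rw [expect_max fun k : Fin 20 => (0.94951 : ℝ) ^ ((k : ℕ) + 1),
    Fin.sum_univ_eq_sum_range fun k => (((k : ℝ) + 1) ^ 3 - (k : ℝ) ^ 3) * 0.94951 ^ (k + 1)]
  norm_num [sum_range_succ]

lemma le_sq_sub_cube {s t : ℝ} (hs : 0.4988 ≤ s) (hs' : s ≤ 1) (ht : 1 / 0.965 ≤ t)
    (ht' : t ≤ 1.04) :
    6 * 0.0365 ≤ 3 * (s ^ 2 * t) * 0.6054 ^ 2 - s ^ 3 * t ^ 2 * 0.4582 := by
  have hs0 : 0 ≤ s := le_trans (by norm_num) hs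
  have : 0 ≤ t := le_trans (by norm_num) ht
  have hfactor : 0 ≤ (s - 0.4988) *
      ((s + 0.4988) * (1.139 - 0.4957 * (s + 0.4988)) + 0.4957 * (s * 0.4988)) :=
    mul_nonneg (by linarith) (add_nonneg (mul_nonneg (by linarith) (by linarith)) (by linarith))
  calc 6 * 0.0365 ≤ 0.4988 ^ 2 * 1.139 - 0.4988 ^ 3 * (0.4957 : ℝ) := by norm_num
    _ ≤ s ^ 2 * 1.139 - s ^ 3 * 0.4957 := by linear_combination hfactor
    _ ≤ 3 * (s ^ 2 * (1 / 0.965)) * 0.6054 ^ 2 - s ^ 3 * 1.04 ^ 2 * 0.4582 := by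
        linarith [pow_nonneg hs0 2, pow_nonneg hs0 3]
    _ ≤ 3 * (s ^ 2 * t) * 0.6054 ^ 2 - s ^ 3 * t ^ 2 * 0.4582 := by gcongr

end Numerics

section SparseRegular

variable {V : Type*} [Fintype V] [DecidableEq V] {H : SimpleGraph V} [DecidableRel H.Adj] {r : ℕ}

variable (H) in
/-- The ordered pairs of adjacent neighbours of `v`, so that every edge inside the neighbourhood
of `v` counts twice. -/
def adjPairs (v : V) : Finset (V × V) :=
  {p ∈ H.neighborFinset v ×ˢ H.neighborFinset v | H.Adj p.1 p.2}

lemma card_nonadjPairs_add_card_adjPairs (v : V) :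
    #(nonadjPairs H v) + #(adjPairs H v) + H.degree v = H.degree v * H.degree v := by
  set N := H.neighborFinset v with hN
  have hdiag : N.diag ⊆ {p ∈ N ×ˢ N | ¬ H.Adj p.1 p.2} := fun p hp => by
    obtain ⟨hp, heq⟩ := mem_diag.1 hp
    simp [← heq, hp]
  have hpairs : nonadjPairs H v = {p ∈ N ×ˢ N | ¬ H.Adj p.1 p.2} \ N.diag := by
    ext p
    simp only [nonadjPairs, ← hN, mem_filter, mem_sdiff, mem_diag, mem_product]
    tauto
  have hadd := card_filter_add_card_filter_not (s := N ×ˢ N) fun p => H.Adj p.1 p.2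
  rw [← card_sdiff_add_card_eq_card hdiag, ← hpairs, card_product, diag_card, hN,
    SimpleGraph.card_neighborFinset_eq_degree] at hadd
  rw [← hadd, adjPairs]
  ring

lemma le_expect_savings_of_le_card_nonadjPairs {C : ℕ} (hr : H.IsRegularOfDegree r) (hC : 1 < C)
    (hCr : (C : ℝ) ≤ 0.965 * r) (hrC : (r : ℝ) ≤ 1.04 * (C - 1)) (v : V)
    (hv : 0.4988 ^ 2 * (r : ℝ) ^ 2 ≤ #(nonadjPairs H v)) :
    0.0365 * (r : ℝ) ≤ 𝔼 x : V → Fin C × Fin 20, (savings H v x : ℝ) := by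
  have : (1 : ℝ) < C := by exact_mod_cast hC
  have hr0 : (0 : ℝ) < r := by linarith
  have hN : (#(nonadjPairs H v) : ℝ) ≤ 1 * (r : ℝ) ^ 2 := by
    have := card_nonadjPairs_add_card_adjPairs (H := H) v
    rw [one_mul, ← hr.degree_eq v, sq]
    exact_mod_cast (by omega : #(nonadjPairs H v) ≤ H.degree v * H.degree v)
  have htriples := card_nonadjTriples_le (H := H) v
  set N : ℝ := ↑(#(nonadjPairs H v))
  obtain ⟨s, hs0, hs⟩ : ∃ s : ℝ, 0 ≤ s ∧ √N = s * r := ⟨√N / r, by positivity, by field_simp⟩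
  have hNs : N = s ^ 2 * (r : ℝ) ^ 2 := by rw [← mul_pow, ← hs, Real.sq_sqrt (Nat.cast_nonneg _)]
  rw [hs, hNs] at htriples
  rw [hNs] at hv hN
  have hs_ge : 0.4988 ≤ s := le_of_sq_le_sq (le_of_mul_le_mul_right hv (by positivity)) hs0
  have hs_le : s ≤ 1 := (sq_le_one_iff₀ hs0).1 (le_of_mul_le_mul_right hN (pow_pos hr0 2))
  have hsavings := le_expect_savings (κ := Fin C) (ρ := Fin 20) hr v
  rw [Fintype.card_fin] at hsavings
  suffices h : 6 * (0.0365 * r) ≤ 6 * 𝔼 x : V → Fin C × Fin 20, (savings H v x : ℝ) by linarith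
  calc 6 * (0.0365 * (r : ℝ)) = 6 * 0.0365 * r := by ring
    _ ≤ (3 * (s ^ 2 * (r / C)) * 0.6054 ^ 2 - s ^ 3 * (r / C) ^ 2 * 0.4582) * r := by
        gcongr
        apply le_sq_sub_cube hs_ge hs_le
        · rw [div_le_div_iff₀ (by norm_num) (by linarith)]
          linarith
        · rw [div_le_iff₀ (by linarith)]
          linarith
    _ = 3 * (N * (0.6054 ^ 2 / C)) - s ^ 2 * r ^ 2 * (s * r) * (0.4582 / C ^ 2) := by
        rw [hNs]
        ring
    _ ≤ _ := by
        refine (sub_le_sub ?_ ?_).trans hsavings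
        · gcongr
          exact le_expect_keepProb_pow hC hrC
        · refine (mul_le_mul_of_nonneg_left ?_ (Nat.cast_nonneg _)).trans
            (mul_le_mul_of_nonneg_right htriples (by positivity))
          gcongr
          exact expect_keepProb_max_pow_le (by omega) hCr

lemma eventually_exp_mul_le {c ε : ℝ} (hc : 0 < c) (hε : 0 < ε) :
    ∀ᶠ r : ℕ in Filter.atTop, Real.exp (-(c * r)) * ((r + r * r) ^ 2 : ℕ) ≤ ε := by
  have htendsto : Filter.Tendsto (fun r : ℕ => Real.exp (-(c * r)) * (4 * (r : ℝ) ^ 4))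
      Filter.atTop (nhds 0) := by
    have h := ((Real.tendsto_pow_mul_exp_neg_atTop_nhds_zero 4).comp
      (tendsto_natCast_atTop_atTop.const_mul_atTop hc)).const_mul (4 * (c⁻¹) ^ 4)
    rw [mul_zero] at h
    refine h.congr fun r => ?_
    simp only [comp_apply]
    field_simp
  filter_upwards [htendsto.eventually_le_const hε] with r hr
  have hpow : (r + r * r) ^ 2 ≤ 4 * r ^ 4 := calc
    (r + r * r) ^ 2 ≤ (r * r + r * r) ^ 2 := by
      gcongr
      exact Nat.le_mul_self r
    _ = 4 * r ^ 4 := by ring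
  refine le_trans ?_ hr
  gcongr
  exact_mod_cast hpow

lemma colorable_of_le_expect_savings {κ ρ : Type*} [Fintype κ] [DecidableEq κ] [Nonempty κ]
    [Fintype ρ] [LinearOrder ρ] [Nonempty ρ] {η : ℝ} (hH : ∀ v, H.degree v ≤ r)
    (hκ : r ≤ 2 * Fintype.card κ) (hη : 0 ≤ η) (hη' : η ≤ 24)
    (hexp : Real.exp (-(η ^ 2 / 192 * r)) * ((r + r * r) ^ 2 : ℕ) ≤ 1 / 4) (hr : 0 < r)
    (hsavings : ∀ v, r + η * r ≤ Fintype.card κ + 𝔼 x : V → κ × ρ, (savings H v x : ℝ)) :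
    H.Colorable (Fintype.card κ) := by
  have hp : Real.exp (-(η ^ 2 / 192 * r)) ≤ 1 / 4 := by
    refine (le_mul_of_one_le_right (Real.exp_pos _).le ?_).trans hexp
    exact_mod_cast Nat.one_le_pow _ _ (by omega)
  obtain ⟨x, hx⟩ := exists_forall_not_of_dependsOn
    (B := fun (v : V) (x : V → κ × ρ) => (savings H v x : ℝ) ≤
      (𝔼 y : V → κ × ρ, (savings H v y : ℝ)) - η * r)
    (T := savingsSupport H) (p := Real.exp (-(η ^ 2 / 192 * r))) (D := (r + r * r) ^ 2)
    (fun v x y h => by simp only [dependsOn_savings H v h]) (Real.exp_pos _).le (by linarith)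
    (dens_savings_le_expect_sub_le hH hκ · hη hη')
    (card_not_disjoint_savingsSupport_le hH) (by linarith)
  refine colorable_of_degree_lt_savings (x := x) fun v => ?_
  have hxv := not_le.1 (hx v)
  have hdeg : (H.degree v : ℝ) ≤ r := by exact_mod_cast hH v
  have : (H.degree v : ℝ) < Fintype.card κ + savings H v x := by linarith [hsavings v]
  exact_mod_cast this

lemma eventually_colorable_of_isRegularOfDegree : ∀ᶠ r : ℕ in Filter.atTop,
    ∀ (V : Type u) [Fintype V] (H : SimpleGraph V) [DecidableRel H.Adj],
    H.IsRegularOfDegree r → (∀ v, (#(adjPairs H v) : ℝ) ≤ 0.751 * (r : ℝ) ^ 2) →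
    H.Colorable ⌊0.965 * (r : ℝ)⌋₊ := by
  filter_upwards [eventually_exp_mul_le (c := 0.001 ^ 2 / 192) (by norm_num)
    (by norm_num : (0 : ℝ) < 1 / 4), Filter.eventually_ge_atTop 10000]
    with r hexp hr V _ H _ hH hadj
  classical
  have hr' : (10000 : ℝ) ≤ r := by exact_mod_cast hr
  set C := ⌊0.965 * (r : ℝ)⌋₊
  have hCr : (C : ℝ) ≤ 0.965 * r := Nat.floor_le (by positivity)
  have hrC : 0.965 * (r : ℝ) < C + 1 := Nat.lt_floor_add_one _
  have hC : (1 : ℝ) < C := by linarith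
  rw [Nat.one_lt_cast] at hC
  have : NeZero C := ⟨by omega⟩
  have hE (v : V) : 0.0365 * (r : ℝ) ≤ 𝔼 x : V → Fin C × Fin 20, (savings H v x : ℝ) := by
    have hpairs : (#(nonadjPairs H v) : ℝ) + #(adjPairs H v) + r = r * r := by
      exact_mod_cast hH.degree_eq v ▸ card_nonadjPairs_add_card_adjPairs v
    refine le_expect_savings_of_le_card_nonadjPairs hH hC hCr (by linarith) v ?_
    nlinarith [hadj v]
  rw [← Fintype.card_fin C]
  refine colorable_of_le_expect_savings (ρ := Fin 20) (η := 0.001) (fun v => (hH.degree_eq v).le) ?_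
    (by norm_num) (by norm_num) hexp (by omega) fun v => ?_
  · have : (r : ℝ) ≤ 2 * C := by linarith
    rw [Fintype.card_fin]
    exact_mod_cast this
  · rw [Fintype.card_fin]
    linarith [hE v]

end SparseRegular

section Hypercube

variable {ι : Type*} [DecidableEq ι] {x y : ι → ZMod 2} {i : ι}

lemma add_eq_single_iff : x + y = Pi.single i 1 ↔ y = x + Pi.single i 1 := by
  rw [← sub_eq_iff_eq_add', ZModModule.sub_eq_add, add_comm]

lemma ne_of_add_eq_single (h : x + y = Pi.single i 1) : x ≠ y := by
  rintro rfl
  rw [ZModModule.add_self] at h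
  simpa using congrFun h i

lemma sum_add_sum_of_add_eq_single [Fintype ι] (h : x + y = Pi.single i 1) :
    ∑ j, x j + ∑ j, y j = 1 := by
  simp only [← sum_add_distrib, ← Pi.add_apply, h, sum_pi_single', mem_univ, if_true]

-- Each edge of the hypercube changes the parity of the coordinate sum.
lemma hypercube_triangleFree [Finite ι] {z : ι → ZMod 2} {j k : ι} (hxy : x + y = Pi.single i 1)
    (hxz : x + z = Pi.single j 1) : y + z ≠ Pi.single k 1 := fun hyz => by
  cases nonempty_fintype ι
  have hcycle := congrArg₂ (· + ·) (sum_add_sum_of_add_eq_single hxy)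
    (congrArg₂ (· + ·) (sum_add_sum_of_add_eq_single hxz) (sum_add_sum_of_add_eq_single hyz))
  revert hcycle
  generalize ∑ j, x j = a, ∑ j, y j = b, ∑ j, z j = c
  decide +revert

end Hypercube

section Regularization

variable {V : Type*} [Fintype V] (H : SimpleGraph V) [DecidableRel H.Adj] (r : ℕ)

/-- Copies of `H` indexed by the vertices of the hypercube `Fin r → ZMod 2`; each vertex of degree
less than `r` is joined to its copies along as many directions of the cube as its degree falls
short of `r`. -/
def regularization : SimpleGraph (V × (Fin r → ZMod 2)) where
  Adj a b := (H.Adj a.1 b.1 ∧ a.2 = b.2) ∨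
    (a.1 = b.1 ∧ ∃ i : Fin r, (i : ℕ) < r - H.degree a.1 ∧ a.2 + b.2 = Pi.single i 1)
  symm := by
    constructor
    rintro a b (⟨hadj, heq⟩ | ⟨heq, i, hi, hadd⟩)
    · exact Or.inl ⟨hadj.symm, heq.symm⟩
    · exact Or.inr ⟨heq.symm, i, heq ▸ hi, add_comm a.2 b.2 ▸ hadd⟩
  loopless := by
    constructor
    rintro a (⟨hadj, -⟩ | ⟨-, i, -, hadd⟩)
    · exact hadj.ne rfl
    · exact ne_of_add_eq_single hadd rfl

variable {H r} [DecidableRel (regularization H r).Adj]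

lemma neighborFinset_regularization [DecidableEq V] (v : V) (x : Fin r → ZMod 2) :
    (regularization H r).neighborFinset (v, x) = H.neighborFinset v ×ˢ {x} ∪
      {v} ×ˢ ({i : Fin r | (i : ℕ) < r - H.degree v} : Finset _).image (x + Pi.single · 1) := by
  ext ⟨w, y⟩
  rw [SimpleGraph.mem_neighborFinset]
  simp only [regularization, add_eq_single_iff, mem_union, SimpleGraph.mem_neighborFinset,
    mem_product, mem_singleton, mem_image, mem_filter_univ,
    eq_comm (a := y), eq_comm (a := w)]

lemma isRegularOfDegree_regularization (hr : ∀ v, H.degree v ≤ r) :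
    (regularization H r).IsRegularOfDegree r := by
  classical
  rintro ⟨v, x⟩
  have hinj : Injective fun i : Fin r => x + Pi.single i (1 : ZMod 2) := fun i j h => by
    by_contra hne
    simpa [hne] using congrFun (add_left_cancel h) i
  rw [← SimpleGraph.card_neighborFinset_eq_degree, neighborFinset_regularization,
    card_union_of_disjoint, card_product, card_product, card_image_of_injective _ hinj,
    card_singleton, card_singleton, mul_one, one_mul, SimpleGraph.card_neighborFinset_eq_degree,
    Fin.card_filter_val_lt]
  · have := hr v
    omega
  · refine disjoint_product.2 (Or.inl ?_)
    simp

lemma card_adjPairs_regularization_le (v : V) (x : Fin r → ZMod 2) :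
    #(adjPairs (regularization H r) (v, x)) ≤ #(adjPairs H v) := by
  classical
  refine (card_le_card fun p hp => ?_).trans
    (card_image_le (f := fun p : V × V => ((p.1, x), (p.2, x))))
  obtain ⟨⟨a, y⟩, b, z⟩ := p
  simp only [adjPairs, mem_filter, mem_product, SimpleGraph.mem_neighborFinset] at hp
  simp only [adjPairs, mem_image, mem_filter, mem_product, SimpleGraph.mem_neighborFinset]
  obtain ⟨⟨⟨hva, hxy⟩ | ⟨hva, i, -, hxy⟩, ⟨hvb, hxz⟩ | ⟨hvb, j, -, hxz⟩⟩,
    ⟨hab, hyz⟩ | ⟨hab, k, -, hyz⟩⟩ := hp <;> dsimp only at hva hxy hvb hxz hab hyz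
  · exact ⟨(a, b), ⟨⟨hva, hvb⟩, hab⟩, by simp [← hxy, ← hxz]⟩
  · exact absurd (hxy.symm.trans hxz) (ne_of_add_eq_single hyz)
  · exact absurd (hxy.trans hyz) (ne_of_add_eq_single hxz)
  · exact absurd (hvb.trans hab.symm) hva.ne
  · exact absurd (hxz.trans hyz.symm) (ne_of_add_eq_single hxy)
  · exact absurd (hva.trans hab) hvb.ne
  · exact absurd (hva.symm.trans hvb) hab.ne
  · exact absurd hyz (hypercube_triangleFree hxy hxz)

end Regularization

lemma eventually_colorable_of_degree_le : ∀ᶠ r : ℕ in Filter.atTop,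
    ∀ (V : Type u) [Fintype V] (H : SimpleGraph V) [DecidableRel H.Adj],
    (∀ v, H.degree v ≤ r) → (∀ v, (#(adjPairs H v) : ℝ) ≤ 0.751 * (r : ℝ) ^ 2) →
    H.Colorable ⌊0.965 * (r : ℝ)⌋₊ := by
  classical
  filter_upwards [eventually_colorable_of_isRegularOfDegree] with r hr V _ H _ hdeg hadj
  have hregular := hr _ (regularization H r) (isRegularOfDegree_regularization hdeg) fun a =>
    (Nat.cast_le.2 (card_adjPairs_regularization_le a.1 a.2)).trans (hadj a.1)
  let copy : H →g regularization H r :=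
    ⟨fun v => (v, 0), fun {_ _} hadj => Or.inl ⟨hadj, rfl⟩⟩
  exact hregular.of_hom copy

section LinkCount

variable {V : Type*}

section Weights

variable [DecidableEq V] {a : V → V → ℝ} {A : Finset V}

/-- The weights `a` restricted to the ordered pairs with at least one end in `A`. -/
def meeting (A : Finset V) (a : V → V → ℝ) (x y : V) : ℝ := if x ∈ A ∨ y ∈ A then a x y else 0

/-- The weights `a` restricted to the ordered pairs leading from `A` to its complement. -/
def crossing (A : Finset V) (a : V → V → ℝ) (x y : V) : ℝ := if x ∈ A ∧ y ∉ A then a x y else 0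

/-- The number of links between the ordered pairs `p` and `q`: coincidences of ends of `p` with
ends of `q`, and edges of the weighted graph `a` joining them. Each of the two ways in which `p`
and `q` can be opposite sides of a 4-cycle is discounted once. -/
def linkWeight (a : V → V → ℝ) (p q : V × V) : ℝ :=
  ((if p.1 = q.1 then 1 else 0) + (if p.1 = q.2 then 1 else 0) +
    (if p.2 = q.1 then 1 else 0) + (if p.2 = q.2 then 1 else 0)) +
  (a p.1 q.1 + a p.1 q.2 + a p.2 q.1 + a p.2 q.2) -
  (a p.1 q.1 * a p.2 q.2 + a p.1 q.2 * a p.2 q.1)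

lemma meeting_nonneg (ha : ∀ x y, 0 ≤ a x y) (x y : V) : 0 ≤ meeting A a x y := by
  unfold meeting; split_ifs <;> simp [ha]

lemma meeting_le (ha : ∀ x y, 0 ≤ a x y) (x y : V) : meeting A a x y ≤ a x y := by
  unfold meeting; split_ifs <;> simp [ha]

lemma meeting_symm (ha : ∀ x y, a x y = a y x) (x y : V) :
    meeting A a x y = meeting A a y x := by
  simp only [meeting, ha x y, or_comm]

lemma crossing_nonneg (ha : ∀ x y, 0 ≤ a x y) (x y : V) : 0 ≤ crossing A a x y := by
  unfold crossing; split_ifs <;> simp [ha]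

lemma crossing_le (ha : ∀ x y, 0 ≤ a x y) (x y : V) : crossing A a x y ≤ a x y := by
  unfold crossing; split_ifs <;> simp [ha]

lemma crossing_of_notMem_left {x : V} (hx : x ∉ A) (y : V) : crossing A a x y = 0 :=
  if_neg fun h => hx h.1

lemma crossing_of_mem_right {y : V} (hy : y ∈ A) (x : V) : crossing A a x y = 0 :=
  if_neg fun h => h.2 hy

lemma crossing_mul_crossing_le (ha : ∀ x y, 0 ≤ a x y) (hsymm : ∀ x y, a x y = a y x)
    (x y x' y' : V) :
    crossing A a x y * crossing A a y' y * (crossing A a x x' * crossing A a y' x') ≤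
      meeting A a x y * meeting A a x' y' * (a x x' * a y y') := by
  have hnonneg : 0 ≤ meeting A a x y * meeting A a x' y' * (a x x' * a y y') :=
    mul_nonneg (mul_nonneg (meeting_nonneg ha _ _) (meeting_nonneg ha _ _))
      (mul_nonneg (ha _ _) (ha _ _))
  by_cases hx : x ∈ A
  · by_cases hy' : y' ∈ A
    · calc crossing A a x y * crossing A a y' y * (crossing A a x x' * crossing A a y' x')
          ≤ a x y * a y' y * (a x x' * a y' x') := by
            gcongr <;> simp only [crossing_nonneg, crossing_le, ha, mul_nonneg, implies_true]
        _ = meeting A a x y * meeting A a x' y' * (a x x' * a y y') := by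
          rw [meeting, meeting, if_pos (Or.inl hx), if_pos (Or.inr hy'), hsymm x' y', hsymm y y']
          ring
    · simpa only [crossing_of_notMem_left hy', mul_zero, zero_mul] using hnonneg
  · simpa only [crossing_of_notMem_left hx, zero_mul] using hnonneg

/-- A 4-cycle alternating between `A` and its complement can be read off from two opposite sides,
in two ways: the first end of the first side lies in `A`, or the second one does. -/
lemma crossing_mul_crossing_add_le (ha : ∀ x y, 0 ≤ a x y) (hsymm : ∀ x y, a x y = a y x)
    (x y x' y' : V) :
    crossing A a x y * crossing A a y' y * (crossing A a x x' * crossing A a y' x') +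
      crossing A a y x * crossing A a x' x * (crossing A a y y' * crossing A a x' y') ≤
      meeting A a x y * meeting A a x' y' * (a x x' * a y y') := by
  by_cases hx : x ∈ A
  · rw [crossing_of_mem_right hx y, zero_mul, zero_mul, add_zero]
    exact crossing_mul_crossing_le ha hsymm x y x' y'
  · rw [crossing_of_notMem_left hx y, zero_mul, zero_mul, zero_add, meeting_symm hsymm x y,
      meeting_symm hsymm x' y', mul_comm (a x x')]
    exact crossing_mul_crossing_le ha hsymm y x y' x'

end Weights

variable [Fintype V]

lemma sum_sum_mul_fst_fst (d k : V → V → ℝ) :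
    ∑ p : V × V, ∑ q : V × V, d p.1 p.2 * d q.1 q.2 * k p.1 q.1 =
      ∑ x, ∑ z, k x z * (∑ y, d x y) * ∑ y, d z y := by
  simp only [Fintype.sum_prod_type]
  refine sum_congr rfl fun x _ => ?_
  rw [sum_comm]
  refine sum_congr rfl fun z _ => ?_
  rw [mul_assoc, sum_mul_sum, mul_sum]
  refine sum_congr rfl fun y _ => ?_
  rw [mul_sum]
  exact sum_congr rfl fun w _ => by ring

lemma sum_sum_swap_left (F : V × V → V × V → ℝ) :
    ∑ p : V × V, ∑ q : V × V, F p.swap q = ∑ p : V × V, ∑ q : V × V, F p q :=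
  (Equiv.prodComm V V).sum_comp fun p => ∑ q, F p q

lemma sum_sum_swap_right (F : V × V → V × V → ℝ) :
    ∑ p : V × V, ∑ q : V × V, F p q.swap = ∑ p : V × V, ∑ q : V × V, F p q :=
  sum_congr rfl fun p _ => (Equiv.prodComm V V).sum_comp fun q => F p q

lemma sum_sum_mul_ends {d : V → V → ℝ} (hd : ∀ x y, d x y = d y x) (k : V → V → ℝ) :
    ∑ p : V × V, ∑ q : V × V, d p.1 p.2 * d q.1 q.2 *
        (k p.1 q.1 + k p.1 q.2 + k p.2 q.1 + k p.2 q.2) =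
      4 * ∑ x, ∑ z, k x z * (∑ y, d x y) * ∑ y, d z y := by
  have hff := sum_sum_mul_fst_fst d k
  have hsf := sum_sum_swap_left fun p q => d p.1 p.2 * d q.1 q.2 * k p.1 q.1
  have hfs := sum_sum_swap_right fun p q => d p.1 p.2 * d q.1 q.2 * k p.1 q.1
  have hss := sum_sum_swap_left fun p q => d p.1 p.2 * d q.1 q.2 * k p.1 q.2
  simp only [Prod.fst_swap, Prod.snd_swap, fun p : V × V => hd p.2 p.1] at hsf hfs hss
  simp only [mul_add, sum_add_distrib]
  linarith

/-- The weighted number of closed walks of length 4, starting on the row side, in the bipartite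
graph with biadjacency weights `t`. -/
def fourCycleWeight (t : V → V → ℝ) : ℝ := ∑ x, ∑ z, (∑ y, t x y * t z y) ^ 2

lemma fourCycleWeight_eq_sum_prod (t : V → V → ℝ) :
    fourCycleWeight t = ∑ p : V × V, ∑ q : V × V,
      t p.1 p.2 * t q.2 p.2 * (t p.1 q.1 * t q.2 q.1) := by
  simp only [fourCycleWeight, Fintype.sum_prod_type]
  refine sum_congr rfl fun x _ => ?_
  calc ∑ z, (∑ y, t x y * t z y) ^ 2
      = ∑ z, ∑ y, ∑ x', t x y * t z y * (t x x' * t z x') :=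
        sum_congr rfl fun z _ => by rw [sq, sum_mul_sum]
    _ = ∑ y, ∑ z, ∑ x', t x y * t z y * (t x x' * t z x') := sum_comm
    _ = ∑ y, ∑ x', ∑ z, t x y * t z y * (t x x' * t z x') := sum_congr rfl fun y _ => sum_comm

lemma fourCycleWeight_eq_sum_prod_swap (t : V → V → ℝ) :
    fourCycleWeight t = ∑ p : V × V, ∑ q : V × V,
      t p.2 p.1 * t q.1 p.1 * (t p.2 q.2 * t q.1 q.2) := by
  rw [fourCycleWeight_eq_sum_prod,
    ← sum_sum_swap_left fun p q => t p.1 p.2 * t q.2 p.2 * (t p.1 q.1 * t q.2 q.1),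
    ← sum_sum_swap_right]
  rfl

lemma sum_sq_sum_eq_sum_codegree (t : V → V → ℝ) :
    ∑ y, (∑ x, t x y) ^ 2 = ∑ x, ∑ z, ∑ y, t x y * t z y := by
  calc ∑ y, (∑ x, t x y) ^ 2 = ∑ y, ∑ x, ∑ z, t x y * t z y :=
        sum_congr rfl fun y _ => by rw [sq, sum_mul_sum]
    _ = ∑ x, ∑ y, ∑ z, t x y * t z y := sum_comm
    _ = ∑ x, ∑ z, ∑ y, t x y * t z y := sum_congr rfl fun x _ => sum_comm

/-- Summing `D * c - c ^ 2 ≤ D ^ 2 / 4` over the codegrees `c` of the pairs of elements of `A`. -/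
lemma mul_sum_sq_sub_fourCycleWeight_le {A : Finset V} {t : V → V → ℝ}
    (ht : ∀ x ∉ A, ∀ y, t x y = 0) (D : ℝ) :
    D * ∑ y, (∑ x, t x y) ^ 2 - fourCycleWeight t ≤ (#A : ℝ) ^ 2 * D ^ 2 / 4 := by
  set c : V → V → ℝ := fun x z => ∑ y, t x y * t z y with hc
  have hc0 : ∀ x z, ¬(x ∈ A ∧ z ∈ A) → c x z = 0 := fun x z h => sum_eq_zero fun y _ => by
    rcases not_and_or.1 h with h | h <;> simp only [ht _ h, zero_mul, mul_zero]
  calc D * ∑ y, (∑ x, t x y) ^ 2 - fourCycleWeight t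
      = ∑ p : V × V, (D * c p.1 p.2 - c p.1 p.2 ^ 2) := by
        simp only [sum_sq_sum_eq_sum_codegree, fourCycleWeight, Fintype.sum_prod_type,
          sum_sub_distrib, mul_sum, hc]
    _ = ∑ p ∈ A ×ˢ A, (D * c p.1 p.2 - c p.1 p.2 ^ 2) :=
        (sum_subset (subset_univ _) fun p _ hp => by
          rw [hc0 _ _ (mt mem_product.2 hp)]; ring).symm
    _ ≤ ∑ _p ∈ A ×ˢ A, D ^ 2 / 4 :=
        sum_le_sum fun p _ => by linarith [sq_nonneg (c p.1 p.2 - D / 2)]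
    _ = (#A : ℝ) ^ 2 * D ^ 2 / 4 := by
        rw [sum_const, card_product, nsmul_eq_mul, Nat.cast_mul]; ring

/-- The Schur test. -/
lemma sum_sum_mul_mul_le {a : V → V → ℝ} {D : ℝ} (ha : ∀ x y, 0 ≤ a x y)
    (hsymm : ∀ x y, a x y = a y x) (hrow : ∀ x, ∑ y, a x y ≤ D) (w : V → ℝ) :
    ∑ x, ∑ z, a x z * w x * w z ≤ D * ∑ x, w x ^ 2 := by
  have hpoint : ∀ x z, a x z * w x * w z ≤ a x z * w x ^ 2 / 2 + a z x * w z ^ 2 / 2 :=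
    fun x z => by
      rw [hsymm z x]
      linarith [mul_nonneg (ha x z) (sq_nonneg (w x - w z))]
  calc ∑ x, ∑ z, a x z * w x * w z
      ≤ ∑ x, ∑ z, (a x z * w x ^ 2 / 2 + a z x * w z ^ 2 / 2) :=
        sum_le_sum fun x _ => sum_le_sum fun z _ => hpoint x z
    _ = ∑ x, ∑ z, a x z * w x ^ 2 := by
        simp only [sum_add_distrib]
        rw [sum_comm (f := fun x z => a z x * w z ^ 2 / 2)]
        simp only [← sum_add_distrib, add_halves]
    _ = ∑ x, (∑ z, a x z) * w x ^ 2 := by simp only [sum_mul]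
    _ ≤ ∑ x, D * w x ^ 2 := by gcongr with x; exact hrow x
    _ = D * ∑ x, w x ^ 2 := (mul_sum ..).symm

variable [DecidableEq V] {a : V → V → ℝ} {D : ℝ} (ha : ∀ x y, 0 ≤ a x y)
  (hsymm : ∀ x y, a x y = a y x)

include ha hsymm

lemma two_mul_fourCycleWeight_le (A : Finset V) :
    2 * fourCycleWeight (crossing A a) ≤ ∑ p : V × V, ∑ q : V × V,
      meeting A a p.1 p.2 * meeting A a q.1 q.2 * (a p.1 q.1 * a p.2 q.2) := by
  rw [two_mul]
  nth_rewrite 1 [fourCycleWeight_eq_sum_prod]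
  rw [fourCycleWeight_eq_sum_prod_swap]
  simp only [← sum_add_distrib]
  exact sum_le_sum fun p _ => sum_le_sum fun q _ =>
    crossing_mul_crossing_add_le ha hsymm p.1 p.2 q.1 q.2

variable (hrow : ∀ x, ∑ y, a x y ≤ D)

include hrow

lemma sum_sq_sum_crossing_le (A : Finset V) :
    ∑ y, (∑ x, crossing A a x y) ^ 2 ≤ #A * D ^ 2 := by
  have hcol0 : ∀ y, 0 ≤ ∑ x, crossing A a x y := fun y => sum_nonneg fun x _ =>
    crossing_nonneg ha x y
  have hcol : ∀ y, ∑ x, crossing A a x y ≤ D := fun y =>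
    (sum_le_sum fun x _ => (crossing_le ha x y).trans (hsymm x y).le).trans (hrow y)
  calc ∑ y, (∑ x, crossing A a x y) ^ 2 ≤ ∑ y, D * ∑ x, crossing A a x y :=
        sum_le_sum fun y _ => by
          rw [sq]; exact mul_le_mul_of_nonneg_right (hcol y) (hcol0 y)
    _ = ∑ x, D * ∑ y, crossing A a x y := by simp only [← mul_sum]; rw [sum_comm]
    _ = ∑ x ∈ A, D * ∑ y, crossing A a x y :=
        (sum_subset (subset_univ _) fun x _ hx => by
          simp only [crossing_of_notMem_left hx, sum_const_zero, mul_zero]).symm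
    _ ≤ ∑ _x ∈ A, D * D := sum_le_sum fun x _ => by
        refine mul_le_mul_of_nonneg_left ?_ ((hcol0 x).trans (hcol x))
        exact (sum_le_sum fun y _ => crossing_le ha x y).trans (hrow x)
    _ = #A * D ^ 2 := by rw [sum_const, nsmul_eq_mul, sq]

lemma sum_sq_sum_meeting_le (A : Finset V) :
    ∑ x, (∑ y, meeting A a x y) ^ 2 ≤ #A * D ^ 2 + ∑ y, (∑ x, crossing A a x y) ^ 2 := by
  have hpoint : ∀ x, (∑ y, meeting A a x y) ^ 2 ≤
      (if x ∈ A then D ^ 2 else 0) + (∑ y, crossing A a y x) ^ 2 := fun x => by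
    have hrow0 : 0 ≤ ∑ y, meeting A a x y := sum_nonneg fun y _ => meeting_nonneg ha x y
    split_ifs with hx
    · refine le_add_of_le_of_nonneg (pow_le_pow_left₀ hrow0 ?_ 2) (sq_nonneg _)
      exact (sum_le_sum fun y _ => meeting_le ha x y).trans (hrow x)
    · rw [zero_add]
      refine pow_le_pow_left₀ hrow0 (sum_le_sum fun y _ => ?_) 2
      simp only [meeting, crossing, hx, false_or, not_false_eq_true, and_true, hsymm x y, le_refl]
  refine (sum_le_sum fun x _ => hpoint x).trans_eq ?_
  rw [sum_add_distrib, sum_ite_mem, univ_inter, sum_const, nsmul_eq_mul]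

/-- Without the discount for 4-cycles the leading term would be `8 * #A * D ^ 3`; the discount
replaces the half of it that comes from crossing pairs by `#A ^ 2 * D ^ 2`. -/
lemma sum_meeting_mul_linkWeight_le (hD : 0 ≤ D) (A : Finset V) :
    ∑ p : V × V, ∑ q : V × V,
        meeting A a p.1 p.2 * meeting A a q.1 q.2 * linkWeight a p q ≤
      4 * (#A * D ^ 3 + (#A : ℝ) ^ 2 * D ^ 2 / 4 + 2 * #A * D ^ 2) := by
  set d := meeting A a
  have hdsymm : ∀ x y, d x y = d y x := meeting_symm hsymm
  set W : ℝ := ∑ y, (∑ x, crossing A a x y) ^ 2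
  have hWle : W ≤ #A * D ^ 2 := sum_sq_sum_crossing_le ha hsymm hrow A
  have hmeeting : ∑ x, (∑ y, d x y) ^ 2 ≤ #A * D ^ 2 + W := sum_sq_sum_meeting_le ha hsymm hrow A
  have hshare : ∑ x, ∑ z, (if x = z then (1 : ℝ) else 0) * (∑ y, d x y) * ∑ y, d z y ≤
      #A * D ^ 2 + W := by
    simpa only [ite_mul, one_mul, zero_mul, sum_ite_eq, mem_univ, if_true, ← sq] using hmeeting
  have hjoin : ∑ x, ∑ z, a x z * (∑ y, d x y) * ∑ y, d z y ≤ D * (#A * D ^ 2 + W) :=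
    (sum_sum_mul_mul_le ha hsymm hrow fun x => ∑ y, d x y).trans (by gcongr)
  have hparallel : 2 * fourCycleWeight (crossing A a) ≤
      ∑ p : V × V, ∑ q : V × V, d p.1 p.2 * d q.1 q.2 * (a p.1 q.1 * a p.2 q.2) :=
    two_mul_fourCycleWeight_le ha hsymm A
  have hcrossed : ∑ p : V × V, ∑ q : V × V, d p.1 p.2 * d q.1 q.2 * (a p.1 q.2 * a p.2 q.1) =
      ∑ p : V × V, ∑ q : V × V, d p.1 p.2 * d q.1 q.2 * (a p.1 q.1 * a p.2 q.2) := by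
    rw [← sum_sum_swap_right fun p q => d p.1 p.2 * d q.1 q.2 * (a p.1 q.1 * a p.2 q.2)]
    simp only [Prod.fst_swap, Prod.snd_swap, fun p : V × V => hdsymm p.2 p.1]
  have hdiscount : D * W - fourCycleWeight (crossing A a) ≤ (#A : ℝ) ^ 2 * D ^ 2 / 4 :=
    mul_sum_sq_sub_fourCycleWeight_le (fun _ hx => crossing_of_notMem_left hx) D
  calc ∑ p : V × V, ∑ q : V × V, d p.1 p.2 * d q.1 q.2 * linkWeight a p q
      = 4 * ∑ x, ∑ z, (if x = z then (1 : ℝ) else 0) * (∑ y, d x y) * ∑ y, d z y +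
        4 * ∑ x, ∑ z, a x z * (∑ y, d x y) * ∑ y, d z y -
        (∑ p : V × V, ∑ q : V × V, d p.1 p.2 * d q.1 q.2 * (a p.1 q.1 * a p.2 q.2) +
          ∑ p : V × V, ∑ q : V × V, d p.1 p.2 * d q.1 q.2 * (a p.1 q.2 * a p.2 q.1)) := by
        simp only [← sum_sum_mul_ends hdsymm, ← sum_add_distrib, ← sum_sub_distrib, ← mul_add,
          ← mul_sub, linkWeight]
    _ ≤ 4 * (#A * D ^ 3 + (#A : ℝ) ^ 2 * D ^ 2 / 4 + 2 * #A * D ^ 2) := by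
        linarith

end LinkCount

section LinkWeight

variable {V : Type*} [DecidableEq V] {a : V → V → ℝ}

lemma linkWeight_swap_left (p q : V × V) : linkWeight a p.swap q = linkWeight a p q := by
  simp only [linkWeight, Prod.fst_swap, Prod.snd_swap]; ring

lemma linkWeight_swap_right (p q : V × V) : linkWeight a p q.swap = linkWeight a p q := by
  simp only [linkWeight, Prod.fst_swap, Prod.snd_swap]; ring

variable (ha0 : ∀ x y, 0 ≤ a x y) (ha1 : ∀ x y, a x y ≤ 1)

include ha0 ha1

lemma ite_add_le_linkWeight (p q : V × V) :
    (if p.1 = q.1 then 1 else 0) + a p.1 q.1 ≤ linkWeight a p q := by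
  have hind : ∀ x y : V, (0 : ℝ) ≤ if x = y then 1 else 0 := fun x y => by
    split_ifs <;> norm_num
  have hparallel : a p.1 q.1 * a p.2 q.2 ≤ a p.2 q.2 := mul_le_of_le_one_left (ha0 _ _) (ha1 _ _)
  have hcrossed : a p.1 q.2 * a p.2 q.1 ≤ a p.1 q.2 := mul_le_of_le_one_right (ha0 _ _) (ha1 _ _)
  unfold linkWeight
  linarith [hind p.1 q.2, hind p.2 q.1, hind p.2 q.2, ha0 p.2 q.1]

lemma linkWeight_nonneg (p q : V × V) : 0 ≤ linkWeight a p q := by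
  refine le_trans (add_nonneg ?_ (ha0 _ _)) (ite_add_le_linkWeight ha0 ha1 p q)
  split_ifs <;> norm_num

lemma one_le_linkWeight {p q : V × V} {x y : V} (hx : x ∈ s(p.1, p.2)) (hy : y ∈ s(q.1, q.2))
    (h : x = y ∨ a x y = 1) : 1 ≤ linkWeight a p q := by
  have hfst : ∀ {p q : V × V}, p.1 = q.1 ∨ a p.1 q.1 = 1 → 1 ≤ linkWeight a p q := fun {p q} h => by
    refine le_trans ?_ (ite_add_le_linkWeight ha0 ha1 p q)
    rcases h with h | h
    · rw [if_pos h]; linarith [ha0 p.1 q.1]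
    · rw [h]; split_ifs <;> norm_num
  rcases Sym2.mem_iff.1 hx with rfl | rfl <;> rcases Sym2.mem_iff.1 hy with rfl | rfl
  · exact hfst h
  · exact linkWeight_swap_right p q ▸ hfst (q := q.swap) h
  · exact linkWeight_swap_left p q ▸ hfst (p := p.swap) h
  · exact linkWeight_swap_left p q ▸ linkWeight_swap_right p.swap q ▸
      hfst (p := p.swap) (q := q.swap) h

end LinkWeight

section LineGraphSquare

variable {V : Type*} {G : SimpleGraph V}

lemma exists_eq_or_adj_of_lineGraphSq_adj {e f : G.edgeSet} (h : (lineGraphSq G).Adj e f) :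
    ∃ x ∈ e.1, ∃ y ∈ f.1, x = y ∨ G.Adj x y := by
  obtain ⟨-, ⟨v, hve, hvf⟩ | ⟨⟨g, hg⟩, ⟨v, hve, hvg⟩, w, hwg, hwf⟩⟩ := h
  · exact ⟨v, hve, v, hvf, Or.inl rfl⟩
  · refine ⟨v, hve, w, hwf, or_iff_not_imp_left.2 fun hvw => ?_⟩
    obtain rfl : g = s(v, w) := (Sym2.mem_and_mem_iff hvw).1 ⟨hvg, hwg⟩
    exact hg

variable [Fintype V]

lemma two_mul_sum_edgeSet_le [DecidableRel G.Adj] {f : V × V → ℝ} {g : G.edgeSet → ℝ}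
    (hf : ∀ p, 0 ≤ f p)
    (hfg : ∀ d : G.Dart, g ⟨d.edge, d.edge_mem⟩ ≤ f d.toProd) : 2 * ∑ e, g e ≤ ∑ p, f p := by
  classical
  have hfiber (e : G.edgeSet) : #{d : G.Dart | (⟨d.edge, d.edge_mem⟩ : G.edgeSet) = e} = 2 := by
    simpa only [Subtype.ext_iff] using G.dart_edge_fiber_card e.1 e.2
  calc 2 * ∑ e, g e
      = ∑ e, ∑ d : G.Dart with (⟨d.edge, d.edge_mem⟩ : G.edgeSet) = e,
          g ⟨d.edge, d.edge_mem⟩ := by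
        rw [mul_sum]
        refine sum_congr rfl fun e _ => ?_
        rw [sum_congr rfl fun d hd => congrArg g (mem_filter.1 hd).2, sum_const, hfiber,
          nsmul_eq_mul, Nat.cast_two]
    _ = ∑ d : G.Dart, g ⟨d.edge, d.edge_mem⟩ := sum_fiberwise _ _ _
    _ ≤ ∑ d : G.Dart, f d.toProd := sum_le_sum fun d _ => hfg d
    _ ≤ ∑ p, f p := by
        rw [← sum_image (f := f) (SimpleGraph.Dart.toProd_injective.injOn)]
        exact sum_le_univ_sum_of_nonneg hf

lemma four_mul_card_le_sum {S : Finset (G.edgeSet × G.edgeSet)} {f : V × V → V × V → ℝ}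
    (hf : ∀ p q, 0 ≤ f p q)
    (hS : ∀ d d' : G.Dart, (⟨d.edge, d.edge_mem⟩, ⟨d'.edge, d'.edge_mem⟩) ∈ S →
      1 ≤ f d.toProd d'.toProd) :
    4 * (#S : ℝ) ≤ ∑ p, ∑ q, f p q := by
  classical
  have hcard : (#S : ℝ) = ∑ e, ∑ e', if (e, e') ∈ S then 1 else 0 := by
    rw [← Fintype.sum_prod_type' fun e e' => if (e, e') ∈ S then (1 : ℝ) else 0, sum_boole,
      filter_univ_mem]
  have htwo : 2 * ∑ e, 2 * ∑ e', (if (e, e') ∈ S then (1 : ℝ) else 0) ≤ ∑ p, ∑ q, f p q :=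
    two_mul_sum_edgeSet_le (fun p => sum_nonneg fun q _ => hf p q) fun d =>
      two_mul_sum_edgeSet_le (hf _) fun d' => by
        split_ifs with h
        exacts [hS d d' h, hf _ _]
  rw [← mul_sum, ← hcard] at htwo
  linarith

section DegreeBound

variable [DecidableRel G.Adj] {D : ℕ} (hD : ∀ v, G.degree v ≤ D)

include hD

lemma exists_card_le_forall_adj_exists_mem (e : G.edgeSet) : ∃ A : Finset V, #A ≤ 2 * D ∧
    ∀ f, (lineGraphSq G).Adj e f → ∃ y ∈ f.1, y ∈ A := by
  classical
  obtain ⟨⟨u, v⟩, huv : G.Adj u v⟩ := e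
  refine ⟨G.neighborFinset u ∪ G.neighborFinset v, ?_, fun f hf => ?_⟩
  · calc #(G.neighborFinset u ∪ G.neighborFinset v) ≤ G.degree u + G.degree v := card_union_le _ _
      _ ≤ 2 * D := by linarith [hD u, hD v]
  · obtain ⟨x, hx, y, hy, hxy⟩ := exists_eq_or_adj_of_lineGraphSq_adj hf
    refine ⟨y, hy, ?_⟩
    simp only [mem_union, SimpleGraph.mem_neighborFinset]
    rcases Sym2.mem_iff.1 hx with rfl | rfl <;> rcases hxy with rfl | h
    exacts [Or.inr huv.symm, Or.inl h, Or.inl huv, Or.inr h]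

variable [DecidableRel (lineGraphSq G).Adj]

lemma degree_lineGraphSq_le (e : G.edgeSet) : (lineGraphSq G).degree e ≤ 2 * D ^ 2 := by
  classical
  obtain ⟨A, hA, hcover⟩ := exists_card_le_forall_adj_exists_mem hD e
  rw [← SimpleGraph.card_neighborFinset_eq_degree, ← card_map ⟨_, Subtype.val_injective⟩]
  calc #(((lineGraphSq G).neighborFinset e).map ⟨_, Subtype.val_injective⟩)
      ≤ #(A.biUnion fun y => G.incidenceFinset y) := card_le_card fun f hf => by
        obtain ⟨f, hef, rfl⟩ := mem_map.1 hf
        obtain ⟨y, hyf, hyA⟩ := hcover f ((SimpleGraph.mem_neighborFinset ..).1 hef)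
        exact mem_biUnion.2 ⟨y, hyA, (SimpleGraph.mem_incidenceFinset ..).2 ⟨f.2, hyf⟩⟩
    _ ≤ #A * D := card_biUnion_le_card_mul _ _ _ fun y _ =>
        (SimpleGraph.card_incidenceFinset_eq_degree ..).trans_le (hD y)
    _ ≤ 2 * D * D := Nat.mul_le_mul_right _ hA
    _ = 2 * D ^ 2 := by ring

lemma card_adjPairs_lineGraphSq_le (e : G.edgeSet) :
    (#(adjPairs (lineGraphSq G) e) : ℝ) ≤ 3 * (D : ℝ) ^ 4 + 4 * (D : ℝ) ^ 3 := by
  classical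
  obtain ⟨A, hA, hcover⟩ := exists_card_le_forall_adj_exists_mem hD e
  set a : V → V → ℝ := fun x y => G.adjMatrix ℝ x y with ha
  have hadj {x y : V} (h : G.Adj x y) : a x y = 1 := by simp [ha, h]
  have ha0 (x y : V) : 0 ≤ a x y := by by_cases h : G.Adj x y <;> simp [ha, h]
  have ha1 (x y : V) : a x y ≤ 1 := by by_cases h : G.Adj x y <;> simp [ha, h]
  have hsymm (x y : V) : a x y = a y x := by simp only [ha, SimpleGraph.adjMatrix_apply, G.adj_comm]
  have hrow (x : V) : ∑ y, a x y ≤ D := by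
    simpa [ha, SimpleGraph.adjMatrix_apply, ← SimpleGraph.neighborFinset_eq_filter] using hD x
  have hmeeting (d : G.Dart) (h : (lineGraphSq G).Adj e ⟨d.edge, d.edge_mem⟩) :
      meeting A a d.fst d.snd = 1 := by
    obtain ⟨y, hy, hyA⟩ := hcover _ h
    rw [meeting, if_pos, hadj d.adj]
    rcases Sym2.mem_iff.1 hy with rfl | rfl
    exacts [Or.inl hyA, Or.inr hyA]
  have hlink (d d' : G.Dart) (h : (⟨d.edge, d.edge_mem⟩, ⟨d'.edge, d'.edge_mem⟩) ∈
      adjPairs (lineGraphSq G) e) : 1 ≤ meeting A a d.fst d.snd * meeting A a d'.fst d'.snd *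
        linkWeight a d.toProd d'.toProd := by
    simp only [adjPairs, mem_filter, mem_product, SimpleGraph.mem_neighborFinset] at h
    obtain ⟨x, hx, y, hy, hxy⟩ := exists_eq_or_adj_of_lineGraphSq_adj h.2
    rw [hmeeting d h.1.1, hmeeting d' h.1.2, one_mul, one_mul]
    exact one_le_linkWeight ha0 ha1 hx hy (hxy.imp_right hadj)
  have hcount : 4 * (#(adjPairs (lineGraphSq G) e) : ℝ) ≤
      4 * (#A * (D : ℝ) ^ 3 + (#A : ℝ) ^ 2 * (D : ℝ) ^ 2 / 4 + 2 * #A * (D : ℝ) ^ 2) :=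
    (four_mul_card_le_sum (fun p q => mul_nonneg (mul_nonneg (meeting_nonneg ha0 _ _)
      (meeting_nonneg ha0 _ _)) (linkWeight_nonneg ha0 ha1 p q)) hlink).trans
      (sum_meeting_mul_linkWeight_le ha0 hsymm hrow D.cast_nonneg A)
  have hA' : (#A : ℝ) ≤ 2 * D := by exact_mod_cast hA
  calc (#(adjPairs (lineGraphSq G) e) : ℝ)
      ≤ #A * (D : ℝ) ^ 3 + (#A : ℝ) ^ 2 * (D : ℝ) ^ 2 / 4 + 2 * #A * (D : ℝ) ^ 2 := by linarith
    _ ≤ 2 * D * (D : ℝ) ^ 3 + (2 * D) ^ 2 * (D : ℝ) ^ 2 / 4 + 2 * (2 * D) * (D : ℝ) ^ 2 := by gcongr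
    _ = 3 * (D : ℝ) ^ 4 + 4 * (D : ℝ) ^ 3 := by ring

end DegreeBound

end LineGraphSquare

theorem strong_chromatic_index_le_general :
    ∀ᶠ D : ℕ in Filter.atTop, ∀ (V : Type u) [Fintype V] (G : SimpleGraph V) [DecidableRel G.Adj],
      (∀ v, G.degree v ≤ D) →
      (lineGraphSq G).Colorable ⌊1.93 * (D : ℝ) ^ 2⌋₊ := by
  classical
  have hsquare : Filter.Tendsto (fun D : ℕ => 2 * D ^ 2) Filter.atTop Filter.atTop :=
    (Filter.tendsto_pow_atTop two_ne_zero).const_mul_atTop' two_pos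
  filter_upwards [hsquare.eventually eventually_colorable_of_degree_le,
    Filter.eventually_ge_atTop 1000] with D hcolor hlarge V _ G _ hD
  have hlarge' : (1000 : ℝ) ≤ D := by exact_mod_cast hlarge
  have hcolorable := hcolor _ (lineGraphSq G) (degree_lineGraphSq_le hD) fun e =>
    (card_adjPairs_lineGraphSq_le hD e).trans <| by
      push_cast
      nlinarith [pow_pos (by linarith : (0 : ℝ) < D) 3]
  convert hcolorable using 2
  push_cast
  ring

/-- The strong chromatic index of a graph `G` of sufficiently large maximum degree `Δ` is
at most `1.93 * Δ ^ 2`. -/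
theorem strong_chromatic_index_le :
    ∃ Δ₀ : ℕ, ∀ (V : Type) [Fintype V] [DecidableEq V]
      (G : SimpleGraph V) [DecidableRel G.Adj],
      Δ₀ ≤ G.maxDegree →
      ∃ n : ℕ, (n : ℝ) ≤ 1.93 * (G.maxDegree : ℝ) ^ 2 ∧ (lineGraphSq G).Colorable n := by
  obtain ⟨Δ₀, h⟩ := Filter.eventually_atTop.1 strong_chromatic_index_le_general
  exact ⟨Δ₀, fun V _ _ G _ hΔ =>
    ⟨_, Nat.floor_le (by positivity), h _ hΔ V G G.degree_le_maxDegree⟩⟩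
end

section
/- Let G be a simple graph of maximum degree Δ ≥ 1, and let e be an edge of G. Then the strong neighborhood N^s_e of e induces in L²(G) a graph with at most (3/2)·Δ⁴ + 5·Δ³ edges. -/
/-!
Let `A` be the set of neighbors of the two ends of `e`, so `#A ≤ 2Δ` and every edge of the strong
neighborhood meets `A`. It suffices to bound the ordered pairs of edges meeting `A` that are at
distance at most one by `3Δ⁴`, twice the bound on edges of `L²(G)`.

For `a, c ∈ A`, let `k a` be the number of neighbors of `a` in `A` and `x` the number of common
neighbors of `a` and `c` outside `A`. Pairs `ab`, `cd` of edges leaving `A` in which `b ~ c` or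
`a ~ d` are few when `x` is small, while those with `b ~ d` are few when `x` is large, since a
vertex `b ∉ A` with many neighbors in `A` has few outside `A`. In total `x` contributes
`x (Δ - k a - k c) - x² ≤ (Δ - k a - k c)² / 4`, and summing over `a, c ∈ A` gives `3Δ⁴` when `A` is
independent. An edge inside `A` uses up the degree of both its ends but is a single edge, and what
this saves pays for the pairs containing such edges.
-/

open Finset

lemma card_inter_product_union_product_inter_add {α : Type*} [DecidableEq α] (S T : Finset α) :
    #((S ∩ T) ×ˢ T ∪ S ×ˢ (S ∩ T)) + #(S ∩ T) ^ 2 = #(S ∩ T) * (#S + #T) := by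
  have hinter : (S ∩ T) ×ˢ T ∩ S ×ˢ (S ∩ T) = (S ∩ T) ×ˢ (S ∩ T) := by
    rw [product_inter_product, inter_eq_left.2 inter_subset_left,
      inter_eq_right.2 inter_subset_right]
  have hcard := card_union_add_card_inter ((S ∩ T) ×ˢ T) (S ×ˢ (S ∩ T))
  rw [hinter, card_product, card_product, card_product] at hcard
  rw [sq, hcard]
  ring

lemma sum_sub_sq_add_sum_mul_sum_le {α : Type*} {A : Finset α} {D : ℝ} (hA : (#A : ℝ) ≤ 2 * D)
    (k : α → ℝ) :
    ∑ a ∈ A, (D * (D ^ 2 - k a ^ 2) + ∑ c ∈ A, ((D - k a - k c) / 2) ^ 2) +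
      (∑ a ∈ A, k a) * ∑ a ∈ A, (D - k a) + (∑ a ∈ A, k a) ^ 2 / 4 ≤ 3 * D ^ 4 := by
  set n : ℝ := (#A : ℝ)
  set K := ∑ a ∈ A, k a
  set K₂ := ∑ a ∈ A, k a ^ 2
  have hn : 0 ≤ n := Nat.cast_nonneg _
  have hD : 0 ≤ D := by linarith
  have hK₂ : 0 ≤ K₂ := sum_nonneg fun a _ => sq_nonneg (k a)
  have hsquares : ∑ a ∈ A, ∑ c ∈ A, ((D - k a - k c) / 2) ^ 2 =
      n ^ 2 * D ^ 2 / 4 - n * D * K + n * K₂ / 2 + K ^ 2 / 2 := by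
    have hexpand : ∀ a c, ((D - k a - k c) / 2) ^ 2 =
        D ^ 2 / 4 - D / 2 * k a + 1 / 4 * k a ^ 2 - D / 2 * k c + 1 / 4 * k c ^ 2 +
          1 / 2 * (k a * k c) := fun a c => by ring
    simp only [hexpand, sum_add_distrib, sum_sub_distrib, ← mul_sum, ← sum_mul, sum_const,
      nsmul_eq_mul]
    ring
  calc _ = n * D ^ 3 + (n * D) ^ 2 / 4 - (2 * D - n) / 2 * K₂ - K ^ 2 / 4 := by
        rw [sum_add_distrib, hsquares, ← mul_sum, sum_sub_distrib, sum_sub_distrib]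
        simp only [sum_const, nsmul_eq_mul]
        ring
    _ ≤ n * D ^ 3 + (n * D) ^ 2 / 4 := by
        linarith [mul_nonneg (sub_nonneg.2 hA) hK₂, sq_nonneg K]
    _ ≤ 2 * D * D ^ 3 + (2 * D * D) ^ 2 / 4 := by gcongr
    _ = 3 * D ^ 4 := by ring

lemma mul_add_sub_sq_sub_mul_le {D k k' o o' x : ℝ} (hx : 0 ≤ x) (hko : k + o ≤ D)
    (hko' : k' + o' ≤ D) : x * (o + o') - x ^ 2 - D * x ≤ ((D - k - k') / 2) ^ 2 :=
  calc x * (o + o') - x ^ 2 - D * x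
      ≤ x * ((D - k) + (D - k')) - x ^ 2 - D * x := by gcongr <;> linarith
    _ ≤ ((D - k - k') / 2) ^ 2 := by linarith [sq_nonneg (x - (D - k - k') / 2)]

section Joined

variable {V : Type*} (G : SimpleGraph V)

/-- Two pairs of vertices are joined if an edge of `G` runs between them. For two edges of `G` this
says that they are at distance at most one, and an edge is joined to itself. -/
def IsJoined (f g : Sym2 V) : Prop := ∃ v ∈ f, ∃ w ∈ g, G.Adj v w

variable {G}

lemma isJoined_mk_mk {a b c d : V} :
    IsJoined G s(a, b) s(c, d) ↔ G.Adj a c ∨ G.Adj a d ∨ G.Adj b c ∨ G.Adj b d := by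
  simp [IsJoined, or_assoc]

lemma exists_adj_mem_of_mem_edgeSet {f : Sym2 V} (hf : f ∈ G.edgeSet) {v : V} (hv : v ∈ f) :
    ∃ w ∈ f, G.Adj v w := by
  obtain ⟨w, rfl⟩ := Sym2.mem_iff_exists.1 hv
  exact ⟨w, Sym2.mem_mk_right v w, hf⟩

lemma isJoined_of_lineGraphSq_adj {f g : G.edgeSet} (h : (lineGraphSq G).Adj f g) :
    IsJoined G f.1 g.1 := by
  rcases h.2 with ⟨v, hvf, hvg⟩ | ⟨i, ⟨v, hvf, hvi⟩, ⟨w, hwi, hwg⟩⟩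
  · obtain ⟨w, hwg, hvw⟩ := exists_adj_mem_of_mem_edgeSet g.2 hvg
    exact ⟨v, hvf, w, hwg, hvw⟩
  · obtain rfl | hvw := eq_or_ne v w
    · obtain ⟨w, hwg, hvw⟩ := exists_adj_mem_of_mem_edgeSet g.2 hwg
      exact ⟨v, hvf, w, hwg, hvw⟩
    · have hi : i.1 = s(v, w) := (Sym2.mem_and_mem_iff hvw).1 ⟨hvi, hwi⟩
      exact ⟨v, hvf, w, hwg, G.mem_edgeSet.1 (hi ▸ i.2)⟩

end Joined

section Counting

variable {V : Type*} [DecidableEq V] (G : SimpleGraph V) [G.LocallyFinite] (A : Finset V)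

/-- The neighbors of `v` inside `A`. -/
def innerNeighbors (v : V) : Finset V := G.neighborFinset v ∩ A

/-- The neighbors of `v` outside `A`. -/
def outerNeighbors (v : V) : Finset V := G.neighborFinset v \ A

/-- The common neighbors of `v` and `w` outside `A`. -/
def commonOuterNeighbors (v w : V) : Finset V := outerNeighbors G A v ∩ outerNeighbors G A w

open Classical in
/-- The pairs `(b, d)` of vertices outside `A` for which `ab` and `cd` are edges of `G` that are
joined. -/
noncomputable def joinedOuterPairs (a c : V) : Finset (V × V) :=
  {q ∈ outerNeighbors G A a ×ˢ outerNeighbors G A c | IsJoined G s(a, q.1) s(c, q.2)}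

/-- The edges of `G` with both ends in `A`. -/
def innerEdges : Finset (Sym2 V) := A.biUnion fun a => (innerNeighbors G A a).image (s(a, ·))

/-- The edges of `G` with exactly one end in `A`. -/
def outerEdges : Finset (Sym2 V) := A.biUnion fun a => (outerNeighbors G A a).image (s(a, ·))

open Classical in
/-- The ordered pairs of joined edges of `G` that both meet `A`. These include the pairs of equal
edges. -/
noncomputable def joinedEdgePairs : Finset (Sym2 V × Sym2 V) :=
  {q ∈ (innerEdges G A ∪ outerEdges G A) ×ˢ (innerEdges G A ∪ outerEdges G A) |
    IsJoined G q.1 q.2}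

variable {G A}

lemma mem_innerNeighbors {v w : V} : w ∈ innerNeighbors G A v ↔ G.Adj v w ∧ w ∈ A := by
  simp [innerNeighbors]

lemma mem_outerNeighbors {v w : V} : w ∈ outerNeighbors G A v ↔ G.Adj v w ∧ w ∉ A := by
  simp [outerNeighbors]

lemma mem_commonOuterNeighbors {v w b : V} :
    b ∈ commonOuterNeighbors G A v w ↔ (G.Adj v b ∧ G.Adj w b) ∧ b ∉ A := by
  rw [commonOuterNeighbors, mem_inter, mem_outerNeighbors, mem_outerNeighbors, ← and_and_right]

lemma mem_innerEdges {f : Sym2 V} :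
    f ∈ innerEdges G A ↔ ∃ a ∈ A, ∃ b ∈ A, G.Adj a b ∧ s(a, b) = f := by
  simp only [innerEdges, mem_biUnion, mem_image, mem_innerNeighbors]
  tauto

lemma mem_outerEdges {f : Sym2 V} :
    f ∈ outerEdges G A ↔ ∃ a ∈ A, ∃ b ∉ A, G.Adj a b ∧ s(a, b) = f := by
  simp only [outerEdges, mem_biUnion, mem_image, mem_outerNeighbors]
  tauto

lemma mem_innerEdges_union_outerEdges {f : Sym2 V} (hf : f ∈ G.edgeSet) (hfA : ∃ v ∈ f, v ∈ A) :
    f ∈ innerEdges G A ∪ outerEdges G A := by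
  obtain ⟨a, haf, ha⟩ := hfA
  obtain ⟨b, hb, hab⟩ := exists_adj_mem_of_mem_edgeSet hf haf
  have hfab : s(a, b) = f := ((Sym2.mem_and_mem_iff hab.ne).1 ⟨haf, hb⟩).symm
  rw [mem_union, mem_innerEdges, mem_outerEdges]
  by_cases hbA : b ∈ A
  · exact Or.inl ⟨a, ha, b, hbA, hab, hfab⟩
  · exact Or.inr ⟨a, ha, b, hbA, hab, hfab⟩

variable (G A)

lemma card_innerNeighbors_add_card_outerNeighbors (v : V) :
    #(innerNeighbors G A v) + #(outerNeighbors G A v) = G.degree v :=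
  card_inter_add_card_sdiff _ _

lemma sum_card_commonOuterNeighbors (v : V) :
    ∑ c ∈ A, #(commonOuterNeighbors G A v c) =
      ∑ b ∈ outerNeighbors G A v, #(innerNeighbors G A b) := by
  simp only [card_eq_sum_ones]
  apply sum_comm'
  intro c b
  rw [mem_commonOuterNeighbors, mem_outerNeighbors, mem_innerNeighbors, G.adj_comm c b]
  tauto

lemma two_mul_card_innerEdges_le : 2 * #(innerEdges G A) ≤ ∑ a ∈ A, #(innerNeighbors G A a) := by
  have two_le_card_ends : ∀ f ∈ innerEdges G A, 2 ≤ #(A.bipartiteBelow (· ∈ ·) f) := by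
    intro f hf
    obtain ⟨a, ha, b, hb, hab, rfl⟩ := mem_innerEdges.1 hf
    rw [← card_pair hab.ne]
    exact card_le_card (by simp [insert_subset_iff, ha, hb])
  have card_incident_le : ∀ a ∈ A,
      #((innerEdges G A).bipartiteAbove (· ∈ ·) a) ≤ #(innerNeighbors G A a) := by
    intro a _
    refine (card_le_card fun f hf => ?_).trans (card_image_le (f := (s(a, ·))))
    rw [mem_bipartiteAbove, mem_innerEdges] at hf
    obtain ⟨⟨b, hb, c, hc, hbc, rfl⟩, haf⟩ := hf
    rcases Sym2.mem_iff.1 haf with rfl | rfl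
    · exact mem_image_of_mem _ (mem_innerNeighbors.2 ⟨hbc, hc⟩)
    · exact mem_image.2 ⟨b, mem_innerNeighbors.2 ⟨hbc.symm, hb⟩, Sym2.eq_swap⟩
  calc 2 * #(innerEdges G A)
      ≤ ∑ f ∈ innerEdges G A, #(A.bipartiteBelow (· ∈ ·) f) := by
        rw [mul_comm]
        exact card_nsmul_le_sum _ _ _ two_le_card_ends
    _ = ∑ a ∈ A, #((innerEdges G A).bipartiteAbove (· ∈ ·) a) :=
        (sum_card_bipartiteAbove_eq_sum_card_bipartiteBelow _).symm
    _ ≤ ∑ a ∈ A, #(innerNeighbors G A a) := sum_le_sum card_incident_le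

lemma card_outerEdges_le : #(outerEdges G A) ≤ ∑ a ∈ A, #(outerNeighbors G A a) :=
  card_biUnion_le.trans (sum_le_sum fun _ _ => card_image_le)

lemma card_joinedEdgePairs_le :
    #(joinedEdgePairs G A) ≤ ∑ a ∈ A, ∑ c ∈ A, #(joinedOuterPairs G A a c) +
      2 * #(innerEdges G A) * #(outerEdges G A) + #(innerEdges G A) ^ 2 := by
  classical
  set I := innerEdges G A
  set O := outerEdges G A
  set P : Finset (Sym2 V × Sym2 V) := (A ×ˢ A).biUnion fun r =>
    (joinedOuterPairs G A r.1 r.2).image fun q => (s(r.1, q.1), s(r.2, q.2))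
  have card_P_le : #P ≤ ∑ a ∈ A, ∑ c ∈ A, #(joinedOuterPairs G A a c) := by
    rw [← sum_product']
    exact card_biUnion_le.trans (sum_le_sum fun _ _ => card_image_le)
  have joinedEdgePairs_subset : joinedEdgePairs G A ⊆ P ∪ (I ×ˢ O ∪ (O ×ˢ I ∪ I ×ˢ I)) := by
    rintro ⟨f, g⟩ hfg
    simp only [joinedEdgePairs, mem_filter, mem_product, mem_union] at hfg
    simp only [mem_union, mem_product]
    obtain ⟨⟨hf | hf, hg | hg⟩, hjoined⟩ := hfg
    · exact Or.inr (Or.inr (Or.inr ⟨hf, hg⟩))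
    · exact Or.inr (Or.inl ⟨hf, hg⟩)
    · exact Or.inr (Or.inr (Or.inl ⟨hf, hg⟩))
    · obtain ⟨a, ha, b, hb, hab, rfl⟩ := mem_outerEdges.1 hf
      obtain ⟨c, hc, d, hd, hcd, rfl⟩ := mem_outerEdges.1 hg
      refine Or.inl (mem_biUnion.2 ⟨(a, c), mem_product.2 ⟨ha, hc⟩, mem_image.2 ⟨(b, d), ?_, rfl⟩⟩)
      exact mem_filter.2 ⟨mem_product.2
        ⟨mem_outerNeighbors.2 ⟨hab, hb⟩, mem_outerNeighbors.2 ⟨hcd, hd⟩⟩, hjoined⟩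
  calc #(joinedEdgePairs G A)
      ≤ #P + (#(I ×ˢ O) + (#(O ×ˢ I) + #(I ×ˢ I))) := by
        grw [joinedEdgePairs_subset, card_union_le, card_union_le, card_union_le]
    _ ≤ ∑ a ∈ A, ∑ c ∈ A, #(joinedOuterPairs G A a c) +
          (#(I ×ˢ O) + (#(O ×ˢ I) + #(I ×ˢ I))) := by gcongr
    _ = _ := by
        simp only [card_product]
        ring

lemma joinedOuterPairs_subset [DecidableRel G.Adj] (a c : V) :
    joinedOuterPairs G A a c ⊆
      commonOuterNeighbors G A a c ×ˢ outerNeighbors G A c ∪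
        outerNeighbors G A a ×ˢ commonOuterNeighbors G A a c ∪
        (outerNeighbors G A a).biUnion (fun b => (commonOuterNeighbors G A b c).image (b, ·)) ∪
        if G.Adj a c then outerNeighbors G A a ×ˢ outerNeighbors G A c else ∅ := by
  rintro ⟨b, d⟩ hbd
  simp only [joinedOuterPairs, mem_filter, mem_product] at hbd
  obtain ⟨⟨hb, hd⟩, hjoined⟩ := hbd
  obtain ⟨hab, hbA⟩ := mem_outerNeighbors.1 hb
  obtain ⟨hcd, hdA⟩ := mem_outerNeighbors.1 hd
  simp only [mem_union]
  rcases isJoined_mk_mk.1 hjoined with hac | had | hbc | hbd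
  · exact Or.inr (by simp only [if_pos hac, mem_product, hb, hd, and_self])
  · exact Or.inl (Or.inl (Or.inr
      (mem_product.2 ⟨hb, mem_commonOuterNeighbors.2 ⟨⟨had, hcd⟩, hdA⟩⟩)))
  · exact Or.inl (Or.inl (Or.inl
      (mem_product.2 ⟨mem_commonOuterNeighbors.2 ⟨⟨hab, hbc.symm⟩, hbA⟩, hd⟩)))
  · exact Or.inl (Or.inr (mem_biUnion.2
      ⟨b, hb, mem_image_of_mem _ (mem_commonOuterNeighbors.2 ⟨⟨hbd, hcd⟩, hdA⟩)⟩))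

lemma card_joinedOuterPairs_add_le [DecidableRel G.Adj] (a c : V) :
    #(joinedOuterPairs G A a c) + #(commonOuterNeighbors G A a c) ^ 2 ≤
      #(commonOuterNeighbors G A a c) * (#(outerNeighbors G A a) + #(outerNeighbors G A c)) +
        ∑ b ∈ outerNeighbors G A a, #(commonOuterNeighbors G A b c) +
        if G.Adj a c then #(outerNeighbors G A a) * #(outerNeighbors G A c) else 0 := by
  set S := outerNeighbors G A a
  set T := outerNeighbors G A c
  set X := commonOuterNeighbors G A a c
  have hcrossing : #(X ×ˢ T ∪ S ×ˢ X) + #X ^ 2 = #X * (#S + #T) :=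
    card_inter_product_union_product_inter_add S T
  have hheads : #(S.biUnion fun b => (commonOuterNeighbors G A b c).image (b, ·)) ≤
      ∑ b ∈ S, #(commonOuterNeighbors G A b c) :=
    card_biUnion_le.trans (sum_le_sum fun _ _ => card_image_le)
  have htails : #(if G.Adj a c then S ×ˢ T else ∅) = if G.Adj a c then #S * #T else 0 := by
    rw [apply_ite card, card_product, card_empty]
  have hcard : #(joinedOuterPairs G A a c) ≤ #(X ×ˢ T ∪ S ×ˢ X) +
      #(S.biUnion fun b => (commonOuterNeighbors G A b c).image (b, ·)) +
      #(if G.Adj a c then S ×ˢ T else ∅) := by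
    grw [joinedOuterPairs_subset, card_union_le, card_union_le]
  lia

variable {G A} {D : ℕ} (hD : ∀ v, G.degree v ≤ D)
include hD

lemma card_innerNeighbors_add_card_outerNeighbors_le (v : V) :
    #(innerNeighbors G A v) + #(outerNeighbors G A v) ≤ D :=
  (card_innerNeighbors_add_card_outerNeighbors G A v).trans_le (hD v)

lemma sum_sum_card_commonOuterNeighbors_add_le (a : V) :
    ∑ c ∈ A, ∑ b ∈ outerNeighbors G A a, #(commonOuterNeighbors G A b c) +
      D * ∑ c ∈ A, #(commonOuterNeighbors G A a c) ≤ D ^ 2 * #(outerNeighbors G A a) := by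
  have hsplit := card_innerNeighbors_add_card_outerNeighbors_le (A := A) hD
  have hb : ∀ b ∈ outerNeighbors G A a, ∑ d ∈ outerNeighbors G A b, #(innerNeighbors G A d) +
      D * #(innerNeighbors G A b) ≤ D ^ 2 := fun b _ =>
    calc ∑ d ∈ outerNeighbors G A b, #(innerNeighbors G A d) + D * #(innerNeighbors G A b)
        ≤ #(outerNeighbors G A b) * D + D * #(innerNeighbors G A b) := by
          gcongr
          exact sum_le_card_nsmul _ _ _ fun d _ => le_of_add_le_left (hsplit d)
      _ = D * (#(innerNeighbors G A b) + #(outerNeighbors G A b)) := by ring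
      _ ≤ D ^ 2 := by
          rw [sq]
          gcongr
          exact hsplit b
  rw [sum_comm, sum_card_commonOuterNeighbors, mul_sum, ← sum_add_distrib]
  simp only [sum_card_commonOuterNeighbors]
  exact (sum_le_card_nsmul _ _ _ hb).trans_eq (mul_comm _ _)

lemma sum_ite_adj_card_outerNeighbors_le [DecidableRel G.Adj] (a : V) :
    (∑ c ∈ A, if G.Adj a c then #(outerNeighbors G A a) * #(outerNeighbors G A c) else 0) ≤
      D * #(innerNeighbors G A a) * #(outerNeighbors G A a) := by
  have hfilter : {c ∈ A | G.Adj a c} = innerNeighbors G A a := by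
    ext c
    rw [mem_filter, mem_innerNeighbors, and_comm]
  rw [← sum_filter, hfilter]
  calc ∑ c ∈ innerNeighbors G A a, #(outerNeighbors G A a) * #(outerNeighbors G A c)
      ≤ #(innerNeighbors G A a) * (#(outerNeighbors G A a) * D) := by
        refine sum_le_card_nsmul _ _ _ fun c _ => ?_
        gcongr
        exact le_of_add_le_right (card_innerNeighbors_add_card_outerNeighbors_le hD c)
    _ = _ := by ring

lemma sum_card_joinedOuterPairs_le (a : V) :
    ∑ c ∈ A, (#(joinedOuterPairs G A a c) : ℝ) ≤
      D * (D ^ 2 - #(innerNeighbors G A a) ^ 2) +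
        ∑ c ∈ A, ((D - #(innerNeighbors G A a) - #(innerNeighbors G A c) : ℝ) / 2) ^ 2 := by
  classical
  set k : V → ℕ := fun v => #(innerNeighbors G A v)
  set o : V → ℕ := fun v => #(outerNeighbors G A v)
  set x : V → ℕ := fun c => #(commonOuterNeighbors G A a c)
  have hko : ∀ v, (k v + o v : ℝ) ≤ D := fun v =>
    mod_cast card_innerNeighbors_add_card_outerNeighbors_le hD v
  have hheads : ∑ c ∈ A, ∑ b ∈ outerNeighbors G A a, (#(commonOuterNeighbors G A b c) : ℝ) +
      D * ∑ c ∈ A, (x c : ℝ) ≤ D ^ 2 * o a :=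
    mod_cast sum_sum_card_commonOuterNeighbors_add_le (A := A) hD a
  have htails : (∑ c ∈ A, if G.Adj a c then (o a * o c : ℝ) else 0) ≤ D * k a * o a :=
    mod_cast sum_ite_adj_card_outerNeighbors_le (A := A) hD a
  have hoptimum : ∀ c ∈ A,
      (x c * (o a + o c) - x c ^ 2 - D * x c : ℝ) ≤ ((D - k a - k c) / 2) ^ 2 := fun c _ =>
    mul_add_sub_sq_sub_mul_le (Nat.cast_nonneg _) (hko a) (hko c)
  have houter : (D ^ 2 * o a + D * k a * o a : ℝ) ≤ D * (D ^ 2 - k a ^ 2) :=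
    calc (D ^ 2 * o a + D * k a * o a : ℝ) = D * (D + k a) * o a := by ring
      _ ≤ D * (D + k a) * (D - k a) := by
        gcongr
        linarith [hko a]
      _ = D * (D ^ 2 - k a ^ 2) := by ring
  calc ∑ c ∈ A, (#(joinedOuterPairs G A a c) : ℝ)
      ≤ ∑ c ∈ A, (x c * (o a + o c) - x c ^ 2 +
          (∑ b ∈ outerNeighbors G A a, (#(commonOuterNeighbors G A b c) : ℝ)) +
          if G.Adj a c then (o a * o c : ℝ) else 0) := by
        refine sum_le_sum fun c _ => ?_
        have hc : (#(joinedOuterPairs G A a c) : ℝ) + x c ^ 2 ≤ x c * (o a + o c) +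
            (∑ b ∈ outerNeighbors G A a, (#(commonOuterNeighbors G A b c) : ℝ)) +
            if G.Adj a c then (o a * o c : ℝ) else 0 :=
          mod_cast card_joinedOuterPairs_add_le G A a c
        linarith
    _ ≤ ∑ c ∈ A, (x c * (o a + o c) - x c ^ 2 - D * x c : ℝ) +
          (D ^ 2 * o a + D * k a * o a) := by
        simp only [sum_add_distrib, sum_sub_distrib, ← mul_sum] at hheads ⊢
        linarith
    _ ≤ _ := by linarith [sum_le_sum hoptimum]

lemma card_joinedEdgePairs_le_three_mul_pow (hA : #A ≤ 2 * D) :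
    #(joinedEdgePairs G A) ≤ 3 * D ^ 4 := by
  set k : V → ℕ := fun v => #(innerNeighbors G A v)
  have hinner : 2 * (#(innerEdges G A) : ℝ) ≤ ∑ a ∈ A, (k a : ℝ) :=
    mod_cast two_mul_card_innerEdges_le G A
  have houter : (#(outerEdges G A) : ℝ) ≤ ∑ a ∈ A, (D - k a : ℝ) := by
    have hle : ∀ a ∈ A, (#(outerNeighbors G A a) : ℝ) ≤ D - k a := fun a _ =>
      le_sub_iff_add_le'.2 (mod_cast card_innerNeighbors_add_card_outerNeighbors_le hD a)
    exact le_trans (mod_cast card_outerEdges_le G A) (sum_le_sum hle)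
  have hpairs : (#(joinedEdgePairs G A) : ℝ) ≤ 3 * D ^ 4 :=
    calc (#(joinedEdgePairs G A) : ℝ)
        ≤ ∑ a ∈ A, ∑ c ∈ A, (#(joinedOuterPairs G A a c) : ℝ) +
            2 * #(innerEdges G A) * #(outerEdges G A) + (2 * #(innerEdges G A)) ^ 2 / 4 := by
          rw [mul_pow, show (2 : ℝ) ^ 2 = 4 by norm_num, mul_div_cancel_left₀ _ four_ne_zero]
          exact_mod_cast card_joinedEdgePairs_le G A
      _ ≤ ∑ a ∈ A, (D * (D ^ 2 - k a ^ 2 : ℝ) + ∑ c ∈ A, ((D - k a - k c : ℝ) / 2) ^ 2) +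
            (∑ a ∈ A, (k a : ℝ)) * ∑ a ∈ A, (D - k a : ℝ) + (∑ a ∈ A, (k a : ℝ)) ^ 2 / 4 := by
          gcongr
          exact sum_card_joinedOuterPairs_le hD _
      _ ≤ 3 * D ^ 4 := sum_sub_sq_add_sum_mul_sum_le (mod_cast hA) fun v => (k v : ℝ)
  exact_mod_cast hpairs

end Counting

section LineGraphSq

variable {V : Type*} {G : SimpleGraph V} [G.LocallyFinite] {A : Finset V} {S : Set G.edgeSet}

lemma finite_of_forall_edge_meets (hS : ∀ f ∈ S, ∃ v ∈ f.1, v ∈ A) : S.Finite := by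
  classical
  exact ((innerEdges G A ∪ outerEdges G A).finite_toSet.preimage Subtype.val_injective.injOn).subset
    fun f hf => mem_innerEdges_union_outerEdges f.2 (hS f hf)

lemma two_mul_ncard_edgeSet_induce_lineGraphSq_le [DecidableEq V]
    (hS : ∀ f ∈ S, ∃ v ∈ f.1, v ∈ A) :
    2 * ((lineGraphSq G).induce S).edgeSet.ncard ≤ #(joinedEdgePairs G A) := by
  classical
  have := (finite_of_forall_edge_meets hS).fintype
  set H := (lineGraphSq G).induce S
  have hmaps : ∀ d : H.Dart, (d.fst.1.1, d.snd.1.1) ∈ joinedEdgePairs G A := fun d =>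
    mem_filter.2 ⟨mem_product.2
      ⟨mem_innerEdges_union_outerEdges d.fst.1.2 (hS _ d.fst.2),
        mem_innerEdges_union_outerEdges d.snd.1.2 (hS _ d.snd.2)⟩,
      isJoined_of_lineGraphSq_adj (SimpleGraph.induce_adj.1 d.adj)⟩
  have hinj : Function.Injective fun d : H.Dart => (d.fst.1.1, d.snd.1.1) :=
    ((Subtype.val_injective.comp Subtype.val_injective).prodMap
      (Subtype.val_injective.comp Subtype.val_injective)).comp SimpleGraph.Dart.toProd_injective
  rw [← H.coe_edgeFinset, Set.ncard_coe_finset, ← H.dart_card_eq_twice_card_edges, ← card_univ]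
  exact card_le_card_of_injOn _ (fun d _ => hmaps d) hinj.injOn

end LineGraphSq

theorem strong_neighborhood_sparse_general {V : Type*} (G : SimpleGraph V) [G.LocallyFinite]
    {D : ℕ} (hD : ∀ v, G.degree v ≤ D) (e : G.edgeSet) :
    ((lineGraphSq G).induce ((lineGraphSq G).neighborSet e)).edgeSet.Finite ∧
      ((((lineGraphSq G).induce ((lineGraphSq G).neighborSet e)).edgeSet.ncard : ℝ)) ≤
        3 / 2 * (D : ℝ) ^ 4 := by
  classical
  obtain ⟨⟨u, v⟩, he⟩ := e
  set A := G.neighborFinset u ∪ G.neighborFinset v with hAdef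
  have hA : #A ≤ 2 * D :=
    (card_union_le _ _).trans ((add_le_add (hD u) (hD v)).trans_eq (two_mul D).symm)
  have hmeets : ∀ f ∈ (lineGraphSq G).neighborSet ⟨s(u, v), he⟩, ∃ w ∈ f.1, w ∈ A := by
    intro f hf
    obtain ⟨z, hz, w, hw, hzw⟩ := isJoined_of_lineGraphSq_adj hf
    refine ⟨w, hw, ?_⟩
    rcases Sym2.mem_iff.1 hz with rfl | rfl <;> simp [hAdef, hzw]
  have := (finite_of_forall_edge_meets hmeets).to_subtype
  refine ⟨Set.toFinite _, ?_⟩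
  have hcard : 2 * (((lineGraphSq G).induce ((lineGraphSq G).neighborSet _)).edgeSet.ncard : ℝ) ≤
      3 * (D : ℝ) ^ 4 := mod_cast (two_mul_ncard_edgeSet_induce_lineGraphSq_le hmeets).trans
    (card_joinedEdgePairs_le_three_mul_pow hD hA)
  linarith

/-- If `G` has maximum degree `Δ ≥ 1` and `e` is an edge of `G`, then the strong
neighborhood of `e` (its neighborhood in `L²(G)`) induces in `L²(G)` a graph with at
most `(3/2)Δ⁴ + 5Δ³` edges. -/
theorem strong_neighborhood_sparse (V : Type) [Fintype V] [DecidableEq V]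
    (G : SimpleGraph V) [DecidableRel G.Adj] (hΔ : 1 ≤ G.maxDegree) (e : G.edgeSet) :
    ((((lineGraphSq G).induce ((lineGraphSq G).neighborSet e)).edgeSet.ncard : ℝ)) ≤
      3 / 2 * (G.maxDegree : ℝ) ^ 4 + 5 * (G.maxDegree : ℝ) ^ 3 := by
  have hbound := (strong_neighborhood_sparse_general G G.degree_le_maxDegree e).2
  exact hbound.trans (le_add_of_nonneg_right (by positivity))
end

section
/- If G is a simple graph with maximum degree Δ ≥ 400, then every strong clique of G has size at most 1.74·Δ², i.e., ω(L²(G)) ≤ 1.74·Δ². -/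
/-!
Let `H ⊆ G` be the subgraph formed by the clique, let `v` be a vertex of maximal `H`-degree `k`,
let `X` be its `H`-neighbours, `Y` its other `G`-neighbours, and `O` everything else. At most
`k (Δ - k)` edges of `H` meet `Y`. An edge `ab` of `H` inside `O` must be joined to each of the `k`
edges `vx`, so `k ≤ x_a + x_b`, where `x_a` is the number of `G`-neighbours of `a` in `X`. Hence the
weights `2 x_a / k - 1/2` and `2 x_b / k - 1/2` of the two ends add up to at least `1`, and summing
them over all such `ab`, vertex by vertex, gives `e_H(O, X) + e_H(O) ≤ 3/2 e_G(O, X)`. As `X` has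
total `G`-degree at most `k Δ`, at most `3/2 k Δ` edges of `H` avoid `Y`, and
`e(H) ≤ k (Δ - k) + 3/2 k Δ ≤ 3/2 Δ²`.
-/

open Finset

section

variable {V : Type*} {G H : SimpleGraph V}

section Interedges

variable [DecidableRel G.Adj] [DecidableRel H.Adj]

theorem card_interedges_eq_sum (A B : Finset V) :
    #(G.interedges A B) = ∑ a ∈ A, #{b ∈ B | G.Adj a b} := by
  simp only [G.interedges_def, card_filter, sum_product]

theorem card_interedges_comm (A B : Finset V) : #(G.interedges A B) = #(G.interedges B A) :=
  have := G.symm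
  Rel.card_interedges_comm A B

theorem card_interedges_le_card_mul {A B : Finset V} {n : ℕ}
    (h : ∀ a ∈ A, #{b ∈ B | G.Adj a b} ≤ n) : #(G.interedges A B) ≤ #A * n := by
  rw [card_interedges_eq_sum, ← smul_eq_mul]
  exact sum_le_card_nsmul _ _ _ h

theorem card_filter_adj_mono (hHG : H ≤ G) (a : V) (B : Finset V) :
    #{b ∈ B | H.Adj a b} ≤ #{b ∈ B | G.Adj a b} :=
  card_le_card <| monotone_filter_right _ fun _ _ hb => hHG hb

theorem card_interedges_mono (hHG : H ≤ G) (A B : Finset V) :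
    #(H.interedges A B) ≤ #(G.interedges A B) := by
  simp only [card_interedges_eq_sum]
  exact sum_le_sum fun a _ => card_filter_adj_mono hHG a B

theorem card_interedges_union_right [DecidableEq V] (A : Finset V) {B C : Finset V}
    (h : Disjoint B C) :
    #(G.interedges A (B ∪ C)) = #(G.interedges A B) + #(G.interedges A C) := by
  simp only [card_interedges_eq_sum, ← sum_add_distrib, filter_union,
    card_union_of_disjoint (disjoint_filter_filter h)]

theorem card_interedges_union_self [DecidableEq V] {A B : Finset V} (h : Disjoint A B) :
    #(G.interedges (A ∪ B) (A ∪ B)) =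
      #(G.interedges A A) + 2 * #(G.interedges A B) + #(G.interedges B B) := by
  rw [card_interedges_union_right _ h, card_interedges_comm _ A, card_interedges_comm _ B,
    card_interedges_union_right _ h, card_interedges_union_right _ h, card_interedges_comm B A]
  ring

theorem two_mul_card_le_card_interedges_self {S : Finset V} {E : Finset (Sym2 V)}
    (hES : E ⊆ S.sym2) (hEG : ∀ e ∈ E, e ∈ G.edgeSet) : 2 * #E ≤ #(G.interedges S S) := by
  classical
  have two_le_card_fiber (e) (he : e ∈ E) : 2 ≤ #{p ∈ G.interedges S S | s(p.1, p.2) = e} := by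
    induction e with | _ a b
    have hab : G.Adj a b := hEG _ he
    obtain ⟨ha, hb⟩ := mk_mem_sym2_iff.1 (hES he)
    rw [← card_pair (a := (a, b)) (b := (b, a)) (by simp [hab.ne])]
    refine card_le_card ?_
    simp [insert_subset_iff, G.mem_interedges_iff, ha, hb, hab, hab.symm]
  calc 2 * #E ≤ ∑ e ∈ E, #{p ∈ G.interedges S S | s(p.1, p.2) = e} := by
        simpa [mul_comm] using card_nsmul_le_sum E _ 2 two_le_card_fiber
    _ = #{p ∈ G.interedges S S | s(p.1, p.2) ∈ E} := sum_card_fiberwise_eq_card_filter _ _ _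
    _ ≤ #(G.interedges S S) := card_filter_le _ _

theorem mul_card_interedges_self_le {O : Finset V} {k : ℕ} {f : V → ℕ}
    (hf : ∀ a ∈ O, ∀ b ∈ O, G.Adj a b → k ≤ f a + f b) :
    k * #(G.interedges O O) ≤ 2 * ∑ a ∈ O, #{b ∈ O | G.Adj a b} * f a := by
  have sum_fst : ∑ p ∈ G.interedges O O, f p.1 = ∑ a ∈ O, #{b ∈ O | G.Adj a b} * f a := by
    simp only [G.interedges_def, sum_filter, sum_product, card_filter, sum_mul, ite_mul, one_mul,
      zero_mul]
  have sum_snd : ∑ p ∈ G.interedges O O, f p.2 = ∑ p ∈ G.interedges O O, f p.1 :=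
    have := G.symm
    sum_nbij' Prod.swap Prod.swap (fun _ => Rel.swap_mem_interedges_iff.2)
      (fun _ => Rel.swap_mem_interedges_iff.2) (by simp) (by simp) (by simp)
  calc k * #(G.interedges O O) ≤ ∑ p ∈ G.interedges O O, (f p.1 + f p.2) := by
        rw [mul_comm, ← smul_eq_mul]
        refine card_nsmul_le_sum _ _ _ fun p hp => ?_
        obtain ⟨hp₁, hp₂, hp⟩ := G.mem_interedges_iff.1 hp
        exact hf _ hp₁ _ hp₂ hp
    _ = 2 * ∑ a ∈ O, #{b ∈ O | G.Adj a b} * f a := by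
        rw [sum_add_distrib, sum_snd, sum_fst, two_mul]

theorem two_mul_mul_add_four_mul_mul_le {k h d x : ℕ} (hhx : h ≤ x) (hxk : x ≤ k)
    (hhd : h + d ≤ k) : 2 * k * h + 4 * (d * x) ≤ 3 * k * x + k * d := by
  zify at *
  obtain hx | hx := le_total (4 * x : ℤ) k
  · nlinarith
  · -- The worst case is `d = k - h`. There the slack is affine in `h`, with value `k * (k - x)` at
    -- `h = 0` and `(k - 2 * x) ^ 2` at `h = x`.
    have hd : (d : ℤ) * (4 * x - k) ≤ (k - h) * (4 * x - k) :=
      mul_le_mul_of_nonneg_right (by linarith) (by linarith)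
    have slack_nonneg : (0 : ℤ) ≤ k * (k - x) + h * (4 * x - 3 * k) := by
      obtain hx | hx := le_total (3 * k : ℤ) (4 * x)
      · have : (0 : ℤ) ≤ k * (k - x) := mul_nonneg k.cast_nonneg (by linarith)
        have : (0 : ℤ) ≤ h * (4 * x - 3 * k) := mul_nonneg h.cast_nonneg (by linarith)
        linarith
      · nlinarith [sq_nonneg (k - 2 * x : ℤ)]
    linarith

theorem two_mul_card_interedges_add_card_interedges_self_le {O X : Finset V} (hHG : H ≤ G)
    (hdeg : ∀ a ∈ O, #{x ∈ X | H.Adj a x} + #{b ∈ O | H.Adj a b} ≤ #X)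
    (hcover : ∀ a ∈ O, ∀ b ∈ O, H.Adj a b →
      #X ≤ #{x ∈ X | G.Adj a x} + #{x ∈ X | G.Adj b x}) :
    2 * #(H.interedges O X) + #(H.interedges O O) ≤ 3 * #(G.interedges O X) := by
  have weighted_sum_le : ∑ a ∈ O, (2 * #X * #{x ∈ X | H.Adj a x} +
        4 * (#{b ∈ O | H.Adj a b} * #{x ∈ X | G.Adj a x})) ≤
      ∑ a ∈ O, (3 * #X * #{x ∈ X | G.Adj a x} + #X * #{b ∈ O | H.Adj a b}) :=
    sum_le_sum fun a ha => two_mul_mul_add_four_mul_mul_le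
      (card_filter_adj_mono hHG a X) (card_filter_le _ _) (hdeg a ha)
  simp only [sum_add_distrib, ← mul_sum, ← card_interedges_eq_sum] at weighted_sum_le
  have inner_le := mul_card_interedges_self_le hcover
  obtain hX | hX := (#X).eq_zero_or_pos
  · have hX' := card_interedges_le_card_mul fun a ha => le_self_add.trans (hdeg a ha)
    have hO' := card_interedges_le_card_mul fun a ha => le_add_self.trans (hdeg a ha)
    rw [hX] at hX' hO'
    lia
  · refine Nat.le_of_mul_le_mul_left ?_ hX
    linarith

end Interedges

/-- The edges of `H` form a strong clique of `G`: a set of edges of `G` is encoded as the spanning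
subgraph with these edges, and two edges are at distance at most `1` when they have endpoints
which are equal or adjacent in `G`. -/
structure IsStrongClique (G H : SimpleGraph V) : Prop where
  le : H ≤ G
  exists_eq_or_adj : ∀ e ∈ H.edgeSet, ∀ f ∈ H.edgeSet, ∃ x ∈ e, ∃ y ∈ f, x = y ∨ G.Adj x y

theorem lineGraphSq_adj_iff {e f : G.edgeSet} :
    (lineGraphSq G).Adj e f ↔ e ≠ f ∧ ∃ x ∈ e.1, ∃ y ∈ f.1, x = y ∨ G.Adj x y := by
  refine and_congr_right fun _ => ⟨?_, ?_⟩
  · rintro (⟨x, hxe, hxf⟩ | ⟨g, ⟨x, hxe, hxg⟩, ⟨y, hyg, hyf⟩⟩)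
    · exact ⟨x, hxe, x, hxf, .inl rfl⟩
    · refine ⟨x, hxe, y, hyf, or_iff_not_imp_left.2 fun hxy => ?_⟩
      rw [← SimpleGraph.mem_edgeSet, ← (Sym2.mem_and_mem_iff hxy).1 ⟨hxg, hyg⟩]
      exact g.2
  · rintro ⟨x, hx, y, hy, rfl | hxy⟩
    · exact .inl ⟨x, hx, hy⟩
    · exact .inr ⟨⟨s(x, y), hxy⟩, ⟨x, hx, Sym2.mem_mk_left x y⟩, ⟨y, Sym2.mem_mk_right x y, hy⟩⟩

namespace IsStrongClique

theorem of_isClique {K : Set G.edgeSet} (hK : (lineGraphSq G).IsClique K) :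
    IsStrongClique G (.fromEdgeSet (Subtype.val '' K)) where
  le := by
    rintro a b ⟨⟨e, -, he⟩, -⟩
    rw [← SimpleGraph.mem_edgeSet, ← he]
    exact e.2
  exists_eq_or_adj := by
    rw [SimpleGraph.edgeSet_fromEdgeSet]
    rintro _ ⟨⟨e, he, rfl⟩, -⟩ _ ⟨⟨f, hf, rfl⟩, -⟩
    obtain rfl | hef := eq_or_ne e f
    · exact ⟨_, Sym2.out_fst_mem e.1, _, Sym2.out_fst_mem e.1, .inl rfl⟩
    · exact (lineGraphSq_adj_iff.1 (hK he hf hef)).2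

theorem adj_or_adj (hH : IsStrongClique G H) {v x a b : V} (hvx : H.Adj v x) (hab : H.Adj a b)
    (hva : ¬ G.Adj v a) (hvb : ¬ G.Adj v b) : G.Adj a x ∨ G.Adj b x := by
  have hGvx := hH.le hvx
  have hGab := hH.le hab
  obtain ⟨y, hy, z, hz, hyz⟩ := hH.exists_eq_or_adj s(v, x) hvx s(a, b) hab
  grind [SimpleGraph.adj_comm]

theorem card_le_card_filter_adj_add [DecidableRel G.Adj] (hH : IsStrongClique G H) {v a b : V}
    {X : Finset V} (hX : ∀ x ∈ X, H.Adj v x) (hab : H.Adj a b) (hva : ¬ G.Adj v a)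
    (hvb : ¬ G.Adj v b) : #X ≤ #{x ∈ X | G.Adj a x} + #{x ∈ X | G.Adj b x} := by
  classical
  calc #X = #({x ∈ X | G.Adj a x} ∪ {x ∈ X | G.Adj b x}) := by
        rw [← filter_or, filter_true_of_mem fun x hx => hH.adj_or_adj (hX x hx) hab hva hvb]
    _ ≤ _ := card_union_le _ _

variable [DecidableRel G.Adj] [DecidableRel H.Adj]

theorem card_interedges_union_self_le [DecidableEq V] (hH : IsStrongClique G H) {v : V}
    {X O : Finset V} (hX : ∀ x ∈ X, H.Adj v x) (hO : ∀ a ∈ O, ¬ G.Adj v a)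
    (hdeg : ∀ a ∈ O, #{b ∈ X ∪ O | H.Adj a b} ≤ #X) :
    #(H.interedges (X ∪ O) (X ∪ O)) ≤ 3 * #(G.interedges X (X ∪ O)) := by
  have hXO : Disjoint X O := disjoint_left.2 fun b hbX hbO => hO b hbO (hH.le (hX b hbX))
  have hdeg' (a) (ha : a ∈ O) : #{x ∈ X | H.Adj a x} + #{b ∈ O | H.Adj a b} ≤ #X := by
    rw [← card_union_of_disjoint (disjoint_filter_filter hXO), ← filter_union]
    exact hdeg a ha
  have outer_le := two_mul_card_interedges_add_card_interedges_self_le hH.le hdeg'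
    fun a ha b hb hab => hH.card_le_card_filter_adj_add hX hab (hO a ha) (hO b hb)
  have inner_le := card_interedges_mono hH.le X X
  rw [card_interedges_union_self hXO, card_interedges_union_right _ hXO, card_interedges_comm X O,
    card_interedges_comm X O]
  linarith

theorem card_interedges_self_le_three_mul_sq (hH : IsStrongClique G H) {S : Finset V} {D : ℕ}
    (hD : ∀ a ∈ S, #{b ∈ S | G.Adj a b} ≤ D) : #(H.interedges S S) ≤ 3 * D ^ 2 := by
  classical
  obtain rfl | hne := S.eq_empty_or_nonempty
  · simp
  obtain ⟨v, hvS, hmax⟩ := S.exists_max_image (fun a => #{b ∈ S | H.Adj a b}) hne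
  set X := {b ∈ S | H.Adj v b}
  set Y := {b ∈ S | G.Adj v b ∧ ¬ H.Adj v b}
  set O := {b ∈ S | ¬ G.Adj v b}
  have hvG (b) (hb : H.Adj v b) : G.Adj v b := hH.le hb
  have hN : Y ∪ X = {b ∈ S | G.Adj v b} := by grind
  have hS : Y ∪ (X ∪ O) = S := by grind
  have hYX : Disjoint Y X := disjoint_filter.2 fun b _ hb => hb.2
  have hYXO : Disjoint Y (X ∪ O) := by grind [disjoint_left]
  have hYX_card : #Y + #X ≤ D := by
    rw [← card_union_of_disjoint hYX, hN]
    exact hD v hvS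
  have hHY : #(H.interedges Y S) ≤ #Y * #X :=
    card_interedges_le_card_mul fun a ha => hmax a (mem_filter.1 ha).1
  have hGX : #(G.interedges X S) ≤ #X * D :=
    card_interedges_le_card_mul fun a ha => hD a (mem_filter.1 ha).1
  have hHXO : #(H.interedges (X ∪ O) (X ∪ O)) ≤ 3 * #(G.interedges X (X ∪ O)) := by
    refine hH.card_interedges_union_self_le (v := v) (by grind) (by grind) fun a ha => ?_
    exact (card_le_card (by grind)).trans (hmax a (mem_filter.1 ha).1)
  have hsplit := card_interedges_union_self (G := H) hYXO
  have hsplitY := card_interedges_union_right (G := H) Y hYXO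
  have hsplitX := card_interedges_union_right (G := G) X hYXO
  rw [hS] at hsplit hsplitY hsplitX
  calc #(H.interedges S S) ≤ 2 * (#Y * #X) + 3 * (#X * D) := by lia
    _ ≤ 3 * (#Y * D) + 3 * (#X * D) := by gcongr <;> lia
    _ = 3 * ((#Y + #X) * D) := by ring
    _ ≤ 3 * D ^ 2 := by rw [sq]; gcongr

end IsStrongClique

theorem two_mul_card_le_of_isClique_lineGraphSq [G.LocallyFinite] {D : ℕ} (hD : ∀ v, G.degree v ≤ D)
    {E : Finset G.edgeSet} (hE : (lineGraphSq G).IsClique (E : Set G.edgeSet)) :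
    2 * #E ≤ 3 * D ^ 2 := by
  classical
  set F := E.map (.subtype _)
  set S := F.biUnion Sym2.toFinset
  have hFS : F ⊆ S.sym2 := fun e he => mem_sym2_iff.2 fun x hx =>
    mem_biUnion.2 ⟨e, he, Sym2.mem_toFinset.2 hx⟩
  have hFH (e) (he : e ∈ F) :
      e ∈ (SimpleGraph.fromEdgeSet (Subtype.val '' (E : Set G.edgeSet))).edgeSet := by
    obtain ⟨e, heE, rfl⟩ := mem_map.1 he
    rw [SimpleGraph.edgeSet_fromEdgeSet]
    exact ⟨⟨e, heE, rfl⟩, G.not_isDiag_of_mem_edgeSet e.2⟩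
  have hdeg (a) : #{b ∈ S | G.Adj a b} ≤ D :=
    (card_le_card fun b hb => (G.mem_neighborFinset a b).2 (mem_filter.1 hb).2).trans (hD a)
  calc 2 * #E = 2 * #F := by rw [card_map]
    _ ≤ _ := two_mul_card_le_card_interedges_self hFS hFH
    _ ≤ 3 * D ^ 2 := (IsStrongClique.of_isClique hE).card_interedges_self_le_three_mul_sq fun a _ =>
        hdeg a

theorem strong_clique_le_general [G.LocallyFinite] {D : ℕ} (hD : ∀ v, G.degree v ≤ D)
    {K : Set G.edgeSet} (hK : (lineGraphSq G).IsClique K) :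
    K.Finite ∧ (K.ncard : ℝ) ≤ 3 / 2 * (D : ℝ) ^ 2 := by
  have hfin : K.Finite := by
    by_contra hinf
    obtain ⟨E, hEK, hE⟩ := Set.Infinite.exists_subset_card_eq hinf (3 * D ^ 2 + 1)
    have := two_mul_card_le_of_isClique_lineGraphSq hD (hK.subset hEK)
    lia
  refine ⟨hfin, ?_⟩
  lift K to Finset G.edgeSet using hfin
  have : (2 * #K : ℝ) ≤ 3 * D ^ 2 := mod_cast two_mul_card_le_of_isClique_lineGraphSq hD hK
  rw [Set.ncard_coe_finset]
  linarith

end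

/-- If `G` is a simple graph with maximum degree `Δ ≥ 400`, then every strong clique of
`G`, i.e. every clique of `L²(G)`, has size at most `1.74 * Δ²`. -/
theorem strong_clique_le (V : Type) [Fintype V] [DecidableEq V]
    (G : SimpleGraph V) [DecidableRel G.Adj] (hΔ : 400 ≤ G.maxDegree)
    (K : Set G.edgeSet) (hK : (lineGraphSq G).IsClique K) :
    (K.ncard : ℝ) ≤ 1.74 * (G.maxDegree : ℝ) ^ 2 :=
  (strong_clique_le_general G.degree_le_maxDegree hK).2.trans (by gcongr; norm_num)
end

section
/- There is a constant c > 0 such that for every integer k ≥ 2, setting n = 2^k and Δ = n + 1, there exists a simple graph G of maximum degree Δ containing an edge e = uv such that the strong neighborhood N^s_e induces in L²(G) at least (3/2)·Δ⁴ − c·Δ³ edges. -/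
/-!
Join each nonzero vector `x` over `𝔽₂`, of length `k + 1`, to the vectors `y` with `x ⬝ᵥ y = 1`.
Every `x` then has `n = 2 ^ k` neighbours, and any two distinct `x`, `x'` have `n / 2` common ones.
An edge at `x` and an edge at `x'` are linked by a third edge unless each of them avoids the common
neighbours, so among the `n ^ 2` such pairs three quarters are adjacent in the square of the line
graph. Distributing the `2n - 1` vectors `x` over the two ends of a new edge `e`, as `n` and
`n - 1`, keeps the maximum degree at `n + 1` and places all these edges in the strong neighborhood
of `e`, which therefore induces at least
`(2n - 1).choose 2 * (3 / 4) * n ^ 2 = (3 / 2) * n ^ 4 - O(n ^ 3)` edges.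
-/

open Finset

section StrongNeighborhood

variable {V W : Type*} {G : SimpleGraph V} {H : SimpleGraph W}

theorem sharesVertex.map {e f : Sym2 V} (h : sharesVertex e f) (φ : V → W) :
    sharesVertex (e.map φ) (f.map φ) :=
  let ⟨v, he, hf⟩ := h
  ⟨φ v, Sym2.mem_map.2 ⟨v, he, rfl⟩, Sym2.mem_map.2 ⟨v, hf, rfl⟩⟩

theorem lineGraphSq_adj_of_adj {e f : G.edgeSet} (hne : e ≠ f) {v w : V} (hv : v ∈ e.1)
    (hw : w ∈ f.1) (hvw : G.Adj v w) : (lineGraphSq G).Adj e f :=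
  ⟨hne, .inr ⟨⟨s(v, w), hvw⟩, ⟨v, hv, Sym2.mem_mk_left v w⟩, ⟨w, Sym2.mem_mk_right v w, hw⟩⟩⟩

/-- The injective homomorphism between squares of line graphs induced by a copy of `G` in `H`. -/
def lineGraphSqCopy (φ : G.Copy H) : (lineGraphSq G).Copy (lineGraphSq H) where
  toHom :=
    { toFun := φ.mapEdgeSet
      map_rel' := by
        rintro e f ⟨hne, hef | ⟨g, heg, hgf⟩⟩
        · exact ⟨φ.mapEdgeSet.injective.ne hne, .inl (hef.map φ)⟩
        · exact ⟨φ.mapEdgeSet.injective.ne hne, .inr ⟨φ.mapEdgeSet g, heg.map φ, hgf.map φ⟩⟩ }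
  injective' := φ.mapEdgeSet.injective

/-- The subgraph of `L²(G)` induced by the strong neighborhood `N^s_e` of the edge `e`. -/
abbrev strongNeighborhoodGraph (G : SimpleGraph V) (e : G.edgeSet) :
    SimpleGraph ((lineGraphSq G).neighborSet e) :=
  (lineGraphSq G).induce ((lineGraphSq G).neighborSet e)

theorem strongNeighborhoodGraph_isContained (φ : G.Copy H) (e : G.edgeSet) :
    (strongNeighborhoodGraph G e).IsContained (strongNeighborhoodGraph H (φ.mapEdgeSet e)) :=
  ⟨⟨SimpleGraph.induceHom (lineGraphSqCopy φ).toHom fun _ h => (lineGraphSqCopy φ).toHom.map_adj h,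
    SimpleGraph.induceHom_injective _ _ (lineGraphSqCopy φ).injective.injOn⟩⟩

theorem ncard_edgeSet_le_of_isContained [Finite W] (h : G.IsContained H) :
    G.edgeSet.ncard ≤ H.edgeSet.ncard :=
  let ⟨φ⟩ := h
  Nat.card_le_card_of_injective φ.mapEdgeSet φ.mapEdgeSet.injective

end StrongNeighborhood

section LinkGraph

variable {α β : Type*} (B : α → Finset β)

/-- The graph on the flags `(a, b)`, `b ∈ B a`, of a set system `B`, in which two flags over
distinct indices are joined if the point of one of them lies in the set of the other. -/
def linkGraph : SimpleGraph (Σ a, B a) where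
  Adj p q := p.1 ≠ q.1 ∧ (p.2.1 ∈ B q.1 ∨ q.2.1 ∈ B p.1)
  symm := ⟨fun _ _ h => ⟨h.1.symm, h.2.symm⟩⟩
  loopless := ⟨fun _ h => h.1 rfl⟩

variable {B} in
theorem linkGraph_adj {p q : Σ a, B a} :
    (linkGraph B).Adj p q ↔ p.1 ≠ q.1 ∧ (p.2.1 ∈ B q.1 ∨ q.2.1 ∈ B p.1) :=
  Iff.rfl

variable [Fintype α] [DecidableEq β]

instance [DecidableEq α] : DecidableRel (linkGraph B).Adj := fun p q =>
  inferInstanceAs (Decidable (p.1 ≠ q.1 ∧ (p.2.1 ∈ B q.1 ∨ q.2.1 ∈ B p.1)))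

theorem degree_linkGraph [DecidableEq α] (p : Σ a, B a) :
    (linkGraph B).degree p =
      ∑ a ∈ univ.erase p.1, if p.2.1 ∈ B a then #(B a) else #(B p.1 ∩ B a) := by
  have hneighbors : (linkGraph B).neighborFinset p =
      (univ.erase p.1).sigma fun a => {b : B a | p.2.1 ∈ B a ∨ b.1 ∈ B p.1} := by
    ext q
    simp [linkGraph_adj, eq_comm]
  rw [← SimpleGraph.card_neighborFinset_eq_degree, hneighbors, card_sigma]
  refine sum_congr rfl fun a _ => ?_
  split_ifs with h
  · simp [h]
  · simp only [h, false_or]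
    rw [card_filter, sum_coe_sort (B a) fun b => if b ∈ B p.1 then 1 else 0, ← card_filter,
      filter_mem_eq_inter, inter_comm]

theorem two_mul_ncard_edgeSet_linkGraph {d ℓ : ℕ} (hd : ∀ a, #(B a) = d)
    (hℓ : ∀ a a', a ≠ a' → #(B a ∩ B a') = ℓ) :
    2 * (linkGraph B).edgeSet.ncard =
      Fintype.card α * ((Fintype.card α - 1) * (ℓ * d + (d - ℓ) * ℓ)) := by
  classical
  have hpair : ∀ a, ∀ a' ∈ univ.erase a,
      (∑ b ∈ B a, if b ∈ B a' then #(B a') else #(B a ∩ B a')) = ℓ * d + (d - ℓ) * ℓ := by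
    intro a a' ha'
    have hinter := hℓ a a' (ne_of_mem_erase ha').symm
    have hsdiff : #(B a \ B a') = d - ℓ := by
      rw [card_sdiff, inter_comm, hd, hinter]
    rw [sum_ite, sum_const, sum_const, filter_mem_eq_inter, filter_notMem_eq_sdiff, hsdiff,
      hinter, hd, smul_eq_mul, smul_eq_mul]
  calc 2 * (linkGraph B).edgeSet.ncard
      = ∑ p, (linkGraph B).degree p := by
        rw [SimpleGraph.sum_degrees_eq_twice_card_edges, ← SimpleGraph.coe_edgeFinset,
          Set.ncard_coe_finset]
    _ = ∑ a, ∑ a' ∈ univ.erase a, ∑ b ∈ B a, if b ∈ B a' then #(B a') else #(B a ∩ B a') := by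
        simp_rw [degree_linkGraph, Fintype.sum_sigma]
        refine sum_congr rfl fun a _ => ?_
        rw [sum_comm]
        exact sum_congr rfl fun a' _ =>
          sum_coe_sort (B a) fun b => if b ∈ B a' then #(B a') else #(B a ∩ B a')
    _ = _ := by
        simp_rw [sum_congr rfl (hpair _), sum_const, card_erase_of_mem (mem_univ _), smul_eq_mul,
          sum_const, card_univ, smul_eq_mul]

end LinkGraph

section RootedIncidenceGraph

variable {α β : Type*} {side : α → Bool} {B : α → Finset β}

/-- The incidence graph of the set system `B`, together with an edge between two roots, the
elements of `Bool`; every index `a` is moreover joined to the root `side a`. -/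
def rootedIncidenceGraph (side : α → Bool) (B : α → Finset β) : SimpleGraph (Bool ⊕ α ⊕ β) :=
  SimpleGraph.fromRel fun
    | .inl _, .inl _ => True
    | .inl c, .inr (.inl a) => side a = c
    | .inr (.inl a), .inr (.inr b) => b ∈ B a
    | _, _ => False

/-- The edge between the two roots. -/
def rootEdge (side : α → Bool) (B : α → Finset β) : (rootedIncidenceGraph side B).edgeSet :=
  ⟨s(.inl false, .inl true), by simp [rootedIncidenceGraph]⟩

/-- The edge of the rooted incidence graph corresponding to a flag of the set system. -/
def flagEdge (side : α → Bool) (p : Σ a, B a) : (rootedIncidenceGraph side B).edgeSet :=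
  ⟨s(.inr (.inl p.1), .inr (.inr p.2)), by simp [rootedIncidenceGraph]⟩

theorem flagEdge_injective : (flagEdge (B := B) side).Injective := by
  rintro ⟨a, b⟩ ⟨a', b'⟩ h
  obtain ⟨rfl, hb⟩ : a = a' ∧ b.1 = b'.1 := by simpa [flagEdge] using congrArg Subtype.val h
  rw [Subtype.ext hb]

theorem rootEdge_adj_flagEdge (p : Σ a, B a) :
    (lineGraphSq (rootedIncidenceGraph side B)).Adj (rootEdge side B) (flagEdge side p) :=
  lineGraphSq_adj_of_adj (Subtype.coe_ne_coe.1 (by simp [rootEdge, flagEdge]))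
    (v := .inl (side p.1)) (w := .inr (.inl p.1)) (by cases side p.1 <;> simp [rootEdge])
    (by simp [flagEdge]) (by simp [rootedIncidenceGraph])

theorem flagEdge_adj_flagEdge {p q : Σ a, B a} (h : (linkGraph B).Adj p q) :
    (lineGraphSq (rootedIncidenceGraph side B)).Adj (flagEdge side p) (flagEdge side q) := by
  have hne : flagEdge side p ≠ flagEdge side q := flagEdge_injective.ne h.ne
  rcases h.2 with hp | hq
  · exact lineGraphSq_adj_of_adj hne (v := .inr (.inr p.2)) (w := .inr (.inl q.1))
      (by simp [flagEdge]) (by simp [flagEdge]) (by simpa [rootedIncidenceGraph] using hp)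
  · exact lineGraphSq_adj_of_adj hne (v := .inr (.inl p.1)) (w := .inr (.inr q.2))
      (by simp [flagEdge]) (by simp [flagEdge]) (by simpa [rootedIncidenceGraph] using hq)

theorem linkGraph_isContained_strongNeighborhoodGraph (side : α → Bool) (B : α → Finset β) :
    (linkGraph B).IsContained
      (strongNeighborhoodGraph (rootedIncidenceGraph side B) (rootEdge side B)) :=
  ⟨⟨⟨fun p => ⟨flagEdge side p, rootEdge_adj_flagEdge p⟩, flagEdge_adj_flagEdge⟩,
    fun _ _ h => flagEdge_injective (Subtype.ext_iff.1 h)⟩⟩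

variable [Fintype α] [Fintype β] [DecidableRel (rootedIncidenceGraph side B).Adj]

theorem degree_rootedIncidenceGraph_root (c : Bool) :
    (rootedIncidenceGraph side B).degree (.inl c) = #{a | side a = c} + 1 := by
  have hneighbors : (rootedIncidenceGraph side B).neighborFinset (.inl c) =
      ({!c} : Finset Bool).disjSum (({a | side a = c} : Finset α).disjSum ∅) := by
    ext (c' | a | b) <;> rw [SimpleGraph.mem_neighborFinset] <;>
      simp [rootedIncidenceGraph, Bool.eq_not, eq_comm]
  rw [← SimpleGraph.card_neighborFinset_eq_degree, hneighbors]
  simp [add_comm]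

theorem degree_rootedIncidenceGraph_index (a : α) :
    (rootedIncidenceGraph side B).degree (.inr (.inl a)) = #(B a) + 1 := by
  have hneighbors : (rootedIncidenceGraph side B).neighborFinset (.inr (.inl a)) =
      ({side a} : Finset Bool).disjSum ((∅ : Finset α).disjSum (B a)) := by
    ext (c | a' | b) <;> rw [SimpleGraph.mem_neighborFinset] <;>
      simp [rootedIncidenceGraph, eq_comm]
  rw [← SimpleGraph.card_neighborFinset_eq_degree, hneighbors]
  simp [add_comm]

theorem degree_rootedIncidenceGraph_point [DecidableEq β] (b : β) :
    (rootedIncidenceGraph side B).degree (.inr (.inr b)) = #{a | b ∈ B a} := by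
  have hneighbors : (rootedIncidenceGraph side B).neighborFinset (.inr (.inr b)) =
      (∅ : Finset Bool).disjSum (({a | b ∈ B a} : Finset α).disjSum ∅) := by
    ext (c | a | b') <;> rw [SimpleGraph.mem_neighborFinset] <;> simp [rootedIncidenceGraph]
  rw [← SimpleGraph.card_neighborFinset_eq_degree, hneighbors]
  simp

theorem maxDegree_rootedIncidenceGraph [DecidableEq β] {d : ℕ} (hB : ∀ a, #(B a) ≤ d)
    (hpoint : ∀ b, #{a | b ∈ B a} ≤ d + 1) (hside : ∀ c, #{a | side a = c} ≤ d)
    {c : Bool} (hc : #{a | side a = c} = d) :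
    (rootedIncidenceGraph side B).maxDegree = d + 1 := by
  refine le_antisymm (SimpleGraph.maxDegree_le_of_forall_degree_le _ _ ?_) ?_
  · rintro (c | a | b)
    · simpa [degree_rootedIncidenceGraph_root] using hside c
    · simpa [degree_rootedIncidenceGraph_index] using hB a
    · simpa [degree_rootedIncidenceGraph_point] using hpoint b
  · rw [← hc, ← degree_rootedIncidenceGraph_root (B := B)]
    exact SimpleGraph.degree_le_maxDegree _ _

end RootedIncidenceGraph

section OddSet

variable {ι : Type*} [Fintype ι]

/-- The vectors over `𝔽₂` whose dot product with `x` is `1`. -/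
def oddSet [DecidableEq ι] (x : ι → ZMod 2) : Finset (ι → ZMod 2) := {y | x ⬝ᵥ y = 1}

variable [DecidableEq ι] {x x' y : ι → ZMod 2}

theorem mem_oddSet : y ∈ oddSet x ↔ x ⬝ᵥ y = 1 := by
  simp [oddSet]

theorem mem_oddSet_comm : y ∈ oddSet x ↔ x ∈ oddSet y := by
  rw [mem_oddSet, mem_oddSet, dotProduct_comm]

theorem oddSet_zero : oddSet (0 : ι → ZMod 2) = ∅ := by
  ext
  simp [mem_oddSet]

theorem oddSet_add (x x' : ι → ZMod 2) : oddSet (x + x') = symmDiff (oddSet x) (oddSet x') := by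
  ext y
  simp only [mem_symmDiff, mem_oddSet, add_dotProduct]
  generalize x ⬝ᵥ y = s, x' ⬝ᵥ y = t
  revert s t
  decide

theorem two_mul_card_oddSet (hx : x ≠ 0) : 2 * #(oddSet x) = 2 ^ Fintype.card ι := by
  obtain ⟨i, hi⟩ := Function.ne_iff.1 hx
  have hxi : x i = 1 := Fin.eq_one_of_ne_zero _ hi
  have hshift : #(oddSet x) = #(oddSet x)ᶜ := by
    refine card_equiv (Equiv.addRight (Pi.single i 1)) fun y => ?_
    simp only [mem_compl, mem_oddSet, Equiv.coe_addRight, dotProduct_add, dotProduct_single, hxi]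
    generalize x ⬝ᵥ y = s
    revert s
    decide
  have hcompl := card_add_card_compl (oddSet x)
  rw [← hshift, ← two_mul] at hcompl
  simpa using hcompl

theorem four_mul_card_oddSet_inter (hx : x ≠ 0) (hx' : x' ≠ 0) (hne : x ≠ x') :
    4 * #(oddSet x ∩ oddSet x') = 2 ^ Fintype.card ι := by
  have hsum : x + x' ≠ 0 :=
    fun h => hne (funext fun i => CharTwo.add_eq_zero.1 (congrFun h i))
  have hunion : #(oddSet (x + x')) = #(oddSet x \ oddSet x') + #(oddSet x' \ oddSet x) := by
    rw [oddSet_add, symmDiff_def, sup_eq_union, card_union_of_disjoint disjoint_sdiff_sdiff]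
  have h := card_sdiff_add_card_inter (oddSet x) (oddSet x')
  have h' := card_sdiff_add_card_inter (oddSet x') (oddSet x)
  rw [inter_comm] at h'
  have := two_mul_card_oddSet hx
  have := two_mul_card_oddSet hx'
  have := two_mul_card_oddSet hsum
  omega

theorem card_filter_mem_oddSet (y : ι → ZMod 2) :
    #{x : {x : ι → ZMod 2 // x ≠ 0} | y ∈ oddSet x.1} = #(oddSet y) := by
  refine card_bij (fun x _ => x.1) (by simp [mem_oddSet_comm]) (by simp) fun x hx => ?_
  have hx0 : x ≠ 0 := by
    rintro rfl
    simp [mem_oddSet] at hx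
  exact ⟨⟨x, hx0⟩, by simpa [mem_oddSet_comm] using hx, rfl⟩

end OddSet

section OddGraph

theorem card_oddSet {k : ℕ} {x : Fin (k + 1) → ZMod 2} (hx : x ≠ 0) : #(oddSet x) = 2 ^ k := by
  have h := two_mul_card_oddSet hx
  rw [Fintype.card_fin, pow_succ'] at h
  omega

theorem card_oddSet_le {k : ℕ} (x : Fin (k + 1) → ZMod 2) : #(oddSet x) ≤ 2 ^ k := by
  obtain rfl | hx := eq_or_ne x 0
  · simp [oddSet_zero]
  · exact (card_oddSet hx).le

theorem card_ne_zero_add_one (k : ℕ) :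
    Fintype.card {x : Fin (k + 1) → ZMod 2 // x ≠ 0} + 1 = 2 * 2 ^ k := by
  rw [Fintype.card_subtype_compl, Fintype.card_subtype_eq,
    Nat.sub_add_cancel Fintype.card_pos, Fintype.card_fun, ZMod.card, Fintype.card_fin, pow_succ']

/-- The set system of the complements of the hyperplanes of `𝔽₂ ^ (k + 1)`, indexed by their
nonzero normal vectors. -/
abbrev oddSystem (k : ℕ) (x : {x : Fin (k + 1) → ZMod 2 // x ≠ 0}) :
    Finset (Fin (k + 1) → ZMod 2) :=
  oddSet x.1

theorem ncard_edgeSet_linkGraph_oddSystem (k : ℕ) :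
    ((linkGraph (oddSystem (k + 1))).edgeSet.ncard : ℝ) =
      3 * (2 ^ k) ^ 2 * (4 * 2 ^ k - 1) * (2 * 2 ^ k - 1) := by
  have hcard : ∀ x, #(oddSystem (k + 1) x) = 2 * 2 ^ k := fun x => by
    rw [card_oddSet x.2, pow_succ']
  have hinter : ∀ x x', x ≠ x' → #(oddSystem (k + 1) x ∩ oddSystem (k + 1) x') = 2 ^ k :=
    fun x x' hne => by
      have h : 4 * #(oddSystem (k + 1) x ∩ oddSystem (k + 1) x') = _ :=
        four_mul_card_oddSet_inter x.2 x'.2 (Subtype.coe_ne_coe.2 hne)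
      rw [Fintype.card_fin, pow_succ', pow_succ'] at h
      omega
  have hedges := two_mul_ncard_edgeSet_linkGraph _ hcard hinter
  obtain ⟨ℓ, hℓ⟩ : ∃ ℓ, 2 ^ k = ℓ + 1 := Nat.exists_eq_succ_of_ne_zero (by positivity)
  have hindex : Fintype.card {x : Fin (k + 1 + 1) → ZMod 2 // x ≠ 0} = 4 * ℓ + 3 := by
    have h := card_ne_zero_add_one (k + 1)
    rw [pow_succ', hℓ] at h
    omega
  have hsub : 2 * (ℓ + 1) - (ℓ + 1) = ℓ + 1 := by omega
  rw [hindex, hℓ, hsub, Nat.add_sub_assoc (by norm_num)] at hedges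
  have hℓ' : (2 : ℝ) ^ k = ℓ + 1 := mod_cast hℓ
  have hedges' := congrArg (Nat.cast (R := ℝ)) hedges
  push_cast at hedges'
  rw [hℓ']
  linarith

/-- The extremal graph. The two roots split the nonzero vectors according to the parity of the
number of nonzero coordinates; any other nonzero linear functional would do. -/
abbrev oddGraph (k : ℕ) :
    SimpleGraph (Bool ⊕ {x : Fin (k + 1) → ZMod 2 // x ≠ 0} ⊕ (Fin (k + 1) → ZMod 2)) :=
  rootedIncidenceGraph (fun x => decide (1 ∈ oddSet x.1)) (oddSystem k)

theorem maxDegree_oddGraph (k : ℕ) [DecidableRel (oddGraph k).Adj] :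
    (oddGraph k).maxDegree = 2 ^ k + 1 := by
  have htrue : #{x : {x : Fin (k + 1) → ZMod 2 // x ≠ 0} | decide (1 ∈ oddSet x.1) = true} =
      2 ^ k := by
    simp only [decide_eq_true_eq, card_filter_mem_oddSet, card_oddSet one_ne_zero]
  have hfalse : #{x : {x : Fin (k + 1) → ZMod 2 // x ≠ 0} | decide (1 ∈ oddSet x.1) = false} ≤
      2 ^ k := by
    have hsum := card_filter_add_card_filter_not (s := univ)
      fun x : {x : Fin (k + 1) → ZMod 2 // x ≠ 0} => decide (1 ∈ oddSet x.1) = true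
    have hindex := card_ne_zero_add_one k
    simp only [Bool.not_eq_true] at hsum
    rw [card_univ] at hsum
    omega
  refine maxDegree_rootedIncidenceGraph (fun x => card_oddSet_le x.1) (fun y => ?_) ?_ htrue
  · rw [card_filter_mem_oddSet]
    exact (card_oddSet_le y).trans (Nat.le_succ _)
  · rintro (_ | _)
    exacts [hfalse, htrue.le]

theorem le_ncard_edgeSet_strongNeighborhoodGraph_oddGraph (k : ℕ) :
    3 * (2 ^ k) ^ 2 * (4 * 2 ^ k - 1) * (2 * 2 ^ k - 1) ≤
      ((strongNeighborhoodGraph (oddGraph (k + 1)) (rootEdge _ _)).edgeSet.ncard : ℝ) := by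
  rw [← ncard_edgeSet_linkGraph_oddSystem]
  exact_mod_cast ncard_edgeSet_le_of_isContained
    (linkGraph_isContained_strongNeighborhoodGraph _ _)

theorem quartic_sub_nine_mul_cube_le {x : ℝ} (hx : 0 ≤ x) :
    3 / 2 * (2 * x + 1) ^ 4 - 9 * (2 * x + 1) ^ 3 ≤ 3 * x ^ 2 * (4 * x - 1) * (2 * x - 1) := by
  have hdiff : 0 ≤ 6 * x ^ 3 + 75 * x ^ 2 + 42 * x + 15 / 2 := by positivity
  linarith

end OddGraph

/-- There is a constant `c > 0` such that for every `k ≥ 2`, with `n = 2 ^ k` and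
`Δ = n + 1`, there is a simple graph `G` of maximum degree `Δ` with an edge `e` whose
strong neighborhood induces in `L²(G)` at least `(3/2)Δ⁴ − cΔ³` edges. -/
theorem sparsity_best_possible :
    ∃ c : ℝ, 0 < c ∧ ∀ k : ℕ, 2 ≤ k →
      ∃ (m : ℕ) (G : SimpleGraph (Fin m)) (inst : DecidableRel G.Adj) (e : G.edgeSet),
        @SimpleGraph.maxDegree (Fin m) G _ inst = 2 ^ k + 1 ∧
        3 / 2 * ((2 ^ k + 1 : ℕ) : ℝ) ^ 4 - c * ((2 ^ k + 1 : ℕ) : ℝ) ^ 3 ≤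
          (((lineGraphSq G).induce ((lineGraphSq G).neighborSet e)).edgeSet.ncard : ℝ) := by
  classical
  refine ⟨9, by norm_num, fun k hk => ?_⟩
  obtain ⟨j, rfl⟩ : ∃ j, k = j + 1 := ⟨k - 1, by omega⟩
  let φ := (oddGraph (j + 1)).overFinIso rfl
  let e : (oddGraph (j + 1)).edgeSet := rootEdge _ _
  have hΔ : ((2 ^ (j + 1) + 1 : ℕ) : ℝ) = 2 * 2 ^ j + 1 := by
    push_cast
    ring
  refine ⟨_, _, inferInstance, φ.toCopy.mapEdgeSet e, ?_, ?_⟩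
  · rw [← φ.maxDegree_eq, maxDegree_oddGraph]
  · calc 3 / 2 * ((2 ^ (j + 1) + 1 : ℕ) : ℝ) ^ 4 - 9 * ((2 ^ (j + 1) + 1 : ℕ) : ℝ) ^ 3
        ≤ 3 * ((2 : ℝ) ^ j) ^ 2 * (4 * 2 ^ j - 1) * (2 * 2 ^ j - 1) := by
          rw [hΔ]
          exact quartic_sub_nine_mul_cube_le (by positivity)
      _ ≤ ((strongNeighborhoodGraph (oddGraph (j + 1)) e).edgeSet.ncard : ℝ) :=
          le_ncard_edgeSet_strongNeighborhoodGraph_oddGraph j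
      _ ≤ _ := mod_cast ncard_edgeSet_le_of_isContained
          (strongNeighborhoodGraph_isContained φ.toCopy e)
end
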